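/- The number α₆ = √13 · ln((√13 − 1)/(√13 + 1)) has irrationality measure at most 3.51434; that is, for every real κ > 3.51434, there exist only finitely many pairs (p, q) with p ∈ ℤ and q a positive integer such that |α₆ − p/q| < q^(−κ). -/

import Mathlib

section PartP
open Real Set Filter Topology MeasureTheory
open Chebyshev (psi theta)

noncomputable def pntB (u : ℝ) : ℝ := Chebyshev.psi (exp u) * exp (-u)

lemma pntB_nonneg (u : ℝ) : 0 ≤ pntB u :=
  mul_nonneg (Chebyshev.psi_nonneg _) (exp_pos _).le

lemma pntB_le (u : ℝ) : pntB u ≤ log 4 + 4 := by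
  unfold pntB
  have := Chebyshev.psi_le_const_mul_self (exp_pos u).le
  calc _ ≤ (log 4 + 4) * exp u * exp (-u) := by gcongr
    _ = log 4 + 4 := by rw [mul_assoc, ← exp_add]; simp

lemma pntB_neg (u : ℝ) (hu : u ≤ 0) : pntB u = 0 := by
  unfold pntB
  rw [Chebyshev.psi_eq_zero_of_le_one (by simpa using hu), zero_mul]

lemma pntB_meas : Measurable pntB := by
  unfold pntB
  exact (Chebyshev.psi_mono.measurable.comp measurable_exp).mul (measurable_exp.comp measurable_neg)

/-- The continuous extension. -/
noncomputable def pntH (s : ℂ) : ℂ :=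
  (ArithmeticFunction.vonMangoldt.LFunctionResidueClassAux (1 : ZMod 1) s - 1) / s

lemma pntH_cont : ContinuousOn pntH {s | 1 ≤ s.re} := by
  unfold pntH
  refine ((ArithmeticFunction.vonMangoldt.continuousOn_LFunctionResidueClassAux _).sub
    continuousOn_const).div continuousOn_id ?_
  intro s hs h
  rw [show s = 0 from h] at hs
  norm_num at hs

lemma pnt_L {s : ℂ} (hs : 1 < s.re) :
    LSeries (fun n => ((ArithmeticFunction.vonMangoldt n : ℝ) : ℂ)) s
      = s * ∫ t in Set.Ioi (1 : ℝ), ((Chebyshev.psi t : ℝ) : ℂ) * (t : ℂ) ^ (-(s + 1)) := by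
  rw [LSeries_eq_mul_integral_of_nonneg (fun n => ArithmeticFunction.vonMangoldt n) zero_le_one hs]
  · congr 1
    refine integral_congr_ae (ae_of_all _ fun t => ?_)
    simp only
    congr 1
    rw [← Complex.ofReal_sum, Chebyshev.psi_eq_sum_Icc]
    congr 1
    rw [← Finset.insert_Icc_add_one_left_eq_Icc (Nat.zero_le _), Finset.sum_insert (by simp)]
    simp
  · refine Asymptotics.IsBigO.of_bound (log 4 + 4) (Eventually.of_forall fun n => ?_)
    have h := Chebyshev.psi_le_const_mul_self (x := n) (by positivity)
    have h0 := Chebyshev.psi_nonneg n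
    rw [Chebyshev.psi_eq_sum_Icc, Nat.floor_natCast,
      ← Finset.insert_Icc_add_one_left_eq_Icc (Nat.zero_le _), Finset.sum_insert (by simp)] at h h0
    simp only [ArithmeticFunction.map_zero, zero_add] at h h0
    rw [Real.rpow_one, Real.norm_of_nonneg h0, Real.norm_of_nonneg (by positivity)]
    exact h
  · intro n; exact ArithmeticFunction.vonMangoldt_nonneg

lemma pnt_cov (s : ℂ) : ∫ t in Set.Ioi (1 : ℝ), ((Chebyshev.psi t : ℝ) : ℂ) * (t : ℂ) ^ (-(s + 1))
    = ∫ u in Set.Ioi (0 : ℝ), (pntB u : ℂ) * Complex.exp (-(s - 1) * u) := by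
  have himg : Set.Ioi (1 : ℝ) = Real.exp '' Set.Ioi 0 := by
    ext t
    constructor
    · intro ht
      exact ⟨log t, Real.log_pos ht, Real.exp_log (lt_trans zero_lt_one ht)⟩
    · rintro ⟨u, hu, rfl⟩
      exact Real.one_lt_exp_iff.2 hu
  rw [himg, integral_image_eq_integral_abs_deriv_smul measurableSet_Ioi
    (fun x _ => (Real.hasDerivAt_exp x).hasDerivWithinAt) (Real.exp_injective.injOn)]
  refine integral_congr_ae (ae_of_all _ fun u => ?_)
  simp only [abs_of_pos (exp_pos u), pntB, Complex.real_smul]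
  have h1 : ((exp u : ℝ) : ℂ) ^ (-(s + 1)) = Complex.exp (-(s+1) * u) := by
    rw [Complex.cpow_def_of_ne_zero (by exact_mod_cast (exp_pos u).ne'),
      ← Complex.ofReal_log (exp_pos u).le, Real.log_exp, mul_comm]
  rw [h1]
  push_cast
  rw [show -(s+1) * (u:ℂ) = -(s-1)*u + (-u) + (-u) by ring, Complex.exp_add, Complex.exp_add]
  have : Complex.exp (u:ℂ) * Complex.exp (-(u:ℂ)) = 1 := by rw [← Complex.exp_add]; simp
  linear_combination (↑(Chebyshev.psi (exp u)) * Complex.exp (-(s - 1) * ↑u) * Complex.exp (-(u:ℂ))) * this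

lemma pntB_int {c : ℂ} (hc : 0 < c.re) :
    IntegrableOn (fun u : ℝ => (pntB u : ℂ) * Complex.exp (-c * u)) (Set.Ioi 0) := by
  have h := (integrableOn_exp_mul_complex_Ioi (a := -c) (by simpa using hc) 0)
  refine Integrable.bdd_mul (c := log 4 + 4) h ?_ ?_
  · exact (Complex.measurable_ofReal.comp pntB_meas).aestronglyMeasurable
  · refine ae_of_all _ fun u => ?_
    rw [Complex.norm_real, Real.norm_of_nonneg (pntB_nonneg u)]
    exact pntB_le u

lemma pnt_P1 {c : ℂ} (hc : 0 < c.re) :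
    ∫ u in Set.Ioi (0 : ℝ), ((pntB u - 1 : ℝ) : ℂ) * Complex.exp (-c * u) = pntH (1 + c) := by
  have hs : 1 < (1 + c).re := by simpa using hc
  have h := pnt_L hs
  rw [pnt_cov] at h
  have e1 : ∀ u : ℝ, ((pntB u - 1 : ℝ) : ℂ) * Complex.exp (-c * u)
      = (pntB u : ℂ) * Complex.exp (-c * u) - Complex.exp (-c * u) := by
    intro u; push_cast; ring
  simp_rw [e1]
  rw [integral_sub (pntB_int hc) (integrableOn_exp_mul_complex_Ioi (a := -c) (by simpa using hc) 0),
    integral_exp_mul_complex_Ioi (by simpa using hc)]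
  have h2 := ArithmeticFunction.vonMangoldt.eqOn_LFunctionResidueClassAux (q := 1) (a := 1)
    isUnit_one (x := 1 + c) hs
  unfold pntH
  rw [h2]
  have e2 : (fun n : ℕ => ((ArithmeticFunction.vonMangoldt.residueClass (1 : ZMod 1) n : ℝ) : ℂ))
      = fun n : ℕ => ((ArithmeticFunction.vonMangoldt n : ℝ) : ℂ) := by
    funext n
    simp [ArithmeticFunction.vonMangoldt.residueClass, Subsingleton.elim _ (1 : ZMod 1)]
  simp only [e2, h]
  have hc0 : c ≠ 0 := by rintro rfl; simp at hc
  have hc1 : 1 + c ≠ 0 := by intro h; rw [h] at hs; simp at hs; norm_num at hs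
  rw [show (1 + c - 1) = c by ring]
  simp
  field_simp
  ring

noncomputable def fejK (w : ℝ) : ℝ := 2 * (1 - cos w) / w ^ 2

lemma fejK_nonneg (w : ℝ) : 0 ≤ fejK w := by
  unfold fejK
  have := cos_le_one w
  have : 0 ≤ 1 - cos w := by linarith
  positivity

lemma fejK_le (w : ℝ) : fejK w ≤ 5 * (1 + w ^ 2)⁻¹ := by
  unfold fejK
  rcases eq_or_ne w 0 with rfl | hw
  · norm_num
  have h1 := one_sub_sq_div_two_le_cos (x := w)
  have h2 := neg_one_le_cos w
  have hw2 : 0 < w ^ 2 := by positivity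
  rw [← div_eq_mul_inv, div_le_div_iff₀ hw2 (by positivity)]
  nlinarith

lemma fejK_meas : Measurable fejK := by
  unfold fejK
  fun_prop

lemma fejK_int : Integrable fejK := by
  refine Integrable.mono' (integrable_inv_one_add_sq.const_mul 5) fejK_meas.aestronglyMeasurable ?_
  refine ae_of_all _ fun w => ?_
  rw [Real.norm_of_nonneg (fejK_nonneg w)]
  exact fejK_le w

lemma fej_eq {w : ℝ} (hw : w ≠ 0) :
    ∫ t in (-1 : ℝ)..1, ((1 - |t| : ℝ) : ℂ) * Complex.exp (Complex.I * w * t) = (fejK w : ℂ) := by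
  have hI : Complex.I * (w : ℂ) ≠ 0 := by simp [hw]
  set z := Complex.I * (w : ℂ) with hz
  have hcont : Continuous fun t : ℝ => ((1 - |t| : ℝ) : ℂ) * Complex.exp (z * t) := by fun_prop
  rw [← intervalIntegral.integral_add_adjacent_intervals (b := 0)
    (hcont.intervalIntegrable _ _) (hcont.intervalIntegrable _ _)]
  have hexp : ∀ t : ℝ, HasDerivAt (fun t : ℝ => Complex.exp (z * t)) (z * Complex.exp (z * t)) t := by
    intro t
    have h := ((hasDerivAt_id (t : ℂ)).const_mul z).cexp.comp_ofReal
    simpa [mul_comm] using h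
  have hof : ∀ t : ℝ, HasDerivAt (fun t : ℝ => (t : ℂ)) 1 t := fun t => Complex.ofRealCLM.hasDerivAt
  have hA : ∫ t in (-1 : ℝ)..0, ((1 - |t| : ℝ) : ℂ) * Complex.exp (z * t)
      = 1 / z - 1 / z ^ 2 + Complex.exp (-z) / z ^ 2 := by
    have : ∫ t in (-1 : ℝ)..0, ((1 - |t| : ℝ) : ℂ) * Complex.exp (z * t)
        = ∫ t in (-1 : ℝ)..0, (1 + (t : ℂ)) * Complex.exp (z * t) := by
      refine intervalIntegral.integral_congr fun t ht => ?_
      rw [Set.uIcc_of_le (by norm_num)] at ht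
      simp only [abs_of_nonpos ht.2]; push_cast; ring
    rw [this, intervalIntegral.integral_eq_sub_of_hasDerivAt
      (f := fun t : ℝ => (1 + (t : ℂ)) * Complex.exp (z * t) / z - Complex.exp (z * t) / z ^ 2)]
    · simp <;> ring
    · intro t _
      have := ((((hof t).const_add 1).mul (hexp t)).div_const z).sub ((hexp t).div_const (z ^ 2))
      refine this.congr_deriv ?_
      field_simp; ring
    · exact Continuous.intervalIntegrable (by fun_prop) _ _
  have hB : ∫ t in (0 : ℝ)..1, ((1 - |t| : ℝ) : ℂ) * Complex.exp (z * t)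
      = Complex.exp z / z ^ 2 - 1 / z - 1 / z ^ 2 := by
    have : ∫ t in (0 : ℝ)..1, ((1 - |t| : ℝ) : ℂ) * Complex.exp (z * t)
        = ∫ t in (0 : ℝ)..1, (1 - (t : ℂ)) * Complex.exp (z * t) := by
      refine intervalIntegral.integral_congr fun t ht => ?_
      rw [Set.uIcc_of_le (by norm_num)] at ht
      simp only [abs_of_nonneg ht.1]; push_cast; ring
    rw [this, intervalIntegral.integral_eq_sub_of_hasDerivAt
      (f := fun t : ℝ => (1 - (t : ℂ)) * Complex.exp (z * t) / z + Complex.exp (z * t) / z ^ 2)]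
    · simp <;> ring
    · intro t _
      have := ((((hof t).const_sub 1).mul (hexp t)).div_const z).add ((hexp t).div_const (z ^ 2))
      refine this.congr_deriv ?_
      field_simp; ring
    · exact Continuous.intervalIntegrable (by fun_prop) _ _
  rw [hA, hB]
  unfold fejK
  have hz2 : z ^ 2 = -(w : ℂ) ^ 2 := by rw [hz, mul_pow, Complex.I_sq]; ring
  push_cast
  rw [Complex.cos, hz2]
  have : (w : ℂ) ≠ 0 := by exact_mod_cast hw
  rw [show (w : ℂ) * Complex.I = z by rw [hz, mul_comm], show -(w : ℂ) * Complex.I = -z by rw [hz]; ring]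
  field_simp
  ring

lemma pnt_fub {δ l v : ℝ} (hδ : 0 < δ) (hl : 0 < l) :
    ∫ t in Set.Ioc (-1 : ℝ) 1, ((1 - |t| : ℝ) : ℂ) * Complex.exp (Complex.I * (l * v : ℝ) * t)
        * pntH (1 + (δ + (l * t : ℝ) * Complex.I))
      = ∫ u in Set.Ioi (0 : ℝ), ((pntB u - 1) * exp (-δ * u) * fejK (l * (v - u)) : ℝ) := by
  have e1 : ∀ t : ℝ, ((1 - |t| : ℝ) : ℂ) * Complex.exp (Complex.I * (l * v : ℝ) * t)
        * pntH (1 + (δ + (l * t : ℝ) * Complex.I))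
      = ∫ u in Set.Ioi (0 : ℝ), ((1 - |t| : ℝ) : ℂ) * Complex.exp (Complex.I * (l * v : ℝ) * t) *
        (((pntB u - 1 : ℝ) : ℂ) * Complex.exp (-(δ + (l * t : ℝ) * Complex.I) * u)) := by
    intro t
    rw [← pnt_P1 (by simpa using hδ), integral_const_mul]
  simp_rw [e1]
  rw [integral_integral_swap]
  · rw [← integral_complex_ofReal]
    refine integral_congr_ae ?_
    have : ∀ᵐ u ∂(volume.restrict (Set.Ioi (0 : ℝ))), u ≠ v := by
      refine ae_restrict_of_ae ?_
      exact (measure_eq_zero_iff_ae_notMem.1 (measure_singleton v)).mono (fun u hu => by simpa using hu)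
    filter_upwards [this] with u hu
    have h := fej_eq (w := l * (v - u)) (mul_ne_zero hl.ne' (sub_ne_zero.2 hu.symm))
    rw [intervalIntegral.integral_of_le (by norm_num)] at h
    rw [show (((pntB u - 1) * exp (-δ * u) * fejK (l * (v - u)) : ℝ) : ℂ) =
      (((pntB u - 1) * exp (-δ * u) : ℝ) : ℂ) * (fejK (l * (v - u)) : ℂ) from Complex.ofReal_mul _ _,
      ← h, ← integral_const_mul]
    refine integral_congr_ae (ae_of_all _ fun t => ?_)
    simp only
    push_cast
    rw [show -((δ:ℂ) + l * t * Complex.I) * u = -δ * u + (- (Complex.I * l * u * t)) by ring,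
      show Complex.I * ((l:ℂ) * (v - u)) * t = Complex.I * (l * v) * t + (- (Complex.I * l * u * t)) by ring,
      Complex.exp_add, Complex.exp_add]
    ring
  · have hg : Integrable (fun u : ℝ => (log 4 + 5) * exp (-δ * u)) (volume.restrict (Set.Ioi (0:ℝ))) := by
      exact (exp_neg_integrableOn_Ioi 0 hδ).const_mul _
    have h1 : Integrable (fun _ : ℝ => (1 : ℝ)) (volume.restrict (Set.Ioc (-1:ℝ) 1)) :=
      integrableOn_const (by simp)
    refine Integrable.mono' (h1.mul_prod hg) ?_ ?_
    · refine Measurable.aestronglyMeasurable ?_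
      have := pntB_meas
      unfold Function.uncurry
      fun_prop
    · have hae : ∀ᵐ z : ℝ × ℝ ∂((volume.restrict (Set.Ioc (-1:ℝ) 1)).prod (volume.restrict (Set.Ioi (0:ℝ)))),
          z ∈ Set.Ioc (-1:ℝ) 1 ×ˢ Set.Ioi (0:ℝ) := by
        rw [Measure.prod_restrict]
        exact ae_restrict_mem (measurableSet_Ioc.prod measurableSet_Ioi)
      filter_upwards [hae] with z hz
      obtain ⟨t, u⟩ := z
      simp only [Set.mem_prod, Set.mem_Ioc, Set.mem_Ioi] at hz
      simp only [Function.uncurry]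
      rw [norm_mul, norm_mul, norm_mul, Complex.norm_exp, Complex.norm_exp, Complex.norm_real, Complex.norm_real]
      have ht : |t| ≤ 1 := abs_le.2 ⟨hz.1.1.le, hz.1.2⟩
      have a1 : ‖1 - |t|‖ ≤ 1 := by
        rw [Real.norm_of_nonneg (by linarith)]; linarith [abs_nonneg t]
      have a2 : ‖pntB u - 1‖ ≤ log 4 + 5 := by
        rw [Real.norm_eq_abs, abs_le]
        have := pntB_nonneg u; have := pntB_le u
        have : 0 ≤ log 4 := log_nonneg (by norm_num)
        constructor <;> linarith
      have a3 : (Complex.I * ((l * v : ℝ) : ℂ) * t).re = 0 := by simp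
      have a4 : (-((δ:ℂ) + ((l * t : ℝ):ℂ) * Complex.I) * u).re = -δ * u := by simp
      rw [a3, a4, exp_zero, mul_one]
      gcongr

lemma pnt_lim {l v : ℝ} (hl : 0 < l) :
    ∫ t in Set.Ioc (-1 : ℝ) 1, ((1 - |t| : ℝ) : ℂ) * Complex.exp (Complex.I * (l * v : ℝ) * t)
        * pntH (1 + (l * t : ℝ) * Complex.I)
      = ∫ u in Set.Ioi (0 : ℝ), ((pntB u - 1) * fejK (l * (v - u)) : ℝ) := by
  have hK : Integrable (fun u => (log 4 + 5) * fejK (l * (v - u))) (volume.restrict (Set.Ioi (0:ℝ))) := by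
    have h := (fejK_int.comp_mul_left' hl.ne').comp_sub_left v
    exact (h.const_mul _).integrableOn
  have hR : Tendsto (fun δ : ℝ => ∫ u in Set.Ioi (0 : ℝ), ((pntB u - 1) * exp (-δ * u) * fejK (l * (v - u)) : ℝ))
      (𝓝[>] 0) (𝓝 (∫ u in Set.Ioi (0 : ℝ), ((pntB u - 1) * fejK (l * (v - u)) : ℝ))) := by
    refine tendsto_integral_filter_of_dominated_convergence _ ?_ ?_ hK ?_
    · refine Eventually.of_forall fun δ => Measurable.aestronglyMeasurable ?_
      have := pntB_meas
      have := fejK_meas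
      fun_prop
    · filter_upwards [self_mem_nhdsWithin] with δ hδ
      refine (ae_restrict_iff' measurableSet_Ioi).2 (ae_of_all _ fun u hu => ?_)
      rw [norm_mul, norm_mul, Real.norm_of_nonneg (fejK_nonneg _), Real.norm_of_nonneg (exp_pos _).le]
      have a2 : ‖pntB u - 1‖ ≤ log 4 + 5 := by
        rw [Real.norm_eq_abs, abs_le]
        have := pntB_nonneg u; have := pntB_le u
        have : 0 ≤ log 4 := log_nonneg (by norm_num)
        constructor <;> linarith
      have a3 : exp (-δ * u) ≤ 1 := by
        rw [exp_le_one_iff]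
        have : 0 < δ * u := mul_pos hδ hu
        linarith
      have := fejK_nonneg (l * (v - u))
      have h0 : 0 ≤ ‖pntB u - 1‖ := norm_nonneg _
      calc _ ≤ (log 4 + 5) * 1 * fejK (l * (v - u)) := by gcongr
        _ = _ := by ring
    · refine ae_of_all _ fun u => ?_
      have : Tendsto (fun δ : ℝ => (pntB u - 1) * exp (-δ * u) * fejK (l * (v - u))) (𝓝 0)
        (𝓝 ((pntB u - 1) * exp (-0 * u) * fejK (l * (v - u)))) := by
        apply Continuous.tendsto; fun_prop
      simpa using this.mono_left nhdsWithin_le_nhds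
  have hL : Tendsto (fun δ : ℝ => ∫ t in Set.Ioc (-1 : ℝ) 1, ((1 - |t| : ℝ) : ℂ) * Complex.exp (Complex.I * (l * v : ℝ) * t)
        * pntH (1 + (δ + (l * t : ℝ) * Complex.I))) (𝓝[>] 0)
      (𝓝 (∫ t in Set.Ioc (-1 : ℝ) 1, ((1 - |t| : ℝ) : ℂ) * Complex.exp (Complex.I * (l * v : ℝ) * t)
        * pntH (1 + (l * t : ℝ) * Complex.I))) := by
    have hc : ContinuousOn (fun z : ℝ × ℝ => ‖pntH (1 + (z.1 + (l * z.2 : ℝ) * Complex.I))‖)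
        (Set.Icc 0 1 ×ˢ Set.Icc (-1) 1) := by
      refine ContinuousOn.norm (pntH_cont.comp (Continuous.continuousOn (by fun_prop)) ?_)
      intro z hz
      simpa using hz.1.1
    obtain ⟨M, hM⟩ := (isCompact_Icc.prod isCompact_Icc).bddAbove_image hc
    have hM' : ∀ δ t : ℝ, δ ∈ Set.Icc (0:ℝ) 1 → t ∈ Set.Icc (-1:ℝ) 1 →
        ‖pntH (1 + (δ + (l * t : ℝ) * Complex.I))‖ ≤ M := by
      intro δ t h1 h2
      exact hM ⟨(δ, t), ⟨h1, h2⟩, rfl⟩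
    refine tendsto_integral_filter_of_dominated_convergence (fun _ => M) ?_ ?_ (integrableOn_const (by simp)) ?_
    · filter_upwards [self_mem_nhdsWithin] with δ hδ
      refine ContinuousOn.aestronglyMeasurable ?_ measurableSet_Ioc
      refine ContinuousOn.mul (Continuous.continuousOn (by fun_prop)) ?_
      refine pntH_cont.comp (Continuous.continuousOn (by fun_prop)) ?_
      intro t ht
      simpa using (show (0:ℝ) < δ from hδ).le
    · have : Set.Ioc (0:ℝ) 1 ∈ 𝓝[>] (0:ℝ) := Ioc_mem_nhdsGT one_pos
      filter_upwards [this] with δ hδ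
      refine (ae_restrict_iff' measurableSet_Ioc).2 (ae_of_all _ fun t ht => ?_)
      have h3 := hM' δ t ⟨hδ.1.le, hδ.2⟩ ⟨ht.1.le, ht.2⟩
      rw [norm_mul, norm_mul, Complex.norm_exp, Complex.norm_real]
      have a3 : (Complex.I * ((l * v : ℝ) : ℂ) * t).re = 0 := by simp
      have ht' : |t| ≤ 1 := abs_le.2 ⟨ht.1.le, ht.2⟩
      have a1 : ‖1 - |t|‖ ≤ 1 := by
        rw [Real.norm_of_nonneg (by linarith)]; linarith [abs_nonneg t]
      rw [a3, exp_zero, mul_one]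
      calc _ ≤ 1 * M := by gcongr
        _ = M := one_mul M
    · refine (ae_restrict_iff' measurableSet_Ioc).2 (ae_of_all _ fun t ht => ?_)
      refine Tendsto.const_mul _ ?_
      have h := (pntH_cont (1 + ((0:ℝ) + (l * t : ℝ) * Complex.I)) (by simp))
      have h' : Tendsto (fun δ : ℝ => 1 + ((δ:ℂ) + (l * t : ℝ) * Complex.I)) (𝓝[>] 0)
          (𝓝[{s | 1 ≤ s.re}] (1 + ((0:ℝ) + (l * t : ℝ) * Complex.I))) := by
        refine tendsto_nhdsWithin_iff.2 ⟨?_, ?_⟩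
        · refine Tendsto.mono_left (Continuous.tendsto ?_ _) nhdsWithin_le_nhds
          fun_prop
        · filter_upwards [self_mem_nhdsWithin] with δ hδ
          simpa using (show (0:ℝ) < δ from hδ).le
      have := h.tendsto.comp h'
      simpa [Function.comp_def] using this
  refine tendsto_nhds_unique hL ?_
  have : Tendsto (fun δ : ℝ => ((∫ u in Set.Ioi (0 : ℝ), ((pntB u - 1) * exp (-δ * u) * fejK (l * (v - u)) : ℝ) : ℝ) : ℂ))
      (𝓝[>] 0) (𝓝 ((∫ u in Set.Ioi (0 : ℝ), ((pntB u - 1) * fejK (l * (v - u)) : ℝ) : ℝ) : ℂ)) :=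
    (Complex.continuous_ofReal.tendsto _).comp hR
  refine this.congr' ?_
  filter_upwards [self_mem_nhdsWithin] with δ hδ
  exact (pnt_fub hδ hl).symm

lemma pnt_RL {l : ℝ} (hl : 0 < l) :
    Tendsto (fun v : ℝ => ∫ u in Set.Ioi (0 : ℝ), (pntB u - 1) * fejK (l * (v - u))) atTop (𝓝 0) := by
  set f : ℝ → ℂ := Set.indicator (Set.Ioc (-1:ℝ) 1)
    (fun t => ((1 - |t| : ℝ) : ℂ) * pntH (1 + (l * t : ℝ) * Complex.I)) with hf
  have h := Real.tendsto_integral_exp_smul_cocompact f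
  have h2 : Tendsto (fun v : ℝ => -(l * v / (2 * π))) atTop (cocompact ℝ) := by
    refine Tendsto.mono_right ?_ atBot_le_cocompact
    refine tendsto_neg_atTop_atBot.comp ?_
    refine Tendsto.atTop_div_const (by positivity) ?_
    exact tendsto_id.const_mul_atTop hl
  have h3 := h.comp h2
  have key : ∀ v : ℝ, ((∫ u in Set.Ioi (0 : ℝ), (pntB u - 1) * fejK (l * (v - u)) : ℝ) : ℂ)
      = ∫ t : ℝ, (Real.fourierChar (-(t * -(l * v / (2 * π))))) • f t := by
    intro v
    rw [← pnt_lim hl, ← integral_indicator measurableSet_Ioc]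
    refine integral_congr_ae (ae_of_all _ fun t => ?_)
    simp only [hf, Set.indicator]
    split_ifs with ht
    · rw [Circle.smul_def, Real.fourierChar_apply, smul_eq_mul]
      have : (2 * π * -(t * -(l * v / (2 * π))) : ℝ) = l * v * t := by
        field_simp
      rw [this]
      rw [show (((l * v * t : ℝ) : ℂ) * Complex.I) = Complex.I * ((l * v : ℝ) : ℂ) * t by push_cast; ring]
      ring
    · simp
  have h4 : Tendsto (fun v : ℝ => ((∫ u in Set.Ioi (0 : ℝ), (pntB u - 1) * fejK (l * (v - u)) : ℝ) : ℂ))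
      atTop (𝓝 0) := by
    refine h3.congr fun v => ?_
    rw [key]; rfl
  have h5 := (Complex.continuous_re.tendsto _).comp h4
  simpa [Function.comp_def] using h5

lemma pnt_bK_int (v l : ℝ) : Integrable (fun w => pntB (v - w / l) * fejK w) := by
  refine Integrable.bdd_mul (c := log 4 + 4) fejK_int ?_ ?_
  · have := pntB_meas
    exact Measurable.aestronglyMeasurable (by fun_prop)
  · refine ae_of_all _ fun u => ?_
    rw [Real.norm_of_nonneg (pntB_nonneg _)]
    exact pntB_le _

lemma pnt_W {l : ℝ} (hl : 0 < l) :
    Tendsto (fun v : ℝ => ∫ w, pntB (v - w / l) * fejK w) atTop (𝓝 (∫ w, fejK w)) := by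
  have hind : ∀ v : ℝ, Integrable (fun w => Set.indicator (Set.Ioi (0:ℝ)) (fun _ => (1:ℝ)) (v - w / l) * fejK w) := by
    intro v
    refine Integrable.bdd_mul (c := 1) fejK_int ?_ ?_
    · have : Measurable (Set.indicator (Set.Ioi (0:ℝ)) (fun _ => (1:ℝ))) :=
        measurable_const.indicator measurableSet_Ioi
      exact Measurable.aestronglyMeasurable (by fun_prop)
    · refine ae_of_all _ fun u => ?_
      simp only [Set.indicator]; split_ifs <;> simp
  have hsub : ∀ (g : ℝ → ℝ) (v : ℝ), ∫ u, g u * fejK (l * (v - u)) = l⁻¹ * ∫ w, g (v - w / l) * fejK w := by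
    intro g v
    have h1 := integral_sub_left_eq_self (fun u => g u * fejK (l * (v - u))) volume v
    have h2 := Measure.integral_comp_mul_left (fun w => g (v - w / l) * fejK w) l
    rw [← h1, abs_of_pos (inv_pos.2 hl), smul_eq_mul] at *
    rw [← h2]
    refine integral_congr_ae (ae_of_all _ fun u => ?_)
    simp only
    rw [mul_div_cancel_left₀ _ hl.ne']
    congr 2; ring
  have h1 : Tendsto (fun v : ℝ => ∫ w, Set.indicator (Set.Ioi (0:ℝ)) (fun _ => (1:ℝ)) (v - w / l) * fejK w)
      atTop (𝓝 (∫ w, fejK w)) := by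
    refine tendsto_integral_filter_of_dominated_convergence fejK
      (Eventually.of_forall fun v => (hind v).aestronglyMeasurable) ?_ fejK_int ?_
    · refine Eventually.of_forall fun v => ae_of_all _ fun w => ?_
      rw [norm_mul, Real.norm_of_nonneg (fejK_nonneg w)]
      have : ‖Set.indicator (Set.Ioi (0:ℝ)) (fun _ => (1:ℝ)) (v - w / l)‖ ≤ 1 := by
        simp only [Set.indicator]; split_ifs <;> simp
      have := mul_le_mul_of_nonneg_right this (fejK_nonneg w)
      linarith
    · refine ae_of_all _ fun w => ?_
      refine tendsto_const_nhds.congr' ?_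
      filter_upwards [eventually_gt_atTop (w / l)] with v hv
      rw [Set.indicator_of_mem (by simpa using hv), one_mul]
  have h2 := (pnt_RL hl).const_mul l
  rw [mul_zero] at h2
  have h3 := h2.add h1
  rw [zero_add] at h3
  refine h3.congr fun v => ?_
  have e : ∫ u in Set.Ioi (0 : ℝ), (pntB u - 1) * fejK (l * (v - u))
      = ∫ u, (pntB u - Set.indicator (Set.Ioi (0:ℝ)) (fun _ => (1:ℝ)) u) * fejK (l * (v - u)) := by
    rw [← integral_indicator measurableSet_Ioi]
    refine integral_congr_ae (ae_of_all _ fun u => ?_)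
    simp only [Set.indicator]
    split_ifs with h
    · rfl
    · rw [pntB_neg u (by simpa using h)]; ring
  rw [e, hsub (fun u => pntB u - Set.indicator (Set.Ioi (0:ℝ)) (fun _ => (1:ℝ)) u), ← mul_assoc,
    mul_inv_cancel₀ hl.ne', one_mul, ← integral_add]
  · refine integral_congr_ae (ae_of_all _ fun u => ?_)
    simp only; ring
  · have := (pnt_bK_int v l).sub (hind v)
    refine this.congr (ae_of_all _ fun u => ?_)
    simp only [Pi.sub_apply]; ring
  · exact hind v

lemma fejK_pos_int : 0 < ∫ w, fejK w := by
  rw [integral_pos_iff_support_of_nonneg fejK_nonneg fejK_int]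
  have : Set.Ioo (0:ℝ) 1 ⊆ Function.support fejK := by
    intro w hw
    simp only [Function.mem_support]
    unfold fejK
    have h1 : cos w < 1 := by
      have := Real.cos_lt_cos_of_nonneg_of_le_pi_div_two (x := 0) (y := w) le_rfl
        (by linarith [Real.pi_gt_three, hw.2]) hw.1
      simpa using this
    have : w ≠ 0 := hw.1.ne'
    have h2 : 0 < 1 - cos w := by linarith
    positivity
  refine lt_of_lt_of_le ?_ (measure_mono this)
  simp

lemma pntB_mono {u v : ℝ} (h : u ≤ v) : pntB u * exp (-(v - u)) ≤ pntB v := by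
  unfold pntB
  rw [mul_assoc, ← exp_add, show -u + -(v - u) = -v by ring]
  have := Chebyshev.psi_mono (exp_le_exp.2 h)
  gcongr

lemma fejK_IA : Tendsto (fun A : ℝ => ∫ w in Set.Icc (-A) A, fejK w) atTop (𝓝 (∫ w, fejK w)) := by
  have : AECover volume atTop (fun A : ℝ => Set.Icc (-A) A) :=
    aecover_Icc tendsto_neg_atTop_atBot tendsto_id
  exact this.integral_tendsto_of_countably_generated fejK_int

lemma pntB_tendsto : Tendsto pntB atTop (𝓝 1) := by
  set I := ∫ w, fejK w with hI
  have hIpos : 0 < I := fejK_pos_int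
  set C : ℝ := log 4 + 4
  have hupper : ∀ A : ℝ, 0 < A → ∀ v0 : ℝ, pntB v0 * exp (-(2 / A)) * (∫ w in Set.Icc (-A) A, fejK w)
      ≤ ∫ w, pntB ((v0 + 1 / A) - w / A ^ 2) * fejK w := by
    intro A hA v0
    rw [← integral_const_mul]
    refine le_trans ?_ (setIntegral_le_integral (s := Set.Icc (-A) A) (pnt_bK_int _ _)
      (ae_of_all _ fun w => mul_nonneg (pntB_nonneg _) (fejK_nonneg _)))
    refine setIntegral_mono_on (fejK_int.const_mul _).integrableOn (pnt_bK_int _ _).integrableOn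
      measurableSet_Icc fun w hw => ?_
    refine mul_le_mul_of_nonneg_right ?_ (fejK_nonneg _)
    have h1 : w / A ^ 2 ≤ 1 / A := by
      rw [div_le_div_iff₀ (by positivity) hA]; nlinarith [hw.2]
    have h2 : -(1 / A) ≤ w / A ^ 2 := by
      rw [neg_le, ← neg_div, div_le_div_iff₀ (by positivity) hA]; nlinarith [hw.1]
    refine le_trans ?_ (pntB_mono (u := v0) (by linarith))
    refine mul_le_mul_of_nonneg_left (exp_le_exp.2 ?_) (pntB_nonneg _)
    have : 2 / A = 1 / A + 1 / A := by ring
    linarith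
  have hlower : ∀ A : ℝ, 0 < A → ∀ v0 : ℝ, ∫ w, pntB ((v0 - 1 / A) - w / A ^ 2) * fejK w
      ≤ pntB v0 * exp (2 / A) * I + C * (I - ∫ w in Set.Icc (-A) A, fejK w) := by
    intro A hA v0
    rw [← integral_add_compl (measurableSet_Icc (a := -A) (b := A)) (pnt_bK_int _ _)]
    have hc : I - ∫ w in Set.Icc (-A) A, fejK w = ∫ w in (Set.Icc (-A) A)ᶜ, fejK w := by
      rw [hI, ← integral_add_compl (measurableSet_Icc (a := -A) (b := A)) fejK_int]; ring
    rw [hc]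
    refine add_le_add ?_ ?_
    · have : ∫ w in Set.Icc (-A) A, pntB ((v0 - 1 / A) - w / A ^ 2) * fejK w
          ≤ ∫ w in Set.Icc (-A) A, (pntB v0 * exp (2 / A)) * fejK w := by
        refine setIntegral_mono_on (pnt_bK_int _ _).integrableOn (fejK_int.const_mul _).integrableOn
          measurableSet_Icc fun w hw => ?_
        refine mul_le_mul_of_nonneg_right ?_ (fejK_nonneg _)
        have h1 : w / A ^ 2 ≤ 1 / A := by
          rw [div_le_div_iff₀ (by positivity) hA]; nlinarith [hw.2]
        have h2 : -(1 / A) ≤ w / A ^ 2 := by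
          rw [neg_le, ← neg_div, div_le_div_iff₀ (by positivity) hA]; nlinarith [hw.1]
        have h3 := pntB_mono (u := (v0 - 1 / A) - w / A ^ 2) (v := v0) (by linarith)
        have h4 : exp (-(2 / A)) ≤ exp (-(v0 - ((v0 - 1 / A) - w / A ^ 2))) := by
          refine exp_le_exp.2 ?_
          have : 2 / A = 1 / A + 1 / A := by ring
          linarith
        have h5 := mul_le_mul_of_nonneg_left h4 (pntB_nonneg ((v0 - 1 / A) - w / A ^ 2))
        have h6 : pntB ((v0 - 1 / A) - w / A ^ 2) * exp (-(2 / A)) ≤ pntB v0 := h5.trans h3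
        calc _ = pntB ((v0 - 1 / A) - w / A ^ 2) * exp (-(2 / A)) * exp (2 / A) := by
              rw [mul_assoc, ← exp_add]; simp
          _ ≤ _ := by gcongr
      refine this.trans ?_
      rw [integral_const_mul]
      refine mul_le_mul_of_nonneg_left ?_ (mul_nonneg (pntB_nonneg _) (exp_pos _).le)
      exact setIntegral_le_integral fejK_int (ae_of_all _ fejK_nonneg)
    · rw [← integral_const_mul]
      refine setIntegral_mono_on (pnt_bK_int _ _).integrableOn (fejK_int.const_mul _).integrableOn
          measurableSet_Icc.compl fun w hw => ?_
      exact mul_le_mul_of_nonneg_right (pntB_le _) (fejK_nonneg _)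
  have hexp1 : Tendsto (fun A : ℝ => exp (-(2 / A))) atTop (𝓝 1) := by
    have : Tendsto (fun A : ℝ => -(2 / A)) atTop (𝓝 0) := by
      simpa [Function.comp_def] using (tendsto_const_nhds (x := (2:ℝ))).div_atTop tendsto_id |>.neg
    simpa [Function.comp_def] using (continuous_exp.tendsto 0).comp this
  have hexp2 : Tendsto (fun A : ℝ => exp (2 / A)) atTop (𝓝 1) := by
    have : Tendsto (fun A : ℝ => 2 / A) atTop (𝓝 0) :=
      (tendsto_const_nhds (x := (2:ℝ))).div_atTop tendsto_id
    simpa [Function.comp_def] using (continuous_exp.tendsto 0).comp this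
  rw [tendsto_order]
  constructor
  · intro a ha
    rcases lt_or_ge a 0 with ha0 | ha0
    · exact Eventually.of_forall fun v => ha0.trans_le (pntB_nonneg v)
    have hlim : Tendsto (fun A : ℝ => a * exp (2 / A) * I + C * (I - ∫ w in Set.Icc (-A) A, fejK w)) atTop
        (𝓝 (a * 1 * I + C * (I - I))) :=
      ((hexp2.const_mul a).mul_const I).add ((tendsto_const_nhds.sub fejK_IA).const_mul C)
    have hlt : a * 1 * I + C * (I - I) < I := by nlinarith
    obtain ⟨A, hA1, hA2⟩ := ((hlim.eventually_lt_const hlt).and (eventually_gt_atTop 0)).exists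
    have hW := (pnt_W (l := A ^ 2) (by positivity)).comp (tendsto_atTop_add_const_right atTop (-(1 / A)) tendsto_id)
    filter_upwards [hW.eventually_const_lt hA1] with v hv
    have h := hlower A hA2 v
    simp only [Function.comp, id] at hv
    rw [← sub_eq_add_neg] at hv
    by_contra hcon
    push Not at hcon
    have : pntB v * exp (2 / A) * I ≤ a * exp (2 / A) * I := by gcongr
    linarith
  · intro a ha
    have hlim : Tendsto (fun A : ℝ => a * exp (-(2 / A)) * (∫ w in Set.Icc (-A) A, fejK w)) atTop
        (𝓝 (a * 1 * I)) := (hexp1.const_mul a).mul fejK_IA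
    have hlt : I < a * 1 * I := by nlinarith
    obtain ⟨A, hA1, hA2⟩ := ((hlim.eventually_const_lt hlt).and (eventually_gt_atTop 0)).exists
    have hW := (pnt_W (l := A ^ 2) (by positivity)).comp (tendsto_atTop_add_const_right atTop (1 / A) tendsto_id)
    filter_upwards [hW.eventually_lt_const hA1] with v hv
    have h := hupper A hA2 v
    simp only [Function.comp, id] at hv
    by_contra hcon
    push Not at hcon
    have h0 : 0 ≤ ∫ w in Set.Icc (-A) A, fejK w := setIntegral_nonneg measurableSet_Icc fun w _ => fejK_nonneg w
    have : a * exp (-(2 / A)) * (∫ w in Set.Icc (-A) A, fejK w)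
      ≤ pntB v * exp (-(2 / A)) * (∫ w in Set.Icc (-A) A, fejK w) := by gcongr
    linarith

/-- Prime number theorem. -/
lemma pnt_psi : Tendsto (fun x : ℝ => Chebyshev.psi x / x) atTop (𝓝 1) := by
  refine (pntB_tendsto.comp tendsto_log_atTop).congr' ?_
  filter_upwards [eventually_gt_atTop 0] with x hx
  simp only [Function.comp, pntB, exp_neg, exp_log hx]
  rfl

lemma pnt_theta : Tendsto (fun x : ℝ => Chebyshev.theta x / x) atTop (𝓝 1) := by
  have h : Tendsto (fun x : ℝ => (2 * √x * log x) / x) atTop (𝓝 0) := by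
    have h1 : Tendsto (fun x : ℝ => 2 * (log x / x ^ (1/2 : ℝ))) atTop (𝓝 (2 * 0)) :=
      ((isLittleO_log_rpow_atTop (by norm_num)).tendsto_div_nhds_zero).const_mul 2
    rw [mul_zero] at h1
    refine h1.congr' ?_
    filter_upwards [eventually_gt_atTop 0] with x hx
    rw [← sqrt_eq_rpow]
    have : √x ≠ 0 := (sqrt_pos.2 hx).ne'
    have h2 := sq_sqrt hx.le
    field_simp
    rw [h2]
  have h2 := pnt_psi.sub h
  rw [sub_zero] at h2
  refine tendsto_of_tendsto_of_tendsto_of_le_of_le' h2 pnt_psi ?_ ?_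
  · filter_upwards [eventually_ge_atTop 1] with x hx
    rw [← sub_div]
    have := Chebyshev.psi_sub_theta_le hx
    gcongr
    linarith
  · filter_upwards [eventually_ge_atTop 1] with x hx
    have := Chebyshev.theta_le_psi x
    gcongr
end PartP

section PartA
open Polynomial

noncomputable def xx : ℝ := (√13 - 1) / (√13 + 1)

lemma s13_sq : √13 ^ 2 = 13 := Real.sq_sqrt (by norm_num)
lemma s13_pos : 0 < √13 := Real.sqrt_pos.2 (by norm_num)
lemma s13_lo : 3.605551 < √13 := by
  rw [Real.lt_sqrt (by norm_num)]; norm_num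
lemma s13_hi : √13 < 3.605552 := by
  rw [Real.sqrt_lt' (by norm_num)]; norm_num
lemma xx_pos : 0 < xx := by
  have := s13_lo
  unfold xx; apply div_pos <;> linarith
lemma xx_lt_one : xx < 1 := by
  have := s13_lo
  unfold xx; rw [div_lt_one (by linarith)]; linarith
lemma one_sub_xx : (1 - xx) * (√13 + 1) = 2 := by
  have := s13_lo
  unfold xx; field_simp; ring
lemma one_add_xx : 1 + xx = √13 * (1 - xx) := by
  have h := s13_sq
  have := s13_lo
  have : √13 + 1 ≠ 0 := by linarith
  unfold xx; field_simp; nlinarith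
lemma xx_three : xx = 3 * (1 - xx) ^ 2 := by
  have h := s13_sq
  have := s13_lo
  have : √13 + 1 ≠ 0 := by linarith
  unfold xx; field_simp; nlinarith
lemma xx_norm : ‖xx‖ < 1 := by
  rw [Real.norm_of_nonneg xx_pos.le]; exact xx_lt_one

noncomputable def cb (a : ℕ) : ℝ[X] :=
  C ((((2 * a).factorial : ℕ) : ℝ)⁻¹) * ∏ j ∈ Finset.range (2 * a), (X + C ((a : ℝ) - j))

lemma cb_eval (a : ℕ) (z : ℝ) : (cb a).eval z =
    (((2 * a).factorial : ℕ) : ℝ)⁻¹ * ∏ j ∈ Finset.range (2 * a), (z + (a - j)) := by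
  simp [cb, eval_prod]

lemma cb_eval_nat (a v : ℕ) : (cb a).eval (v : ℝ) = ((v + a).choose (2 * a) : ℕ) := by
  rw [cb_eval, Nat.cast_choose_eq_descPochhammer_div, descPochhammer_eval_eq_prod_range,
    div_eq_inv_mul]
  congr 1
  apply Finset.prod_congr rfl
  intro j _
  push_cast; ring

lemma cb_symm (a : ℕ) (z : ℝ) : (cb a).eval (-1 - z) = (cb a).eval z := by
  rw [cb_eval, cb_eval]
  congr 1
  rw [← Finset.prod_range_reflect]
  have : ∏ j ∈ Finset.range (2 * a), (z + ((a : ℝ) - j)) =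
      (-1) ^ (2 * a) * ∏ j ∈ Finset.range (2 * a), (z + ((a : ℝ) - j)) := by
    rw [pow_mul]; norm_num
  rw [this]
  have h2 : ((-1 : ℝ)) ^ (2 * a) = ∏ j ∈ Finset.range (2 * a), (-1 : ℝ) := by simp
  rw [h2, ← Finset.prod_mul_distrib]
  apply Finset.prod_congr rfl
  intro j hj
  rw [Finset.mem_range] at hj
  rw [Nat.cast_sub (by omega), Nat.cast_sub (by omega)]
  push_cast; ring

lemma cb_natDegree (a : ℕ) : (cb a).natDegree ≤ 2 * a := by
  unfold cb
  refine (natDegree_C_mul_le _ _).trans ?_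
  refine (natDegree_prod_le _ _).trans ?_
  refine (Finset.sum_le_card_nsmul _ _ 1 ?_).trans (by simp)
  intro j _
  exact (natDegree_X_add_C _).le

noncomputable def Lam (β : ℝ) (S : ℝ[X]) : ℝ :=
  ∑' v : ℕ, (S.derivative.eval (v : ℝ) + β * S.eval (v : ℝ)) * xx ^ v

lemma summ_poly (S : ℝ[X]) (r : ℝ) (hr : ‖r‖ < 1) :
    Summable fun v : ℕ => S.eval (v : ℝ) * r ^ v := by
  induction S using Polynomial.induction_on' with
  | add p q hp hq => simpa [add_mul] using hp.add hq
  | monomial n a =>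
    simpa [mul_assoc] using (summable_pow_mul_geometric_of_norm_lt_one n hr).mul_left a

lemma Lam_eq (β : ℝ) (S : ℝ[X]) : Lam β S =
    (∑' v : ℕ, S.derivative.eval (v : ℝ) * xx ^ v) + β * ∑' v : ℕ, S.eval (v : ℝ) * xx ^ v := by
  unfold Lam
  rw [← tsum_mul_left, ← Summable.tsum_add (summ_poly _ _ xx_norm)
    ((summ_poly _ _ xx_norm).mul_left _)]
  congr 1; ext v; ring

lemma hasSum_shift {f : ℕ → ℝ} {a : ℝ} (k : ℕ) (h0 : ∀ v < k, f v = 0)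
    (h : HasSum (fun v => f (v + k)) a) : HasSum f a := by
  have := (hasSum_nat_add_iff k).1 h
  rwa [Finset.sum_eq_zero (fun i hi => h0 i (Finset.mem_range.1 hi)), add_zero] at this

lemma sum_choose_shift (k m : ℕ) (hk : k ≤ m) :
    HasSum (fun v : ℕ => ((v + k).choose m : ℝ) * xx ^ v) (xx ^ (m - k) / (1 - xx) ^ (m + 1)) := by
  apply hasSum_shift (m - k)
  · intro v hv
    rw [Nat.choose_eq_zero_of_lt (by omega)]; simp
  · have := (hasSum_choose_mul_geometric_of_norm_lt_one m xx_norm).mul_left (xx ^ (m - k))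
    rw [mul_one_div] at this
    refine HasSum.congr_fun this ?_
    intro v
    rw [show v + (m - k) + k = v + m by omega, pow_add]; ring

lemma one_sub_xx_ne : 1 - xx ≠ 0 := by have := xx_lt_one; linarith

lemma sum_cb (k : ℕ) : HasSum (fun v : ℕ => (cb k).eval (v : ℝ) * xx ^ v)
    (3 ^ k * ((√13 + 1) / 2)) := by
  have := sum_choose_shift k (2 * k) (by omega)
  simp_rw [cb_eval_nat]
  convert this using 1
  have h1 := one_sub_xx
  have h2 := one_sub_xx_ne
  have h3 : (√13 + 1) / 2 = 1 / (1 - xx) := by field_simp; linarith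
  rw [h3, show 2 * k - k = k by omega, pow_succ, pow_mul]
  nth_rewrite 2 [xx_three]
  rw [mul_pow]
  field_simp

noncomputable def ob (k : ℕ) : ℝ[X] := C ((2 * (k : ℝ) + 1)⁻¹) * (2 * X + 1) * cb k

lemma ob_eval_nat (k v : ℕ) : (ob k).eval (v : ℝ) =
    (((v + k + 1).choose (2 * k + 1) + (v + k).choose (2 * k + 1) : ℕ) : ℝ) := by
  have h : (2 * (k : ℝ) + 1) ≠ 0 := by positivity
  simp only [ob, eval_mul, eval_C, eval_add, eval_X, eval_ofNat, eval_one, cb_eval_nat]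
  rw [mul_assoc, inv_mul_eq_iff_eq_mul₀ h]
  have h1 := Nat.choose_succ_right_eq (v + k) (2 * k)
  have h2 := Nat.add_one_mul_choose_eq (v + k) (2 * k)
  have h3 : (((v + k).choose (2 * k + 1) * (2 * k + 1) : ℕ) : ℝ) =
      (v + k).choose (2 * k) * ((v : ℝ) - k) := by
    rcases le_or_gt k v with h | h
    · rw [h1]; push_cast [Nat.cast_sub (show 2 * k ≤ v + k by omega)]; ring
    · rw [Nat.choose_eq_zero_of_lt (by omega), Nat.choose_eq_zero_of_lt (by omega)]; simp
  have h4 : ((((v + k) + 1) * (v + k).choose (2 * k) : ℕ) : ℝ) =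
    (((v + k + 1).choose (2 * k + 1) * (2 * k + 1) : ℕ) : ℝ) := by rw [h2]
  push_cast at h3 h4 ⊢
  linear_combination h3 + h4 - 2 * h3

lemma sum_ob (k : ℕ) : HasSum (fun v : ℕ => (ob k).eval (v : ℝ) * xx ^ v)
    (3 ^ k * (√13 * ((√13 + 1) / 2))) := by
  have e1 := sum_choose_shift (k + 1) (2 * k + 1) (by omega)
  have e2 := sum_choose_shift k (2 * k + 1) (by omega)
  simp_rw [ob_eval_nat]
  convert e1.add e2 using 1
  · ext v; push_cast; rw [← add_assoc]; ring
  have h1 := one_sub_xx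
  have h2 := one_sub_xx_ne
  have h3 : (√13 + 1) / 2 = 1 / (1 - xx) := by field_simp; linarith
  have h4 : √13 = (1 + xx) / (1 - xx) := by rw [one_add_xx]; field_simp
  rw [show 2 * k + 1 - (k + 1) = k by omega, show 2 * k + 1 - k = k + 1 by omega, h3]
  nth_rewrite 1 [h4]
  rw [show 2 * k + 1 + 1 = 2 * (k + 1) by ring, pow_mul (1 - xx) 2 (k + 1)]
  have h5 : xx ^ k = 3 ^ k * ((1 - xx) ^ 2) ^ k := by rw [← mul_pow, ← xx_three]
  rw [pow_succ xx, h5]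
  field_simp
  ring

lemma tri_exists (c : ℕ → ℕ → ℕ) (hd : ∀ k, c k k = 1) (f : ℕ → ℝ) (D : ℝ) (L : ℕ)
    (hf : ∀ k, ∃ z : ℤ, D * f k = z) (h0 : ∀ k < L, f k = 0) (K : ℕ) :
    ∃ s : ℕ → ℝ, (∀ k, ∃ z : ℤ, D * s k = z) ∧ (∀ k < L, s k = 0) ∧
      ∀ k < K, f k = ∑ j ∈ Finset.range (k + 1), s j * c k j := by
  induction K with
  | zero => exact ⟨fun _ => 0, fun k => ⟨0, by simp⟩, fun _ _ => rfl, fun k hk => by omega⟩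
  | succ K ih =>
    obtain ⟨s, h1, h2, h3⟩ := ih
    refine ⟨Function.update s K (f K - ∑ j ∈ Finset.range K, s j * c K j), ?_, ?_, ?_⟩
    · intro k
      rcases eq_or_ne k K with rfl | hk
      · rw [Function.update_self]
        choose z hz using h1
        obtain ⟨w, hw⟩ := hf k
        refine ⟨w - ∑ j ∈ Finset.range k, z j * c k j, ?_⟩
        push_cast
        rw [mul_sub, hw, Finset.mul_sum]
        congr 1
        apply Finset.sum_congr rfl
        intro j _
        rw [← hz]; ring
      · rw [Function.update_of_ne hk]; exact h1 k
    · intro k hk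
      rcases eq_or_ne k K with rfl | hk'
      · rw [Function.update_self, h0 k hk, Finset.sum_eq_zero, sub_zero]
        intro j hj
        rw [h2 j (by rw [Finset.mem_range] at hj; omega), zero_mul]
      · rw [Function.update_of_ne hk']; exact h2 k hk
    · intro k hk
      have aux : ∀ k ≤ K, ∀ l, ∑ j ∈ Finset.range k, Function.update s K (f K - ∑ j ∈ Finset.range K, s j * c K j) j * c l j
          = ∑ j ∈ Finset.range k, s j * c l j := by
        intro k hk l
        apply Finset.sum_congr rfl
        intro j hj
        rw [Function.update_of_ne (by rw [Finset.mem_range] at hj; omega)]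
      rcases Nat.lt_succ_iff_lt_or_eq.1 hk with h | rfl
      · rw [aux (k + 1) (by omega)]; exact h3 k h
      · rw [Finset.sum_range_succ, aux k le_rfl, Function.update_self, hd]; simp

lemma expand_gen (B : ℕ → ℝ[X]) (c : ℕ → ℕ → ℕ) (hB : ∀ k v : ℕ, (B k).eval (v : ℝ) = c v k)
    (hd : ∀ k, c k k = 1) (hz : ∀ v k, v < k → c v k = 0) (hdeg : ∀ k, (B k).natDegree ≤ 2 * k + 1)
    (e : ℝ) (hsym : ∀ k (z : ℝ), (B k).eval (-1 - z) = e * (B k).eval z)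
    (S : ℝ[X]) (hS : ∀ z : ℝ, S.eval (-1 - z) = e * S.eval z) (D : ℝ) (L : ℕ)
    (hf : ∀ k : ℕ, ∃ z : ℤ, D * S.eval (k : ℝ) = z) (h0 : ∀ k : ℕ, k < L → S.eval (k : ℝ) = 0) :
    ∃ (s : ℕ → ℝ) (K : ℕ), (∀ k, ∃ z : ℤ, D * s k = z) ∧ (∀ k < L, s k = 0) ∧
      S = ∑ k ∈ Finset.range K, C (s k) * B k := by
  obtain ⟨K, hK⟩ : ∃ K, K = S.natDegree + 1 := ⟨_, rfl⟩
  obtain ⟨s, h1, h2, h3⟩ := tri_exists c hd (fun k => S.eval (k : ℝ)) D L hf h0 K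
  refine ⟨s, K, h1, h2, ?_⟩
  rw [← sub_eq_zero]
  set T := S - ∑ k ∈ Finset.range K, C (s k) * B k with hT
  have hev : ∀ k : ℕ, k < K → T.eval (k : ℝ) = 0 := by
    intro k hk
    rw [hT, eval_sub, eval_finsetSum, h3 k hk, sub_eq_zero]
    simp only [eval_mul, eval_C, hB]
    apply Finset.sum_subset
    · intro j; simp only [Finset.mem_range]; omega
    · intro j _ hj
      rw [hz k j (by simpa using hj)]; simp
  have hsy : ∀ z : ℝ, T.eval (-1 - z) = e * T.eval z := by
    intro z
    rw [hT, eval_sub, eval_sub, eval_finsetSum, eval_finsetSum, hS, mul_sub, Finset.mul_sum]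
    simp only [eval_mul, eval_C, hsym]
    congr 1
    apply Finset.sum_congr rfl
    intro j _; ring
  have hdegT : T.natDegree ≤ 2 * K - 1 := by
    rw [hT]
    have e2 : (∑ k ∈ Finset.range K, C (s k) * B k).natDegree ≤ 2 * K - 1 := by
      refine natDegree_sum_le_of_forall_le _ _ ?_
      intro k hk
      rw [Finset.mem_range] at hk
      exact (natDegree_C_mul_le _ _).trans ((hdeg k).trans (by omega))
    exact (natDegree_sub_le _ _).trans (max_le (by omega) e2)
  have hinj : Function.Injective (fun i : ℤ => (i : ℝ)) := Int.cast_injective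
  apply eq_zero_of_natDegree_lt_card_of_eval_eq_zero' T
    ((Finset.Ico (-(K : ℤ)) K).image (fun i : ℤ => (i : ℝ)))
  · intro i hi
    rw [Finset.mem_image] at hi
    obtain ⟨i, hi, rfl⟩ := hi
    rw [Finset.mem_Ico] at hi
    rcases le_or_gt 0 i with h | h
    · lift i to ℕ using h
      exact hev i (by omega)
    · have h2 : (i : ℝ) = -1 - ((-1 - i).toNat : ℝ) := by
        have : ((-1 - i).toNat : ℤ) = -1 - i := Int.toNat_of_nonneg (by omega)
        have h3 : (((-1 - i).toNat : ℤ) : ℝ) = ((-1 - i : ℤ) : ℝ) := by rw [this]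
        push_cast at h3; rw [h3]; ring
      change eval (i : ℝ) T = 0
      rw [h2, hsy, hev _ (by omega), mul_zero]
  · rw [Finset.card_image_of_injective _ hinj, Int.card_Ico]
    omega

lemma tsum_expand (B : ℕ → ℝ[X]) (w : ℝ)
    (hB : ∀ k, HasSum (fun v : ℕ => (B k).eval (v : ℝ) * xx ^ v) (3 ^ k * w))
    (s : ℕ → ℝ) (K L : ℕ) (D : ℝ) (h1 : ∀ k, ∃ z : ℤ, D * s k = z) (h2 : ∀ k < L, s k = 0) :
    ∃ A : ℤ, D / 3 ^ L * ∑' v : ℕ, (∑ k ∈ Finset.range K, C (s k) * B k).eval (v : ℝ) * xx ^ v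
      = A * w := by
  have h : HasSum (fun v : ℕ => (∑ k ∈ Finset.range K, C (s k) * B k).eval (v : ℝ) * xx ^ v)
      (∑ k ∈ Finset.range K, s k * (3 ^ k * w)) := by
    have := hasSum_sum (s := Finset.range K) (fun k _ => (hB k).mul_left (s k))
    refine HasSum.congr_fun this ?_
    intro v
    rw [eval_finsetSum, Finset.sum_mul]
    apply Finset.sum_congr rfl
    intro k _
    rw [eval_mul, eval_C]; ring
  rw [h.tsum_eq]
  choose z hz using h1
  refine ⟨∑ k ∈ Finset.range K, z k * 3 ^ (k - L), ?_⟩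
  push_cast
  rw [Finset.mul_sum, Finset.sum_mul]
  apply Finset.sum_congr rfl
  intro k _
  rcases lt_or_ge k L with hk | hk
  · rw [← hz, h2 k hk]; simp
  · rw [← hz]
    obtain ⟨j, rfl⟩ := Nat.exists_eq_add_of_le hk
    rw [Nat.add_sub_cancel_left, pow_add]
    field_simp

lemma linear_form (S : ℝ[X]) (hS : ∀ z : ℝ, S.eval (-1 - z) = S.eval z) (D : ℝ) (L : ℕ)
    (hf : ∀ k : ℕ, ∃ z : ℤ, D * S.eval (k : ℝ) = z)
    (hf' : ∀ k : ℕ, ∃ z : ℤ, D * S.derivative.eval (k : ℝ) = z)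
    (h0 : ∀ k : ℕ, k < L → S.eval (k : ℝ) = 0)
    (h0' : ∀ k : ℕ, k < L → S.derivative.eval (k : ℝ) = 0) :
    ∃ A B : ℤ, (D / 3 ^ L * ∑' v : ℕ, S.eval (v : ℝ) * xx ^ v = A * ((√13 + 1) / 2)) ∧
      ∀ β, D / 3 ^ L * Lam β S = ((√13 + 1) / 2) / √13 * (√13 * β * A + 13 * B) := by
  have hcomp : S.comp (-1 - X) = S := by
    apply Polynomial.funext; intro z; simp [hS]
  have hS' : ∀ z : ℝ, S.derivative.eval (-1 - z) = (-1) * S.derivative.eval z := by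
    intro z
    have := congrArg (fun p => p.derivative.eval z) hcomp
    simp only [derivative_comp, eval_mul, eval_comp] at this
    simp at this
    linarith
  obtain ⟨s, K, a1, a2, a3⟩ := expand_gen cb (fun v k => (v + k).choose (2 * k))
    (fun k v => cb_eval_nat k v) (fun k => by rw [← two_mul]; simp)
    (fun v k h => Nat.choose_eq_zero_of_lt (by omega)) (fun k => (cb_natDegree k).trans (by omega)) 1
    (fun k z => by rw [cb_symm, one_mul]) S (fun z => by rw [hS, one_mul]) D L hf h0
  obtain ⟨t, K', b1, b2, b3⟩ := expand_gen ob
    (fun v k => (v + k + 1).choose (2 * k + 1) + (v + k).choose (2 * k + 1))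
    (fun k v => ob_eval_nat k v) (fun k => by
      rw [← two_mul, Nat.choose_self, Nat.choose_eq_zero_of_lt (by omega)])
    (fun v k h => by
      rw [Nat.choose_eq_zero_of_lt (by omega), Nat.choose_eq_zero_of_lt (by omega)])
    (fun k => by
      unfold ob
      refine natDegree_mul_le.trans ?_
      have h1 := cb_natDegree k
      have h2 : (C ((2 * (k : ℝ) + 1)⁻¹) * (2 * X + 1)).natDegree ≤ 1 := by
        refine (natDegree_C_mul_le _ _).trans ?_
        compute_degree
      omega) (-1)
    (fun k z => by
      simp only [ob, eval_mul, eval_C, eval_add, eval_X, eval_ofNat, eval_one, cb_symm]; ring)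
    S.derivative hS' D L hf' h0'
  obtain ⟨A, hA⟩ := tsum_expand cb _ sum_cb s K L D a1 a2
  obtain ⟨B, hB⟩ := tsum_expand ob _ sum_ob t K' L D b1 b2
  rw [← a3] at hA
  rw [← b3] at hB
  refine ⟨A, B, hA, ?_⟩
  intro β
  rw [Lam_eq, mul_add, hB, mul_left_comm (D / 3 ^ L), hA]
  have := s13_sq
  have h2 := s13_pos.ne'
  field_simp
  linear_combination (B : ℝ) * this
end PartA

section PartB
open Polynomial

noncomputable def RR (N : ℕ) : ℝ[X] := cb (15 * N) * cb (25 * N) * cb (35 * N)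

lemma Lam_summable (β : ℝ) (S : ℝ[X]) :
    Summable fun v : ℕ => (S.derivative.eval (v : ℝ) + β * S.eval (v : ℝ)) * xx ^ v := by
  have := (summ_poly S.derivative xx xx_norm).add ((summ_poly S xx xx_norm).mul_left β)
  refine this.congr ?_
  intro v; ring

lemma Lam_add (β : ℝ) (p q : ℝ[X]) : Lam β (p + q) = Lam β p + Lam β q := by
  unfold Lam
  rw [← Summable.tsum_add (Lam_summable β p) (Lam_summable β q)]
  congr 1; ext v; simp; ring

lemma Lam_C_mul (β c : ℝ) (p : ℝ[X]) : Lam β (C c * p) = c * Lam β p := by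
  unfold Lam
  rw [← tsum_mul_left]
  congr 1; ext v; simp; ring

lemma Lam_tel (β : ℝ) (T : ℝ[X]) : Lam β (T - C xx * T.comp (X + 1)) =
    T.derivative.eval 0 + β * T.eval 0 := by
  have h := (Lam_summable β T)
  have h1 := h.tsum_eq_zero_add
  have h2 := (summable_nat_add_iff 1).2 h
  unfold Lam
  have : ∀ v : ℕ, ((T - C xx * T.comp (X + 1)).derivative.eval (v : ℝ) +
      β * (T - C xx * T.comp (X + 1)).eval (v : ℝ)) * xx ^ v =
      (T.derivative.eval (v : ℝ) + β * T.eval (v : ℝ)) * xx ^ v -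
      (T.derivative.eval ((v + 1 : ℕ) : ℝ) + β * T.eval ((v + 1 : ℕ) : ℝ)) * xx ^ (v + 1) := by
    intro v
    simp [derivative_comp]
    ring
  simp_rw [this]
  rw [Summable.tsum_sub h h2, h1]
  simp

lemma cb_shift (a : ℕ) : (cb a).comp (X + 1) * (X + 1 - C (a : ℝ)) = cb a * (X + 1 + C (a : ℝ)) := by
  apply Polynomial.funext
  intro z
  simp only [eval_mul, eval_comp, eval_add, eval_sub, eval_X, eval_one, eval_C, cb_eval]
  have h1 := Finset.prod_range_succ (fun j : ℕ => z + 1 + ((a : ℝ) - j)) (2 * a)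
  have h2 := Finset.prod_range_succ' (fun j : ℕ => z + 1 + ((a : ℝ) - j)) (2 * a)
  rw [h1] at h2
  have h3 : ∀ j ∈ Finset.range (2 * a), z + 1 + ((a : ℝ) - (j + 1 : ℕ)) = z + (a - j) := by
    intro j _; push_cast; ring
  rw [Finset.prod_congr rfl h3] at h2
  push_cast at h2
  rw [mul_assoc, mul_assoc]
  congr 1
  linear_combination h2

lemma RR_rel (N : ℕ) (hN : 0 < N) (β : ℝ) (U : ℝ[X]) :
    Lam β (RR N * ((X - C (15 * N : ℝ)) * (X - C (25 * N : ℝ)) * (X - C (35 * N : ℝ)) * U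
      - C xx * ((X + 1 + C (15 * N : ℝ)) * (X + 1 + C (25 * N : ℝ)) * (X + 1 + C (35 * N : ℝ))
        * U.comp (X + 1)))) = 0 := by
  have h := Lam_tel β (RR N * ((X - C (15 * N : ℝ)) * (X - C (25 * N : ℝ)) * (X - C (35 * N : ℝ)) * U))
  have e0 : ∀ a : ℕ, 0 < a → (cb a).eval 0 = 0 := by
    intro a ha
    have := cb_eval_nat a 0
    rw [Nat.choose_eq_zero_of_lt (by omega)] at this
    simpa using this
  have h1 := cb_shift (15 * N)
  have h2 := cb_shift (25 * N)
  have h3 := cb_shift (35 * N)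
  push_cast at h1 h2 h3
  convert h using 1
  · congr 1
    unfold RR
    simp only [mul_comp, sub_comp, X_comp, C_comp]
    linear_combination (-C xx * U.comp (X + 1)) * (
      (cb (15 * N)).comp (X + 1) * (X + 1 - C (15 * N : ℝ)) * ((cb (25 * N)).comp (X + 1) * (X + 1 - C (25 * N : ℝ))) * h3 * (-1)
      - (cb (15 * N)).comp (X + 1) * (X + 1 - C (15 * N : ℝ)) * (cb (35 * N) * (X + 1 + C (35 * N : ℝ))) * h2
      - (cb (25 * N) * (X + 1 + C (25 * N : ℝ))) * (cb (35 * N) * (X + 1 + C (35 * N : ℝ))) * h1)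
  · unfold RR
    simp [e0 (15 * N) (by omega), e0 (25 * N) (by omega)]

lemma RR_all (N : ℕ) (hN : 0 < N) (β : ℝ) (h0 : Lam β (RR N * 1) = 0)
    (h2 : Lam β (RR N * (2 * X + 1) ^ 2) = 0) (h4 : Lam β (RR N * (2 * X + 1) ^ 4) = 0) (P : ℝ[X]) :
    Lam β (RR N * P) = 0 := by
  have Ladd : ∀ p q : ℝ[X], Lam β (RR N * (p + q)) = Lam β (RR N * p) + Lam β (RR N * q) := by
    intro p q; rw [mul_add, Lam_add]
  have Lsmul : ∀ (c : ℝ) (q : ℝ[X]), Lam β (RR N * (C c * q)) = c * Lam β (RR N * q) := by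
    intro p q; rw [mul_left_comm, Lam_C_mul]
  have hnx : 1 - xx ≠ 0 := one_sub_xx_ne
  -- the value on w
  have h1 : Lam β (RR N * (2 * X + 1)) = 0 := by
    set y : ℝ[X] := 2 * X + 1 with hy
    have hX : (X : ℝ[X]) = C (1/2) * (y - 1) := by
      rw [hy]
      apply Polynomial.funext; intro z; simp
    have r3 := RR_rel N hN β 1
    have r4 := RR_rel N hN β X
    set a : ℝ := (N : ℝ)
    have ha : 0 < a := by simp only [a]; exact_mod_cast hN
    have q3 : (X - C (15 * a : ℝ)) * (X - C (25 * a : ℝ)) * (X - C (35 * a : ℝ)) * 1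
      - C xx * ((X + 1 + C (15 * a : ℝ)) * (X + 1 + C (25 * a : ℝ)) * (X + 1 + C (35 * a : ℝ))
        * (1 : ℝ[X]).comp (X + 1)) =
        C ((1 - xx) / 8) * y ^ 3 + (C (-(1 + xx) * (75 * a + 3 / 2) / 4) * y ^ 2 +
         (C ((1 - xx) / 2 * ((15 * a + 1 / 2) * (25 * a + 1 / 2) + (15 * a + 1 / 2) * (35 * a + 1 / 2)
          + (25 * a + 1 / 2) * (35 * a + 1 / 2))) * y +
          C (- (1 + xx) * ((15 * a + 1 / 2) * (25 * a + 1 / 2) * (35 * a + 1 / 2))) * 1)) := by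
      apply Polynomial.funext; intro z
      simp [hy]; ring
    have q4 : (X - C (15 * a : ℝ)) * (X - C (25 * a : ℝ)) * (X - C (35 * a : ℝ)) * X
      - C xx * ((X + 1 + C (15 * a : ℝ)) * (X + 1 + C (25 * a : ℝ)) * (X + 1 + C (35 * a : ℝ))
        * (X : ℝ[X]).comp (X + 1)) =
        C ((1 - xx) / 16) * y ^ 4 + (C (-(1 + xx) * (75 * a + 2) / 8) * y ^ 3 +
         (C ((1 - xx) / 4 * ((15 * a + 1 / 2) * (25 * a + 1 / 2) + (15 * a + 1 / 2) * (35 * a + 1 / 2)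
          + (25 * a + 1 / 2) * (35 * a + 1 / 2) + (75 * a + 3 / 2) / 2)) * y ^ 2 +
          (C (- (1 + xx) / 2 * ((15 * a + 1 / 2) * (25 * a + 1 / 2) * (35 * a + 1 / 2) +
            1 / 2 * ((15 * a + 1 / 2) * (25 * a + 1 / 2) + (15 * a + 1 / 2) * (35 * a + 1 / 2)
          + (25 * a + 1 / 2) * (35 * a + 1 / 2)))) * y +
           C ((1 - xx) * ((15 * a + 1 / 2) * (25 * a + 1 / 2) * (35 * a + 1 / 2)) / 2) * 1))) := by
      apply Polynomial.funext; intro z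
      simp [hy]; ring
    rw [q3, Ladd, Ladd, Ladd, Lsmul, Lsmul, Lsmul, Lsmul, h0, h2] at r3
    rw [q4, Ladd, Ladd, Ladd, Ladd, Lsmul, Lsmul, Lsmul, Lsmul, Lsmul, h0, h2, h4] at r4
    set e1 := Lam β (RR N * y)
    set e3 := Lam β (RR N * y ^ 3)
    have t3 : e3 = - 4 * ((15 * a + 1 / 2) * (25 * a + 1 / 2) + (15 * a + 1 / 2) * (35 * a + 1 / 2)
          + (25 * a + 1 / 2) * (35 * a + 1 / 2)) * e1 := by
      apply mul_left_cancel₀ hnx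
      linear_combination 8 * r3
    have hpx : 1 + xx ≠ 0 := by have := xx_pos; linarith
    have t4 : (75 * a + 2) * e3 + 4 * ((15 * a + 1 / 2) * (25 * a + 1 / 2) * (35 * a + 1 / 2) +
            1 / 2 * ((15 * a + 1 / 2) * (25 * a + 1 / 2) + (15 * a + 1 / 2) * (35 * a + 1 / 2)
          + (25 * a + 1 / 2) * (35 * a + 1 / 2))) * e1 = 0 := by
      apply mul_left_cancel₀ hpx
      linear_combination (-8) * r4
    rw [t3] at t4
    have t5 : (75 * a + 3/2) * ((15 * a + 1 / 2) * (25 * a + 1 / 2) + (15 * a + 1 / 2) * (35 * a + 1 / 2)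
          + (25 * a + 1 / 2) * (35 * a + 1 / 2)) - (15 * a + 1 / 2) * (25 * a + 1 / 2) * (35 * a + 1 / 2) > 0 := by
      ring_nf; positivity
    have t6 := mul_eq_zero.1 (show ((75 * a + 3/2) * ((15 * a + 1 / 2) * (25 * a + 1 / 2) + (15 * a + 1 / 2) * (35 * a + 1 / 2)
          + (25 * a + 1 / 2) * (35 * a + 1 / 2)) - (15 * a + 1 / 2) * (25 * a + 1 / 2) * (35 * a + 1 / 2)) * e1 = 0 by
          linear_combination (-1/4) * t4)
    exact t6.resolve_left t5.ne'
  have key : ∀ k : ℕ, ∀ P : ℝ[X], P.natDegree ≤ k + 2 → Lam β (RR N * P) = 0 := by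
    intro k
    induction k with
    | zero =>
      intro P hP
      have hq := P.as_sum_range_C_mul_X_pow' (n := 3) (by omega)
      have : P = C (P.coeff 2 / 4) * (2 * X + 1) ^ 2 + (C (P.coeff 1 / 2 - P.coeff 2 / 2) * (2 * X + 1)
          + C (P.coeff 0 - P.coeff 1 / 2 + P.coeff 2 / 4) * 1) := by
        apply Polynomial.funext; intro z
        conv_lhs => rw [hq]
        simp [Finset.sum_range_succ]; ring
      rw [this, Ladd, Ladd, Lsmul, Lsmul, Lsmul, h0, h1, h2]; ring
    | succ k ih =>
      intro P hP
      have r := RR_rel N hN β (X ^ k)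
      set Q1 := (X - C (15 * N : ℝ)) * (X - C (25 * N : ℝ)) * (X - C (35 * N : ℝ)) * X ^ k with hQ1
      set Q2 := ((X + 1 + C (15 * N : ℝ)) * (X + 1 + C (25 * N : ℝ)) * (X + 1 + C (35 * N : ℝ))
        * (X ^ k).comp (X + 1)) with hQ2
      have hm1 : Q1.Monic := (((monic_X_sub_C _).mul (monic_X_sub_C _)).mul (monic_X_sub_C _)).mul (monic_X_pow k)
      have hd1 : Q1.natDegree = k + 3 := by
        rw [hQ1, Monic.natDegree_mul (((monic_X_sub_C _).mul (monic_X_sub_C _)).mul (monic_X_sub_C _)) (monic_X_pow k),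
          Monic.natDegree_mul ((monic_X_sub_C _).mul (monic_X_sub_C _)) (monic_X_sub_C _),
          Monic.natDegree_mul (monic_X_sub_C _) (monic_X_sub_C _)]
        simp only [natDegree_X_sub_C, natDegree_X_pow]; omega
      have hQ2' : Q2 = ((X + C (1 + 15 * N : ℝ)) * (X + C (1 + 25 * N : ℝ)) * (X + C (1 + 35 * N : ℝ))
        * (X + C 1) ^ k) := by
        rw [hQ2]; simp [add_assoc]
      have hm2 : Q2.Monic := by
        rw [hQ2']
        exact (((monic_X_add_C _).mul (monic_X_add_C _)).mul (monic_X_add_C _)).mul ((monic_X_add_C 1).pow k)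
      have hd2 : Q2.natDegree = k + 3 := by
        rw [hQ2', Monic.natDegree_mul (((monic_X_add_C _).mul (monic_X_add_C _)).mul (monic_X_add_C _)) ((monic_X_add_C 1).pow k),
          Monic.natDegree_mul ((monic_X_add_C _).mul (monic_X_add_C _)) (monic_X_add_C _),
          Monic.natDegree_mul (monic_X_add_C _) (monic_X_add_C _), (monic_X_add_C 1).natDegree_pow]
        simp only [natDegree_X_add_C]; omega
      have hc1 : Q1.coeff (k + 3) = 1 := by rw [← hd1]; exact hm1
      have hc2 : Q2.coeff (k + 3) = 1 := by rw [← hd2]; exact hm2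
      have hP2 : P = (P + C (-(P.coeff (k + 3) / (1 - xx))) * (Q1 - C xx * Q2)) +
        C (P.coeff (k + 3) / (1 - xx)) * (Q1 - C xx * Q2) := by
        rw [C_neg]; ring
      rw [hP2, Ladd, Lsmul, r, mul_zero, add_zero]
      apply ih
      have hle : (P + C (-(P.coeff (k + 3) / (1 - xx))) * (Q1 - C xx * Q2)).natDegree ≤ k + 3 := by
        refine (natDegree_add_le _ _).trans (max_le (by omega) ?_)
        refine (natDegree_C_mul_le _ _).trans ?_
        refine (natDegree_sub_le _ _).trans (max_le (by omega) ?_)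
        exact (natDegree_C_mul_le _ _).trans (by omega)
      rw [natDegree_le_iff_coeff_eq_zero]
      intro m hm
      rcases eq_or_ne m (k + 3) with rfl | hne
      · rw [coeff_add, coeff_C_mul, coeff_sub, coeff_C_mul, hc1, hc2]
        field_simp; ring
      · exact coeff_eq_zero_of_natDegree_lt (by omega)
  exact key P.natDegree P (by omega)

lemma crt_T (M : ℕ) : ∃ T : ℝ[X], T.eval 0 = 0 ∧ T.derivative.eval 0 = 1 ∧
    (∏ i ∈ Finset.Ico (-(M : ℤ)) M, (X - C (i : ℝ))) ^ 3 ∣ T - C xx * T.comp (X + 1) := by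
  have hinj : Function.Injective (fun i : ℤ => (i : ℝ)) := Int.cast_injective
  have hcop := pairwise_coprime_X_sub_C hinj
  have := Ideal.exists_forall_sub_mem_ideal (R := ℝ[X]) (ι := ↥(Finset.Icc (-(M : ℤ)) M))
    (I := fun j => Ideal.span {(X - C ((j : ℤ) : ℝ)) ^ 3}) (by
      intro i j hij
      rw [Function.onFun, Ideal.isCoprime_span_singleton_iff]
      exact IsCoprime.pow (hcop (fun h => hij (Subtype.ext h))))
    (fun j => C (xx ^ (-(j : ℤ))) * (X - C ((j : ℤ) : ℝ)))
  obtain ⟨T, hT⟩ := this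
  have hT' : ∀ j : ℤ, -(M : ℤ) ≤ j → j ≤ M →
      (X - C (j : ℝ)) ^ 3 ∣ T - C (xx ^ (-j)) * (X - C (j : ℝ)) := by
    intro j h1 h2
    exact Ideal.mem_span_singleton.1 (hT ⟨j, Finset.mem_Icc.2 ⟨h1, h2⟩⟩)
  refine ⟨T, ?_, ?_, ?_⟩
  · obtain ⟨q, hq⟩ := hT' 0 (by omega) (by omega)
    have hq' := sub_eq_iff_eq_add.1 hq
    rw [hq']; simp
  · obtain ⟨q, hq⟩ := hT' 0 (by omega) (by omega)
    have hq' := sub_eq_iff_eq_add.1 hq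
    rw [hq']; simp
  · rw [← Finset.prod_pow]
    apply Finset.prod_dvd_of_coprime
    · intro i _ j _ hij
      exact IsCoprime.pow (hcop hij)
    · intro j hj
      rw [Finset.mem_Ico] at hj
      have h1 := hT' j hj.1 hj.2.le
      obtain ⟨q, hq⟩ := hT' (j + 1) (by omega) (by omega)
      have hq2 := congrArg (fun p => p.comp (X + 1)) hq
      simp only [sub_comp, mul_comp, pow_comp, X_comp, C_comp] at hq2
      have e : (X + 1 - C ((j + 1 : ℤ) : ℝ)) = X - C (j : ℝ) := by
        push_cast; rw [C_add, C_1]; ring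
      rw [e] at hq2
      have e2 : xx ^ (-(j + 1)) * xx = xx ^ (-j) := by
        rw [← zpow_add_one₀ xx_pos.ne']; congr 1; ring
      have : T - C xx * T.comp (X + 1) = (T - C (xx ^ (-j)) * (X - C (j : ℝ)))
          - C xx * ((X - C (j : ℝ)) ^ 3 * q.comp (X + 1)) := by
        rw [← hq2, ← e2, C_mul]; ring
      rw [this]
      exact dvd_sub h1 (Dvd.intro _ (by ring : (X - C (j : ℝ)) ^ 3 * (C xx * q.comp (X + 1)) = _))

lemma cb_dvd (a M : ℕ) (h : a ≤ M) : cb a ∣ ∏ i ∈ Finset.Ico (-(M : ℤ)) M, (X - C (i : ℝ)) := by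
  have hu : IsUnit (C ((((2 * a).factorial : ℕ) : ℝ)⁻¹)) := by
    rw [isUnit_C]; exact (inv_ne_zero (by positivity)).isUnit
  unfold cb
  rw [hu.mul_left_dvd]
  have : ∏ j ∈ Finset.range (2 * a), (X + C ((a : ℝ) - j)) =
      ∏ i ∈ (Finset.range (2 * a)).image (fun j : ℕ => (j : ℤ) - a), (X - C (i : ℝ)) := by
    rw [Finset.prod_image (by intro i _ j _ h; simp at h; exact_mod_cast h)]
    apply Finset.prod_congr rfl
    intro j _
    push_cast
    rw [C_sub, C_sub]; ring
  rw [this]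
  apply Finset.prod_dvd_prod_of_subset
  intro i hi
  simp only [Finset.mem_image, Finset.mem_range, Finset.mem_Ico] at *
  omega

lemma nonvanish (N : ℕ) (hN : 0 < N) (β : ℝ) : ∃ P ∈ ({1, (2 * X + 1) ^ 2, (2 * X + 1) ^ 4} : Set ℝ[X]),
    Lam β (RR N * P) ≠ 0 := by
  by_contra! hcon
  have hall := RR_all N hN β (hcon 1 (by simp)) (hcon _ (by simp)) (hcon _ (by simp))
  obtain ⟨T, t0, t1, t2⟩ := crt_T (35 * N)
  have : RR N ∣ T - C xx * T.comp (X + 1) := by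
    refine dvd_trans ?_ t2
    rw [pow_succ, pow_two]
    exact mul_dvd_mul (mul_dvd_mul (cb_dvd _ _ (by omega)) (cb_dvd _ _ (by omega))) (cb_dvd _ _ le_rfl)
  obtain ⟨Q, hQ⟩ := this
  have h1 := Lam_tel β T
  rw [hQ, hall, t0, t1] at h1
  norm_num at h1
end PartB

section PartC1
lemma div_bd (p a e lo hi : ℤ) (hp : 0 < p) (h1 : p * e ≤ a) (h2 : a < p * e + p)
    (hlo : lo * p ≤ a) (hhi : a < hi * p) : lo ≤ e ∧ e < hi := by
  constructor
  · by_contra! h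
    have : p * (e + 1) ≤ p * lo := mul_le_mul_of_nonneg_left (by omega) hp.le
    nlinarith
  · by_contra! h
    have : p * hi ≤ p * e := mul_le_mul_of_nonneg_left h hp.le
    nlinarith

lemma phi_case0 (p r s f1 f2 f3 g1 g2 g3 : ℤ) (hp : 0 < p) (hs0 : 0 ≤ s) (hs1 : s < p)
    (hr0 : 14 * p ≤ 168 * r) (hr1 : 168 * r < 36 * p)
    (a1 : p * f1 ≤ s - 3 * r) (a2 : s - 3 * r < p * f1 + p)
    (b1 : p * f2 ≤ s - 5 * r) (b2 : s - 5 * r < p * f2 + p)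
    (c1 : p * f3 ≤ s - 7 * r) (c2 : s - 7 * r < p * f3 + p)
    (d1 : p * g1 ≤ 6 * r) (d2 : 6 * r < p * g1 + p)
    (e1 : p * g2 ≤ 10 * r) (e2 : 10 * r < p * g2 + p)
    (h1 : p * g3 ≤ 14 * r) (h2 : 14 * r < p * g3 + p)
    (i1 : s + 3 * r < p * f1 + p * g1 + p) (i2 : s + 5 * r < p * f2 + p * g2 + p)
    (i3 : s + 7 * r < p * f3 + p * g3 + p) : False := by
  obtain ⟨l0, u0⟩ := div_bd p _ g1 (0) (2) hp d1 d2 (by linarith) (by linarith)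
  obtain ⟨l1, u1⟩ := div_bd p _ g2 (0) (3) hp e1 e2 (by linarith) (by linarith)
  obtain ⟨l2, u2⟩ := div_bd p _ g3 (1) (3) hp h1 h2 (by linarith) (by linarith)
  obtain ⟨l3, u3⟩ := div_bd p _ f1 (-1) (1) hp a1 a2 (by linarith) (by linarith)
  obtain ⟨l4, u4⟩ := div_bd p _ f2 (-2) (1) hp b1 b2 (by linarith) (by linarith)
  obtain ⟨l5, u5⟩ := div_bd p _ f3 (-2) (1) hp c1 c2 (by linarith) (by linarith)
  interval_cases g1 <;> interval_cases f1 <;> try omega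
  all_goals (interval_cases g2 <;> interval_cases f2 <;> try omega)
  all_goals (interval_cases g3 <;> interval_cases f3 <;> try omega)

lemma phi_case1 (p r s f1 f2 f3 g1 g2 g3 : ℤ) (hp : 0 < p) (hs0 : 0 ≤ s) (hs1 : s < p)
    (hr0 : 42 * p ≤ 168 * r) (hr1 : 168 * r < 60 * p)
    (a1 : p * f1 ≤ s - 3 * r) (a2 : s - 3 * r < p * f1 + p)
    (b1 : p * f2 ≤ s - 5 * r) (b2 : s - 5 * r < p * f2 + p)
    (c1 : p * f3 ≤ s - 7 * r) (c2 : s - 7 * r < p * f3 + p)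
    (d1 : p * g1 ≤ 6 * r) (d2 : 6 * r < p * g1 + p)
    (e1 : p * g2 ≤ 10 * r) (e2 : 10 * r < p * g2 + p)
    (h1 : p * g3 ≤ 14 * r) (h2 : 14 * r < p * g3 + p)
    (i1 : s + 3 * r < p * f1 + p * g1 + p) (i2 : s + 5 * r < p * f2 + p * g2 + p)
    (i3 : s + 7 * r < p * f3 + p * g3 + p) : False := by
  obtain ⟨l0, u0⟩ := div_bd p _ g1 (1) (3) hp d1 d2 (by linarith) (by linarith)
  obtain ⟨l1, u1⟩ := div_bd p _ g2 (2) (4) hp e1 e2 (by linarith) (by linarith)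
  obtain ⟨l2, u2⟩ := div_bd p _ g3 (3) (5) hp h1 h2 (by linarith) (by linarith)
  obtain ⟨l3, u3⟩ := div_bd p _ f1 (-2) (1) hp a1 a2 (by linarith) (by linarith)
  obtain ⟨l4, u4⟩ := div_bd p _ f2 (-2) (0) hp b1 b2 (by linarith) (by linarith)
  obtain ⟨l5, u5⟩ := div_bd p _ f3 (-3) (0) hp c1 c2 (by linarith) (by linarith)
  interval_cases g1 <;> interval_cases f1 <;> try omega
  all_goals (interval_cases g2 <;> interval_cases f2 <;> try omega)
  all_goals (interval_cases g3 <;> interval_cases f3 <;> try omega)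

lemma phi_case2 (p r s f1 f2 f3 g1 g2 g3 : ℤ) (hp : 0 < p) (hs0 : 0 ≤ s) (hs1 : s < p)
    (hr0 : 63 * p ≤ 168 * r) (hr1 : 168 * r < 72 * p)
    (a1 : p * f1 ≤ s - 3 * r) (a2 : s - 3 * r < p * f1 + p)
    (b1 : p * f2 ≤ s - 5 * r) (b2 : s - 5 * r < p * f2 + p)
    (c1 : p * f3 ≤ s - 7 * r) (c2 : s - 7 * r < p * f3 + p)
    (d1 : p * g1 ≤ 6 * r) (d2 : 6 * r < p * g1 + p)
    (e1 : p * g2 ≤ 10 * r) (e2 : 10 * r < p * g2 + p)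
    (h1 : p * g3 ≤ 14 * r) (h2 : 14 * r < p * g3 + p)
    (i1 : s + 3 * r < p * f1 + p * g1 + p) (i2 : s + 5 * r < p * f2 + p * g2 + p)
    (i3 : s + 7 * r < p * f3 + p * g3 + p) : False := by
  obtain ⟨l0, u0⟩ := div_bd p _ g1 (2) (3) hp d1 d2 (by linarith) (by linarith)
  obtain ⟨l1, u1⟩ := div_bd p _ g2 (3) (5) hp e1 e2 (by linarith) (by linarith)
  obtain ⟨l2, u2⟩ := div_bd p _ g3 (5) (6) hp h1 h2 (by linarith) (by linarith)
  obtain ⟨l3, u3⟩ := div_bd p _ f1 (-2) (0) hp a1 a2 (by linarith) (by linarith)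
  obtain ⟨l4, u4⟩ := div_bd p _ f2 (-3) (0) hp b1 b2 (by linarith) (by linarith)
  obtain ⟨l5, u5⟩ := div_bd p _ f3 (-3) (-1) hp c1 c2 (by linarith) (by linarith)
  interval_cases g1 <;> interval_cases f1 <;> try omega
  all_goals (interval_cases g2 <;> interval_cases f2 <;> try omega)
  all_goals (interval_cases g3 <;> interval_cases f3 <;> try omega)

lemma phi_case3 (p r s f1 f2 f3 g1 g2 g3 : ℤ) (hp : 0 < p) (hs0 : 0 ≤ s) (hs1 : s < p)
    (hr0 : 98 * p ≤ 168 * r) (hr1 : 168 * r < 120 * p)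
    (a1 : p * f1 ≤ s - 3 * r) (a2 : s - 3 * r < p * f1 + p)
    (b1 : p * f2 ≤ s - 5 * r) (b2 : s - 5 * r < p * f2 + p)
    (c1 : p * f3 ≤ s - 7 * r) (c2 : s - 7 * r < p * f3 + p)
    (d1 : p * g1 ≤ 6 * r) (d2 : 6 * r < p * g1 + p)
    (e1 : p * g2 ≤ 10 * r) (e2 : 10 * r < p * g2 + p)
    (h1 : p * g3 ≤ 14 * r) (h2 : 14 * r < p * g3 + p)
    (i1 : s + 3 * r < p * f1 + p * g1 + p) (i2 : s + 5 * r < p * f2 + p * g2 + p)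
    (i3 : s + 7 * r < p * f3 + p * g3 + p) : False := by
  obtain ⟨l0, u0⟩ := div_bd p _ g1 (3) (5) hp d1 d2 (by linarith) (by linarith)
  obtain ⟨l1, u1⟩ := div_bd p _ g2 (5) (8) hp e1 e2 (by linarith) (by linarith)
  obtain ⟨l2, u2⟩ := div_bd p _ g3 (8) (10) hp h1 h2 (by linarith) (by linarith)
  obtain ⟨l3, u3⟩ := div_bd p _ f1 (-3) (0) hp a1 a2 (by linarith) (by linarith)
  obtain ⟨l4, u4⟩ := div_bd p _ f2 (-4) (-1) hp b1 b2 (by linarith) (by linarith)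
  obtain ⟨l5, u5⟩ := div_bd p _ f3 (-5) (-3) hp c1 c2 (by linarith) (by linarith)
  interval_cases g1 <;> interval_cases f1 <;> try omega
  all_goals (interval_cases g2 <;> interval_cases f2 <;> try omega)
  all_goals (interval_cases g3 <;> interval_cases f3 <;> try omega)

lemma phi_case4 (p r s f1 f2 f3 g1 g2 g3 : ℤ) (hp : 0 < p) (hs0 : 0 ≤ s) (hs1 : s < p)
    (hr0 : 126 * p ≤ 168 * r) (hr1 : 168 * r < 144 * p)
    (a1 : p * f1 ≤ s - 3 * r) (a2 : s - 3 * r < p * f1 + p)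
    (b1 : p * f2 ≤ s - 5 * r) (b2 : s - 5 * r < p * f2 + p)
    (c1 : p * f3 ≤ s - 7 * r) (c2 : s - 7 * r < p * f3 + p)
    (d1 : p * g1 ≤ 6 * r) (d2 : 6 * r < p * g1 + p)
    (e1 : p * g2 ≤ 10 * r) (e2 : 10 * r < p * g2 + p)
    (h1 : p * g3 ≤ 14 * r) (h2 : 14 * r < p * g3 + p)
    (i1 : s + 3 * r < p * f1 + p * g1 + p) (i2 : s + 5 * r < p * f2 + p * g2 + p)
    (i3 : s + 7 * r < p * f3 + p * g3 + p) : False := by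
  obtain ⟨l0, u0⟩ := div_bd p _ g1 (4) (6) hp d1 d2 (by linarith) (by linarith)
  obtain ⟨l1, u1⟩ := div_bd p _ g2 (7) (9) hp e1 e2 (by linarith) (by linarith)
  obtain ⟨l2, u2⟩ := div_bd p _ g3 (10) (12) hp h1 h2 (by linarith) (by linarith)
  obtain ⟨l3, u3⟩ := div_bd p _ f1 (-3) (-1) hp a1 a2 (by linarith) (by linarith)
  obtain ⟨l4, u4⟩ := div_bd p _ f2 (-5) (-2) hp b1 b2 (by linarith) (by linarith)
  obtain ⟨l5, u5⟩ := div_bd p _ f3 (-6) (-4) hp c1 c2 (by linarith) (by linarith)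
  interval_cases g1 <;> interval_cases f1 <;> try omega
  all_goals (interval_cases g2 <;> interval_cases f2 <;> try omega)
  all_goals (interval_cases g3 <;> interval_cases f3 <;> try omega)

lemma phi_case5 (p r s f1 f2 f3 g1 g2 g3 : ℤ) (hp : 0 < p) (hs0 : 0 ≤ s) (hs1 : s < p)
    (hr0 : 147 * p ≤ 168 * r) (hr1 : 168 * r < 156 * p)
    (a1 : p * f1 ≤ s - 3 * r) (a2 : s - 3 * r < p * f1 + p)
    (b1 : p * f2 ≤ s - 5 * r) (b2 : s - 5 * r < p * f2 + p)
    (c1 : p * f3 ≤ s - 7 * r) (c2 : s - 7 * r < p * f3 + p)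
    (d1 : p * g1 ≤ 6 * r) (d2 : 6 * r < p * g1 + p)
    (e1 : p * g2 ≤ 10 * r) (e2 : 10 * r < p * g2 + p)
    (h1 : p * g3 ≤ 14 * r) (h2 : 14 * r < p * g3 + p)
    (i1 : s + 3 * r < p * f1 + p * g1 + p) (i2 : s + 5 * r < p * f2 + p * g2 + p)
    (i3 : s + 7 * r < p * f3 + p * g3 + p) : False := by
  obtain ⟨l0, u0⟩ := div_bd p _ g1 (5) (6) hp d1 d2 (by linarith) (by linarith)
  obtain ⟨l1, u1⟩ := div_bd p _ g2 (8) (10) hp e1 e2 (by linarith) (by linarith)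
  obtain ⟨l2, u2⟩ := div_bd p _ g3 (12) (13) hp h1 h2 (by linarith) (by linarith)
  obtain ⟨l3, u3⟩ := div_bd p _ f1 (-3) (-1) hp a1 a2 (by linarith) (by linarith)
  obtain ⟨l4, u4⟩ := div_bd p _ f2 (-5) (-3) hp b1 b2 (by linarith) (by linarith)
  obtain ⟨l5, u5⟩ := div_bd p _ f3 (-7) (-5) hp c1 c2 (by linarith) (by linarith)
  interval_cases g1 <;> interval_cases f1 <;> try omega
  all_goals (interval_cases g2 <;> interval_cases f2 <;> try omega)
  all_goals (interval_cases g3 <;> interval_cases f3 <;> try omega)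
end PartC1

section PartC2
open Polynomial

def piz (c : ℤ) (m : ℕ) : ℤ := ∏ i ∈ Finset.range m, (c - i)
def pid (c : ℤ) (m : ℕ) : ℤ := ∑ j ∈ Finset.range m, ∏ i ∈ (Finset.range m).erase j, (c - i)

lemma cb_val (a v : ℕ) : (cb a).eval (v : ℝ) * ((2 * a).factorial : ℝ) = (piz (v + a) (2 * a) : ℝ) := by
  rw [cb_eval, piz, mul_comm, mul_inv_cancel_left₀ (by positivity)]
  push_cast
  apply Finset.prod_congr rfl
  intro i _; ring

lemma cb_der (a v : ℕ) : (cb a).derivative.eval (v : ℝ) * ((2 * a).factorial : ℝ) = (pid (v + a) (2 * a) : ℝ) := by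
  unfold cb pid
  rw [derivative_C_mul, eval_mul, eval_C, mul_comm, mul_inv_cancel_left₀ (by positivity)]
  rw [derivative_prod_finset, eval_finsetSum]
  push_cast
  apply Finset.sum_congr rfl
  intro j _
  simp only [derivative_add, derivative_X, derivative_C, add_zero, mul_one, eval_prod, eval_add, eval_X, eval_C]
  apply Finset.prod_congr rfl
  intro i _; ring

lemma kchoose_dvd (d m k n : ℕ) (hd : ∀ j, 1 ≤ j → j ≤ n → j ∣ d) (hk : 1 ≤ k) (h : m + k ≤ n) :
    k * (m + k).choose k ∣ d := by
  have key : ∀ m k : ℕ, 1 ≤ k → m + k ≤ n → ∃ z : ℤ, (d : ℚ) / (k * (m + k).choose k) = z := by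
    intro m
    induction m with
    | zero =>
      intro k hk h
      obtain ⟨z, hz⟩ := hd k hk (by omega)
      refine ⟨z, ?_⟩
      have : (k : ℚ) ≠ 0 := by positivity
      rw [hz]; simp; field_simp
    | succ m ih =>
      intro k hk h
      obtain ⟨z, hz⟩ := ih k hk (by omega)
      obtain ⟨w, hw⟩ := ih (k + 1) (by omega) (by omega)
      refine ⟨z - w, ?_⟩
      push_cast
      rw [← hz, ← hw]
      have e1 := Nat.add_one_mul_choose_eq (m + k) k
      have e3 := Nat.choose_succ_right_eq (m + k + 1) k
      rw [show m + k + 1 - k = m + 1 by omega] at e3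
      have p1 : 0 < (m + k).choose k := Nat.choose_pos (by omega)
      have p2 : 0 < (m + k + 1).choose (k + 1) := Nat.choose_pos (by omega)
      have p3 : 0 < (m + k + 1).choose k := Nat.choose_pos (by omega)
      rw [show m + 1 + k = m + k + 1 by ring, show m + (k + 1) = m + k + 1 by ring]
      set A := (m + k).choose k
      set B := (m + k + 1).choose (k + 1)
      set C' := (m + k + 1).choose k
      have e1' : ((m : ℚ) + k + 1) * A = B * (k + 1) := by exact_mod_cast e1
      have e3' : (B : ℚ) * (k + 1) = C' * (m + 1) := by exact_mod_cast e3
      have q1 : (A : ℚ) ≠ 0 := by positivity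
      have q2 : (B : ℚ) ≠ 0 := by positivity
      have q3 : (C' : ℚ) ≠ 0 := by positivity
      have q4 : (k : ℚ) ≠ 0 := by positivity
      have q5 : (m : ℚ) + 1 ≠ 0 := by positivity
      have q6 : (k : ℚ) + 1 ≠ 0 := by positivity
      have hB : (B : ℚ) = C' * (m + 1) / (k + 1) := by field_simp; exact e3'
      have hA : (A : ℚ) = C' * (m + 1) / (m + k + 1) := by
        field_simp; rw [← e3', ← e1']; ring
      rw [hB, hA]
      push_cast
      field_simp
      ring
  obtain ⟨z, hz⟩ := key m k hk h
  have p1 : 0 < (m + k).choose k := Nat.choose_pos (by omega)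
  have hne : ((k : ℚ) * (m + k).choose k) ≠ 0 := by positivity
  rw [div_eq_iff hne] at hz
  have : ((d : ℕ) : ℤ) = z * ((k * (m + k).choose k : ℕ) : ℤ) := by
    have : ((d : ℤ) : ℚ) = ((z * ((k * (m + k).choose k : ℕ) : ℤ) : ℤ) : ℚ) := by
      push_cast; exact_mod_cast hz
    exact_mod_cast this
  exact Int.natCast_dvd_natCast.1 (Dvd.intro_left z this.symm)

lemma fact_dvd_desc (k : ℕ) (c : ℤ) : (k.factorial : ℤ) ∣ ∏ i ∈ Finset.range k, (c - i) := by
  rw [← Finset.prod_range_reflect]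
  have := Nat.factorial_coe_dvd_prod k (c - (k - 1 : ℤ))
  convert this using 1
  apply Finset.prod_congr rfl
  intro i hi
  rw [Finset.mem_range] at hi
  push_cast [Nat.cast_sub (show 1 ≤ k by omega), Nat.cast_sub (show i ≤ k - 1 by omega)]
  ring

lemma erase_prod (f : ℕ → ℤ) (m j : ℕ) (h : j < m) :
    ∏ i ∈ (Finset.range m).erase j, f i =
      (∏ i ∈ Finset.range j, f i) * ∏ i ∈ Finset.range (m - 1 - j), f (j + 1 + i) := by
  have : (Finset.range m).erase j = Finset.range j ∪ Finset.Ico (j + 1) m := by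
    ext i; simp only [Finset.mem_erase, Finset.mem_range, Finset.mem_union, Finset.mem_Ico]; omega
  rw [this, Finset.prod_union, Finset.prod_Ico_eq_prod_range]
  · rw [show m - (j + 1) = m - 1 - j by omega]
  · rw [Finset.disjoint_left]; intro i; simp only [Finset.mem_range, Finset.mem_Ico]; omega

lemma pid_dvd (d m n : ℕ) (hmn : m ≤ n) (hd : ∀ j, 1 ≤ j → j ≤ n → j ∣ d) (c : ℤ) :
    (m.factorial : ℤ) ∣ d * pid c m := by
  unfold pid
  rw [Finset.mul_sum]
  apply Finset.dvd_sum
  intro j hj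
  rw [Finset.mem_range] at hj
  rw [erase_prod _ _ _ hj]
  have h1 := fact_dvd_desc j c
  have h2 : (((m - 1 - j).factorial : ℕ) : ℤ) ∣ ∏ i ∈ Finset.range (m - 1 - j), (c - ((j + 1 + i : ℕ) : ℤ)) := by
    convert fact_dvd_desc (m - 1 - j) (c - (j + 1)) using 1
    apply Finset.prod_congr rfl
    intro i _; push_cast; ring
  have h3 := kchoose_dvd d (m - 1 - j) (j + 1) n hd (by omega) (by omega)
  have h4 : m.factorial = ((j + 1) * (m - 1 - j + (j + 1)).choose (j + 1)) * (j.factorial * (m - 1 - j).factorial) := by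
    have h5 := Nat.choose_mul_factorial_mul_factorial (n := m) (k := j + 1) (by omega)
    rw [show m - 1 - j + (j + 1) = m by omega, ← h5, Nat.factorial_succ,
      show m - (j + 1) = m - 1 - j by omega]
    ring
  rw [h4]
  push_cast
  exact mul_dvd_mul (by exact_mod_cast h3) (mul_dvd_mul h1 h2)

lemma pow_card_dvd (p : ℤ) (s : Finset ℕ) (f : ℕ → ℤ) :
    p ^ (s.filter (fun i => p ∣ f i)).card ∣ ∏ i ∈ s, f i := by
  refine dvd_trans ?_ (Finset.prod_dvd_prod_of_subset _ _ _ (Finset.filter_subset (fun i => p ∣ f i) s))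
  rw [← Finset.prod_const]
  apply Finset.prod_dvd_prod_of_dvd
  intro i hi
  exact (Finset.mem_filter.1 hi).2

lemma ediv_step (p x : ℤ) (hp : 0 < p) : x / p - (x - 1) / p = if p ∣ x then 1 else 0 := by
  split_ifs with h
  · obtain ⟨k, rfl⟩ := h
    have h1 : p * k / p = k := Int.mul_ediv_cancel_left _ hp.ne'
    have h2 : (p * k - 1) / p = k - 1 := by
      refine (Int.ediv_emod_unique hp (r := p - 1)).2 ⟨by ring, by omega, by omega⟩ |>.1
    omega
  · have h1 := Int.emod_nonneg x hp.ne'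
    have h2 := Int.emod_lt_of_pos x hp
    have h3 : x % p ≠ 0 := fun h' => h (Int.dvd_of_emod_eq_zero h')
    have h4 := Int.mul_ediv_add_emod x p
    have h5 : (x - 1) / p = x / p :=
      ((Int.ediv_emod_unique hp (r := x % p - 1)).2 ⟨by linarith, by omega, by omega⟩).1
    omega

lemma count_mult (p c : ℤ) (hp : 0 < p) (m : ℕ) :
    (((Finset.range m).filter (fun i : ℕ => p ∣ c - (i : ℤ))).card : ℤ) = c / p - (c - m) / p := by
  induction m with
  | zero => simp
  | succ m ih =>
    have h := ediv_step p (c - m) hp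
    rw [Finset.range_add_one, Finset.filter_insert]
    push_cast
    rw [← sub_sub]
    split_ifs at h ⊢ with h'
    · rw [Finset.card_insert_of_notMem (by simp)]
      push_cast; rw [ih]; omega
    · rw [ih]; omega

lemma fact_val (p m : ℕ) [hp : Fact p.Prime] (h : m < p ^ 2) : padicValNat p m.factorial = m / p := by
  rw [padicValNat_factorial (b := 2) (Nat.log_lt_of_lt_pow' (by norm_num) h)]
  simp

lemma phi_all (p n v k : ℤ) (al be : ℤ) (hp : 0 < p)
    (hab : (al = 14 ∧ be = 36) ∨ (al = 42 ∧ be = 60) ∨ (al = 63 ∧ be = 72) ∨ (al = 98 ∧ be = 120) ∨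
      (al = 126 ∧ be = 144) ∨ (al = 147 ∧ be = 156))
    (h1 : (168 * k + al) * p ≤ 168 * n) (h2 : 168 * n < (168 * k + be) * p) :
    (2 * (3 * n)) / p + (2 * (5 * n)) / p + (2 * (7 * n)) / p + 1 ≤
      ((v + 3 * n) / p - (v - 3 * n) / p) + ((v + 5 * n) / p - (v - 5 * n) / p) +
      ((v + 7 * n) / p - (v - 7 * n) / p) := by
  have hdiv : ∀ a : ℤ, p * (a / p) ≤ a ∧ a < p * (a / p) + p := fun a =>
    ⟨Int.mul_ediv_self_le hp.ne', by linarith [Int.lt_mul_ediv_self_add (x := a) hp]⟩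
  have hsup : ∀ c : ℤ, (v - c) / p + (2 * c) / p ≤ (v + c) / p := by
    intro c
    rw [Int.le_ediv_iff_mul_le hp]
    have := (hdiv (v - c)).1
    have := (hdiv (2 * c)).1
    linarith
  by_contra! hcon
  have u1 := hsup (3 * n)
  have u2 := hsup (5 * n)
  have u3 := hsup (7 * n)
  have w1 : (v + 3 * n) / p = (v - 3 * n) / p + (2 * (3 * n)) / p := by omega
  have w2 : (v + 5 * n) / p = (v - 5 * n) / p + (2 * (5 * n)) / p := by omega
  have w3 : (v + 7 * n) / p = (v - 7 * n) / p + (2 * (7 * n)) / p := by omega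
  have i1 := (hdiv (v + 3 * n)).2
  have i2 := (hdiv (v + 5 * n)).2
  have i3 := (hdiv (v + 7 * n)).2
  rw [w1] at i1
  rw [w2] at i2
  rw [w3] at i3
  have hv := hdiv v
  have a := hdiv (v - 3 * n)
  have b := hdiv (v - 5 * n)
  have c := hdiv (v - 7 * n)
  have d := hdiv (2 * (3 * n))
  have e := hdiv (2 * (5 * n))
  have f := hdiv (2 * (7 * n))
  set l := v / p
  set F1 := (v - 3 * n) / p
  set F2 := (v - 5 * n) / p
  set F3 := (v - 7 * n) / p
  set G1 := (2 * (3 * n)) / p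
  set G2 := (2 * (5 * n)) / p
  set G3 := (2 * (7 * n)) / p
  rcases hab with ⟨rfl, rfl⟩ | ⟨rfl, rfl⟩ | ⟨rfl, rfl⟩ | ⟨rfl, rfl⟩ | ⟨rfl, rfl⟩ | ⟨rfl, rfl⟩
  · refine phi_case0 p (n - k * p) (v - p * l) (F1 + 3 * k - l) (F2 + 5 * k - l) (F3 + 7 * k - l)
      (G1 - 6 * k) (G2 - 10 * k) (G3 - 14 * k) hp ?_ ?_ ?_ ?_ ?_ ?_ ?_ ?_ ?_ ?_ ?_ ?_ ?_ ?_ ?_ ?_ ?_ ?_ ?_ <;>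
      linarith [hv.1, hv.2]
  · refine phi_case1 p (n - k * p) (v - p * l) (F1 + 3 * k - l) (F2 + 5 * k - l) (F3 + 7 * k - l)
      (G1 - 6 * k) (G2 - 10 * k) (G3 - 14 * k) hp ?_ ?_ ?_ ?_ ?_ ?_ ?_ ?_ ?_ ?_ ?_ ?_ ?_ ?_ ?_ ?_ ?_ ?_ ?_ <;>
      linarith [hv.1, hv.2]
  · refine phi_case2 p (n - k * p) (v - p * l) (F1 + 3 * k - l) (F2 + 5 * k - l) (F3 + 7 * k - l)
      (G1 - 6 * k) (G2 - 10 * k) (G3 - 14 * k) hp ?_ ?_ ?_ ?_ ?_ ?_ ?_ ?_ ?_ ?_ ?_ ?_ ?_ ?_ ?_ ?_ ?_ ?_ ?_ <;>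
      linarith [hv.1, hv.2]
  · refine phi_case3 p (n - k * p) (v - p * l) (F1 + 3 * k - l) (F2 + 5 * k - l) (F3 + 7 * k - l)
      (G1 - 6 * k) (G2 - 10 * k) (G3 - 14 * k) hp ?_ ?_ ?_ ?_ ?_ ?_ ?_ ?_ ?_ ?_ ?_ ?_ ?_ ?_ ?_ ?_ ?_ ?_ ?_ <;>
      linarith [hv.1, hv.2]
  · refine phi_case4 p (n - k * p) (v - p * l) (F1 + 3 * k - l) (F2 + 5 * k - l) (F3 + 7 * k - l)
      (G1 - 6 * k) (G2 - 10 * k) (G3 - 14 * k) hp ?_ ?_ ?_ ?_ ?_ ?_ ?_ ?_ ?_ ?_ ?_ ?_ ?_ ?_ ?_ ?_ ?_ ?_ ?_ <;>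
      linarith [hv.1, hv.2]
  · refine phi_case5 p (n - k * p) (v - p * l) (F1 + 3 * k - l) (F2 + 5 * k - l) (F3 + 7 * k - l)
      (G1 - 6 * k) (G2 - 10 * k) (G3 - 14 * k) hp ?_ ?_ ?_ ?_ ?_ ?_ ?_ ?_ ?_ ?_ ?_ ?_ ?_ ?_ ?_ ?_ ?_ ?_ ?_ <;>
      linarith [hv.1, hv.2]
end PartC2

section PartC3
open Polynomial

def alf : Fin 6 → ℕ := ![14, 42, 63, 98, 126, 147]
def bef : Fin 6 → ℕ := ![36, 60, 72, 120, 144, 156]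

def blockP (N : ℕ) (i : ℕ × Fin 6) : Finset ℕ :=
  (Finset.Ioc (840 * N / (168 * i.1 + bef i.2)) (840 * N / (168 * i.1 + alf i.2))).filter Nat.Prime

def goodP (N M : ℕ) : Finset ℕ :=
  (Finset.range M ×ˢ (Finset.univ : Finset (Fin 6))).biUnion (blockP N)

lemma alf_bef (t : Fin 6) : (alf t = 14 ∧ bef t = 36) ∨ (alf t = 42 ∧ bef t = 60) ∨ (alf t = 63 ∧ bef t = 72) ∨ (alf t = 98 ∧ bef t = 120) ∨
      (alf t = 126 ∧ bef t = 144) ∨ (alf t = 147 ∧ bef t = 156) := by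
  fin_cases t <;> simp [alf, bef]

lemma mem_blockP {N p : ℕ} {i : ℕ × Fin 6} (h : p ∈ blockP N i) : p.Prime ∧
    (168 * i.1 + alf i.2) * p ≤ 840 * N ∧ 840 * N < (168 * i.1 + bef i.2) * p := by
  unfold blockP at h
  rw [Finset.mem_filter, Finset.mem_Ioc] at h
  have hab := alf_bef i.2
  refine ⟨h.2, ?_, ?_⟩
  · have h3 := (Nat.le_div_iff_mul_le (by omega)).1 h.1.2
    rwa [mul_comm p] at h3
  · have h3 := (Nat.div_lt_iff_lt_mul (by omega)).1 h.1.1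
    rwa [mul_comm p] at h3

lemma block_disj (N : ℕ) (i j : ℕ × Fin 6) (h : i ≠ j) : Disjoint (blockP N i) (blockP N j) := by
  rw [Finset.disjoint_left]
  intro p hi hj
  obtain ⟨hp, h1, h2⟩ := mem_blockP hi
  obtain ⟨-, h3, h4⟩ := mem_blockP hj
  have e1 : 168 * i.1 + alf i.2 < 168 * j.1 + bef j.2 := lt_of_mul_lt_mul_right (h1.trans_lt h4) (by omega)
  have e2 : 168 * j.1 + alf j.2 < 168 * i.1 + bef i.2 := lt_of_mul_lt_mul_right (h3.trans_lt h2) (by omega)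
  obtain ⟨k, s⟩ := i
  obtain ⟨l, t⟩ := j
  simp only at e1 e2
  have hs := alf_bef s
  have ht := alf_bef t
  have hkl : k = l := by omega
  subst hkl
  apply h
  congr 1
  fin_cases s <;> fin_cases t <;> simp [alf, bef] at e1 e2 ⊢

lemma RR_int (N v : ℕ) : ∃ z : ℤ, (RR N).eval (v : ℝ) = z := by
  unfold RR
  rw [eval_mul, eval_mul, cb_eval_nat, cb_eval_nat, cb_eval_nat]
  exact ⟨((v + 15 * N).choose (2 * (15 * N)) * (v + 25 * N).choose (2 * (25 * N)) * (v + 35 * N).choose (2 * (35 * N)) : ℕ), by push_cast; ring⟩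

lemma RRd_int (N v : ℕ) : ∃ z : ℤ, (Nat.lcmUpto (70 * N) : ℝ) * (RR N).derivative.eval (v : ℝ) = z := by
  have hd : ∀ j, 1 ≤ j → j ≤ 70 * N → j ∣ Nat.lcmUpto (70 * N) := fun j h1 h2 =>
    Finset.dvd_lcm (f := id) (Finset.mem_Icc.2 ⟨h1, h2⟩)
  have key : ∀ a : ℕ, a ≤ 35 * N → ∃ z : ℤ, (Nat.lcmUpto (70 * N) : ℝ) * (cb a).derivative.eval (v : ℝ) = z := by
    intro a ha
    obtain ⟨z, hz⟩ := pid_dvd _ (2 * a) (70 * N) (by omega) hd (v + a)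
    refine ⟨z, ?_⟩
    have h1 := cb_der a v
    have hne : ((2 * a).factorial : ℝ) ≠ 0 := by positivity
    apply mul_right_cancel₀ hne
    rw [mul_assoc, h1]
    have : (((Nat.lcmUpto (70 * N) : ℤ) * pid (v + a) (2 * a) : ℤ) : ℝ) = (((2 * a).factorial : ℤ) * z : ℤ) := by
      rw [hz]
    push_cast at this
    rw [this]; ring
  obtain ⟨z1, h1⟩ := key (15 * N) (by omega)
  obtain ⟨z2, h2⟩ := key (25 * N) (by omega)
  obtain ⟨z3, h3⟩ := key (35 * N) le_rfl
  refine ⟨z1 * (v + 25 * N).choose (2 * (25 * N)) * (v + 35 * N).choose (2 * (35 * N)) +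
    z2 * (v + 15 * N).choose (2 * (15 * N)) * (v + 35 * N).choose (2 * (35 * N)) +
    z3 * (v + 15 * N).choose (2 * (15 * N)) * (v + 25 * N).choose (2 * (25 * N)), ?_⟩
  push_cast
  rw [← h1, ← h2, ← h3, ← cb_eval_nat, ← cb_eval_nat, ← cb_eval_nat]
  unfold RR
  simp only [derivative_mul, eval_mul, eval_add]
  ring

lemma pid_pow (p : ℤ) (c : ℤ) (m : ℕ) :
    p ^ (((Finset.range m).filter (fun i : ℕ => p ∣ c - (i : ℤ))).card - 1) ∣ pid c m := by
  unfold pid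
  apply Finset.dvd_sum
  intro j hj
  refine dvd_trans (pow_dvd_pow p ?_) (pow_card_dvd p ((Finset.range m).erase j) (fun i => c - (i : ℤ)))
  rw [Finset.filter_erase]
  exact Finset.pred_card_le_card_erase

lemma RRd_dvd (N M v p : ℕ) (hM : 70 * M ^ 2 ≤ 25 * N) (hN : 0 < N) (hp : p ∈ goodP N M) (z : ℤ)
    (hz : (Nat.lcmUpto (70 * N) : ℝ) * (RR N).derivative.eval (v : ℝ) = z) : (p : ℤ) ∣ z := by
  unfold goodP at hp
  rw [Finset.mem_biUnion] at hp
  obtain ⟨⟨k, t⟩, hkt, hpb⟩ := hp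
  rw [Finset.mem_product, Finset.mem_range] at hkt
  have hkM : k < M := hkt.1
  obtain ⟨hpr, h1, h2⟩ := mem_blockP hpb
  simp only at h1 h2
  haveI : Fact p.Prime := ⟨hpr⟩
  have hab := alf_bef t
  have hp0 : 0 < p := hpr.pos
  -- size
  have hpM : 5 * N < M * p := by
    have : (168 * k + bef t) * p ≤ (168 * M) * p := Nat.mul_le_mul_right _ (by omega)
    nlinarith
  have hsq : 70 * N < p ^ 2 := by
    have e1 : 25 * N ^ 2 < M ^ 2 * p ^ 2 := by nlinarith
    by_contra! hcon
    have e2 : M ^ 2 * p ^ 2 ≤ M ^ 2 * (70 * N) := Nat.mul_le_mul_left _ hcon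
    have e3 : (70 * M ^ 2) * N ≤ 25 * N * N := Nat.mul_le_mul_right _ hM
    nlinarith
  have hple : p ≤ 70 * N := by
    have : 14 * p ≤ (168 * k + alf t) * p := Nat.mul_le_mul_right _ (by omega)
    omega
  have hpd : p ∣ Nat.lcmUpto (70 * N) := Finset.dvd_lcm (f := id) (Finset.mem_Icc.2 ⟨hp0, hple⟩)
  have hphi := phi_all (p : ℤ) (5 * N) v k (alf t) (bef t) (by omega) (by omega)
    (by have := h1; zify at this; linarith) (by have := h2; zify at this; linarith)
  -- counts
  have cnt : ∀ a : ℕ, ((((Finset.range (2 * a)).filter (fun i : ℕ => (p : ℤ) ∣ ((v + a : ℤ)) - (i : ℤ))).card : ℕ) : ℤ)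
      = (v + a) / p - (v - a) / p := by
    intro a
    rw [count_mult p _ (by omega)]
    congr 2; push_cast; ring
  have d1 := cnt (15 * N)
  have d2 := cnt (25 * N)
  have d3 := cnt (35 * N)
  have p1 := pow_card_dvd (p : ℤ) (Finset.range (2 * (15 * N))) (fun i => ((v : ℤ) + (15 * N : ℕ)) - (i : ℤ))
  have p2 := pow_card_dvd (p : ℤ) (Finset.range (2 * (25 * N))) (fun i => ((v : ℤ) + (25 * N : ℕ)) - (i : ℤ))
  have p3 := pow_card_dvd (p : ℤ) (Finset.range (2 * (35 * N))) (fun i => ((v : ℤ) + (35 * N : ℕ)) - (i : ℤ))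
  have q1 := pid_pow (p : ℤ) ((v : ℤ) + (15 * N : ℕ)) (2 * (15 * N))
  have q2 := pid_pow (p : ℤ) ((v : ℤ) + (25 * N : ℕ)) (2 * (25 * N))
  have q3 := pid_pow (p : ℤ) ((v : ℤ) + (35 * N : ℕ)) (2 * (35 * N))
  change _ ∣ piz _ _ at p1
  change _ ∣ piz _ _ at p2
  change _ ∣ piz _ _ at p3
  set m1 := ((Finset.range (2 * (15 * N))).filter (fun i : ℕ => (p : ℤ) ∣ ((v : ℤ) + (15 * N : ℕ)) - (i : ℤ))).card
  set m2 := ((Finset.range (2 * (25 * N))).filter (fun i : ℕ => (p : ℤ) ∣ ((v : ℤ) + (25 * N : ℕ)) - (i : ℤ))).card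
  set m3 := ((Finset.range (2 * (35 * N))).filter (fun i : ℕ => (p : ℤ) ∣ ((v : ℤ) + (35 * N : ℕ)) - (i : ℤ))).card
  have f1 := fact_val p (2 * (15 * N)) (by omega)
  have f2 := fact_val p (2 * (25 * N)) (by omega)
  have f3 := fact_val p (2 * (35 * N)) (by omega)
  set H := (2 * (15 * N)).factorial * (2 * (25 * N)).factorial * (2 * (35 * N)).factorial with hH
  have g1 : (2 * (15 * N)).factorial ≠ 0 := Nat.factorial_ne_zero _
  have g2 : (2 * (25 * N)).factorial ≠ 0 := Nat.factorial_ne_zero _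
  have g3 : (2 * (35 * N)).factorial ≠ 0 := Nat.factorial_ne_zero _
  have hH0 : H ≠ 0 := mul_ne_zero (mul_ne_zero g1 g2) g3
  have hHv : padicValNat p H = 2 * (15 * N) / p + 2 * (25 * N) / p + 2 * (35 * N) / p := by
    rw [hH, padicValNat.mul (mul_ne_zero g1 g2) g3, padicValNat.mul g1 g2, f1, f2, f3]
  have hm : padicValNat p H + 1 ≤ m1 + m2 + m3 := by
    rw [hHv]
    zify
    rw [d1, d2, d3]
    push_cast
    have r1 : (2 * (3 * (5 * (N : ℤ)))) = 2 * (15 * N) := by ring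
    have r2 : (2 * (5 * (5 * (N : ℤ)))) = 2 * (25 * N) := by ring
    have r3 : (2 * (7 * (5 * (N : ℤ)))) = 2 * (35 * N) := by ring
    have r4 : (3 * (5 * (N : ℤ))) = 15 * N := by ring
    have r5 : (5 * (5 * (N : ℤ))) = 25 * N := by ring
    have r6 : (7 * (5 * (N : ℤ))) = 35 * N := by ring
    rw [r1, r2, r3, r4, r5, r6] at hphi
    linarith
  set K : ℤ := pid ((v : ℤ) + (15 * N : ℕ)) (2 * (15 * N)) * piz ((v : ℤ) + (25 * N : ℕ)) (2 * (25 * N)) * piz ((v : ℤ) + (35 * N : ℕ)) (2 * (35 * N))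
    + piz ((v : ℤ) + (15 * N : ℕ)) (2 * (15 * N)) * pid ((v : ℤ) + (25 * N : ℕ)) (2 * (25 * N)) * piz ((v : ℤ) + (35 * N : ℕ)) (2 * (35 * N))
    + piz ((v : ℤ) + (15 * N : ℕ)) (2 * (15 * N)) * piz ((v : ℤ) + (25 * N : ℕ)) (2 * (25 * N)) * pid ((v : ℤ) + (35 * N : ℕ)) (2 * (35 * N)) with hK
  have hKd : (p : ℤ) ^ (padicValNat p H) ∣ K := by
    have aux : ∀ x y w : ℕ, padicValNat p H ≤ x + y + w → ∀ A B C : ℤ, (p : ℤ) ^ x ∣ A → (p : ℤ) ^ y ∣ B →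
        (p : ℤ) ^ w ∣ C → (p : ℤ) ^ (padicValNat p H) ∣ A * B * C := by
      intro x y w h A B C hA hB hC
      refine dvd_trans (pow_dvd_pow _ h) ?_
      rw [pow_add, pow_add]
      exact mul_dvd_mul (mul_dvd_mul hA hB) hC
    rw [hK]
    refine dvd_add (dvd_add ?_ ?_) ?_
    · exact aux _ _ _ (by omega) _ _ _ q1 p2 p3
    · exact aux _ _ _ (by omega) _ _ _ p1 q2 p3
    · exact aux _ _ _ (by omega) _ _ _ p1 p2 q3
  have hzH : z * H = (Nat.lcmUpto (70 * N) : ℤ) * K := by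
    have c1 := cb_val (15 * N) v
    have c2 := cb_val (25 * N) v
    have c3 := cb_val (35 * N) v
    have c4 := cb_der (15 * N) v
    have c5 := cb_der (25 * N) v
    have c6 := cb_der (35 * N) v
    have : (((z * H : ℤ)) : ℝ) = (((Nat.lcmUpto (70 * N) : ℤ) * K : ℤ) : ℝ) := by
      rw [hK, hH]
      push_cast at c1 c2 c3 c4 c5 c6 ⊢
      rw [← c1, ← c2, ← c3, ← c4, ← c5, ← c6, ← hz]
      unfold RR
      simp only [derivative_mul, eval_mul, eval_add]
      ring
    exact_mod_cast this
  have hdv : (p : ℤ) ^ (padicValNat p H + 1) ∣ z * H := by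
    rw [hzH, pow_succ, mul_comm]
    exact mul_dvd_mul (by exact_mod_cast hpd) hKd
  obtain ⟨H', hH'⟩ : p ^ (padicValNat p H) ∣ H := pow_padicValNat_dvd
  have hnd : ¬ p ∣ H' := by
    rintro ⟨w, hw⟩
    apply pow_succ_padicValNat_not_dvd hH0 (p := p)
    rw [pow_succ]
    exact ⟨w, by rw [mul_assoc, ← hw]; exact hH'⟩
  have hz2 : z * H = (p : ℤ) ^ (padicValNat p H) * (z * H') := by
    have : (H : ℤ) = (p : ℤ) ^ (padicValNat p H) * H' := by exact_mod_cast hH'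
    conv_lhs => rw [this]
    ring
  rw [hz2, pow_succ] at hdv
  have hdv2 := Int.dvd_of_mul_dvd_mul_left (by positivity) hdv
  rcases (Nat.prime_iff_prime_int.1 hpr).dvd_or_dvd hdv2 with h | h
  · exact h
  · exact absurd (by exact_mod_cast h) hnd

lemma goodP_prime {N M p : ℕ} (hp : p ∈ goodP N M) : p.Prime := by
  unfold goodP at hp
  rw [Finset.mem_biUnion] at hp
  obtain ⟨i, -, hi⟩ := hp
  exact (mem_blockP hi).1

lemma goodP_le {N M p : ℕ} (hp : p ∈ goodP N M) : p ≤ 70 * N := by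
  unfold goodP at hp
  rw [Finset.mem_biUnion] at hp
  obtain ⟨i, -, hi⟩ := hp
  have h := (mem_blockP hi).2.1
  have h0 := alf_bef i.2
  have : 14 * p ≤ (168 * i.1 + alf i.2) * p := Nat.mul_le_mul_right _ (by omega)
  omega

noncomputable def DD (N M : ℕ) : ℝ := (Nat.lcmUpto (70 * N) : ℝ) / ∏ p ∈ goodP N M, (p : ℝ)

lemma prod_goodP_dvd (N M : ℕ) (z : ℤ) (h : ∀ p ∈ goodP N M, (p : ℤ) ∣ z) :
    ∃ w : ℤ, (z : ℝ) / ∏ p ∈ goodP N M, (p : ℝ) = w := by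
  have : (∏ p ∈ goodP N M, (p : ℤ)) ∣ z := by
    apply Finset.prod_dvd_of_coprime
    · intro p hp q hq hpq
      rw [Function.onFun, Nat.isCoprime_iff_coprime]
      exact (Nat.coprime_primes (goodP_prime hp) (goodP_prime hq)).2 hpq
    · exact h
  obtain ⟨w, hw⟩ := this
  refine ⟨w, ?_⟩
  have hne : (∏ p ∈ goodP N M, (p : ℝ)) ≠ 0 := by
    rw [Finset.prod_ne_zero_iff]
    intro p hp
    exact_mod_cast (goodP_prime hp).ne_zero
  rw [hw]; push_cast; field_simp

lemma DD_int (N M : ℕ) : ∃ z : ℤ, DD N M = z := by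
  obtain ⟨w, hw⟩ := prod_goodP_dvd N M (Nat.lcmUpto (70 * N)) (fun p hp => by
    exact_mod_cast (Finset.dvd_lcm (f := id) (Finset.mem_Icc.2 ⟨(goodP_prime hp).pos, goodP_le hp⟩) : _))
  exact ⟨w, by rw [← hw]; simp [DD]⟩

lemma DD_RR (N M v : ℕ) : ∃ z : ℤ, DD N M * (RR N).eval (v : ℝ) = z := by
  obtain ⟨a, ha⟩ := DD_int N M
  obtain ⟨b, hb⟩ := RR_int N v
  exact ⟨a * b, by rw [ha, hb]; push_cast; ring⟩

lemma DD_RRd (N M v : ℕ) (hM : 70 * M ^ 2 ≤ 25 * N) (hN : 0 < N) :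
    ∃ z : ℤ, DD N M * (RR N).derivative.eval (v : ℝ) = z := by
  obtain ⟨z, hz⟩ := RRd_int N v
  obtain ⟨w, hw⟩ := prod_goodP_dvd N M z (fun p hp => RRd_dvd N M v p hM hN hp z hz)
  exact ⟨w, by rw [← hw, ← hz]; unfold DD; ring⟩

lemma DD_pos (N M : ℕ) : 0 < DD N M := by
  unfold DD
  apply div_pos
  · exact_mod_cast Nat.lcmUpto_pos _
  · apply Finset.prod_pos
    intro p hp
    exact_mod_cast (goodP_prime hp).pos

lemma log_DD (N M : ℕ) : Real.log (DD N M) = Chebyshev.psi (70 * N : ℕ) -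
    ∑ i ∈ Finset.range M ×ˢ (Finset.univ : Finset (Fin 6)),
      (Chebyshev.theta (840 * N / (168 * i.1 + alf i.2)) - Chebyshev.theta (840 * N / (168 * i.1 + bef i.2))) := by
  unfold DD
  rw [Real.log_div, Chebyshev.psi_eq_log_lcmUpto]
  rotate_left
  · exact_mod_cast (Nat.lcmUpto_pos _).ne'
  · rw [Finset.prod_ne_zero_iff]
    intro p hp
    exact_mod_cast (goodP_prime hp).ne_zero
  congr 1
  rw [Real.log_prod (fun p hp => by exact_mod_cast (goodP_prime hp).ne_zero)]
  unfold goodP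
  rw [Finset.sum_biUnion (fun i _ j _ h => block_disj N i j h)]
  apply Finset.sum_congr rfl
  intro i _
  unfold blockP
  have hab := alf_bef i.2
  have fl : ∀ a : ℕ, ⌊(840 * (N : ℝ)) / (168 * i.1 + a)⌋₊ = 840 * N / (168 * i.1 + a) := by
    intro a
    rw [← Nat.floor_div_eq_div (K := ℝ)]
    push_cast; rfl
  have hle : 840 * N / (168 * i.1 + bef i.2) ≤ 840 * N / (168 * i.1 + alf i.2) :=
    Nat.div_le_div_left (by omega) (by omega)
  unfold Chebyshev.theta
  rw [fl, fl, eq_sub_iff_add_eq, add_comm, ← Finset.sum_union]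
  · congr 1
    rw [← Finset.filter_union, Finset.Ioc_union_Ioc_eq_Ioc (Nat.zero_le _) hle]
  · apply Finset.disjoint_filter_filter
    rw [Finset.disjoint_left]
    intro p; simp only [Finset.mem_Ioc]; omega
end PartC3

section PartD1
open Real MeasureTheory

noncomputable def sg (y : ℝ) : ℝ := 1 / (1 + exp (-(2 * π * y)))
noncomputable def ww (y : ℝ) : ℝ := 4 * (sg y * (1 - sg y))

lemma sg_pos (y : ℝ) : 0 < sg y := by unfold sg; positivity
lemma sg_lt (y : ℝ) : sg y < 1 := by
  unfold sg; rw [div_lt_one (by positivity)]; have := exp_pos (-(2 * π * y)); linarith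
lemma one_sub_sg (y : ℝ) : 1 - sg y = exp (-(2 * π * y)) * sg y := by
  unfold sg; have := exp_pos (-(2 * π * y)); field_simp; ring
lemma ww_pos (y : ℝ) : 0 < ww y := by
  have := sg_pos y; have := sg_lt y
  unfold ww
  have : 0 < 1 - sg y := by linarith
  positivity
lemma one_sub_sg' (y : ℝ) : 1 - sg y = sg (-y) := by
  unfold sg
  have h : exp (-(2 * π * -y)) = (exp (-(2 * π * y)))⁻¹ := by rw [← exp_neg]; congr 1; ring
  rw [h]; have := exp_pos (-(2 * π * y)); field_simp; ring
lemma sg_le (y : ℝ) : sg y ≤ exp (2 * π * y) := by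
  unfold sg; rw [div_le_iff₀ (by positivity), mul_add, ← exp_add]
  have := exp_pos (2 * π * y); simp; linarith
lemma ww_le (y : ℝ) : ww y ≤ 4 * exp (-(2 * π * |y|)) := by
  have h1 := sg_pos y; have h2 := sg_lt y
  have h3 := sg_le y
  have h4 := sg_le (-y)
  rw [← one_sub_sg'] at h4
  unfold ww
  rcases abs_cases y with ⟨h, _⟩ | ⟨h, _⟩ <;> rw [h]
  · have : -(2 * π * y) = 2 * π * -y := by ring
    rw [this]; nlinarith
  · have : -(2 * π * -y) = 2 * π * y := by ring
    rw [this]; nlinarith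
lemma sg_deriv (y : ℝ) : HasDerivAt sg (2 * π * (sg y * (1 - sg y))) y := by
  have h1 : HasDerivAt (fun y : ℝ => 1 + exp (-(2 * π * y))) (exp (-(2 * π * y)) * (-(2 * π))) y := by
    have := (((hasDerivAt_id y).const_mul (2 * π)).neg.exp).const_add 1
    simpa using this
  have h2 := h1.inv (by positivity)
  have h3 : sg = fun y => (1 + exp (-(2 * π * y)))⁻¹ := by ext; simp [sg]
  rw [h3]
  refine HasDerivAt.congr_deriv (f := fun y => (1 + exp (-(2 * π * y)))⁻¹) h2 ?_
  have h4 := exp_pos (-(2 * π * y))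
  beta_reduce
  generalize exp (-(2 * π * y)) = E at h4 ⊢
  field_simp; ring
lemma sg_cont : Continuous sg := continuous_iff_continuousAt.2 fun y => (sg_deriv y).continuousAt
lemma ww_cont : Continuous ww := by unfold ww; have := sg_cont; fun_prop
lemma sg_log (y : ℝ) : log (sg y) - log (1 - sg y) = 2 * π * y := by
  rw [one_sub_sg, log_mul (exp_pos _).ne' (sg_pos y).ne', log_exp]; ring
lemma sg_image : sg '' Set.univ = Set.Ioo 0 1 := by
  ext u
  simp only [Set.image_univ, Set.mem_range, Set.mem_Ioo]
  constructor
  · rintro ⟨y, rfl⟩; exact ⟨sg_pos y, sg_lt y⟩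
  · rintro ⟨h0, h1⟩
    refine ⟨(log u - log (1 - u)) / (2 * π), ?_⟩
    unfold sg
    have e : -(2 * π * ((log u - log (1 - u)) / (2 * π))) = log (1 - u) - log u := by
      field_simp [pi_pos.ne']; ring
    rw [e, exp_sub, exp_log (by linarith), exp_log h0]
    field_simp; ring
lemma sg_inj : Function.Injective sg := by
  intro a b h
  have h1 := sg_log a
  rw [h, sg_log b] at h1
  have := pi_pos
  nlinarith

lemma ft (s : ℝ) (hs : s ≠ 0) : ∫ y : ℝ, (ww y : ℂ) * Complex.exp (2 * π * s * y * Complex.I)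
    = 2 * s / (Real.sinh (π * s)) := by
  have hb : Complex.betaIntegral (1 + s * Complex.I) (1 - s * Complex.I) =
      (π / 2) * ∫ y : ℝ, (ww y : ℂ) * Complex.exp (2 * π * s * y * Complex.I) := by
    unfold Complex.betaIntegral
    rw [intervalIntegral.integral_of_le zero_le_one, integral_Ioc_eq_integral_Ioo, ← sg_image, 
      integral_image_eq_integral_abs_deriv_smul MeasurableSet.univ
        (fun y _ => (sg_deriv y).hasDerivWithinAt) sg_inj.injOn, setIntegral_univ, ← integral_const_mul]
    congr 1
    ext y
    have h1 := sg_pos y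
    have h2 : 0 < 1 - sg y := by linarith [sg_lt y]
    have e1 : (1 : ℂ) - (sg y : ℂ) = ((1 - sg y : ℝ) : ℂ) := by push_cast; ring
    rw [e1, Complex.cpow_def_of_ne_zero (by exact_mod_cast h1.ne'), Complex.cpow_def_of_ne_zero (by exact_mod_cast h2.ne'),
      ← Complex.ofReal_log h1.le, ← Complex.ofReal_log h2.le, ← Complex.exp_add]
    have e2 : (log (sg y) : ℂ) * (1 + s * Complex.I - 1) + (log (1 - sg y) : ℂ) * (1 - s * Complex.I - 1)
        = 2 * π * s * y * Complex.I := by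
      have := sg_log y
      have h3 : (log (sg y) : ℂ) - (log (1 - sg y) : ℂ) = 2 * π * y := by exact_mod_cast this
      linear_combination (s * Complex.I) * h3
    rw [e2, abs_of_pos (by have := pi_pos; positivity), Complex.real_smul]
    unfold ww
    push_cast; ring
  have hg := Complex.Gamma_mul_Gamma_eq_betaIntegral (s := 1 + s * Complex.I) (t := 1 - s * Complex.I) (by simp) (by simp)
  have e3 : (1 + s * Complex.I) + (1 - s * Complex.I) = 2 := by ring
  rw [e3, hb] at hg
  have hs' : (s : ℂ) * Complex.I ≠ 0 := by simp [hs]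
  have e4 : Complex.Gamma 2 = 1 := by
    simp
  rw [e4, add_comm (1 : ℂ), Complex.Gamma_add_one _ hs', mul_assoc, Complex.Gamma_mul_Gamma_one_sub] at hg
  have e5 : Complex.sin (π * (s * Complex.I)) = Real.sinh (π * s) * Complex.I := by
    rw [← mul_assoc, Complex.sin_mul_I]; push_cast; rfl
  rw [e5] at hg
  have h6 : Real.sinh (π * s) ≠ 0 := by
    rw [Ne, Real.sinh_eq_zero]; exact mul_ne_zero pi_pos.ne' hs
  have h7 : ((Real.sinh (π * s) : ℝ) : ℂ) ≠ 0 := by exact_mod_cast h6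
  have h8 : (π : ℂ) ≠ 0 := by exact_mod_cast pi_pos.ne'
  generalize ((Real.sinh (π * s) : ℝ) : ℂ) = Z at *
  have hI := Complex.I_ne_zero
  field_simp at hg ⊢
  linear_combination -hg

-- integrability
lemma exp_abs_int (c : ℝ) (hc : 0 < c) : Integrable fun y : ℝ => exp (-(c * |y|)) := by
  have h : IntegrableOn (fun y : ℝ => exp (-(c * |y|))) (Set.Ioi 0) := by
    refine (integrableOn_exp_mul_Ioi (a := -c) (by linarith) 0).congr_fun ?_ measurableSet_Ioi
    intro y hy
    simp only; rw [abs_of_pos hy]; congr 1; ring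
  have h' : IntegrableOn (fun y : ℝ => exp (-(c * |y|))) (Set.Iic 0) := by
    refine (integrableOn_exp_mul_Iic (a := c) hc 0).congr_fun ?_ measurableSet_Iic
    intro y hy
    simp only; rw [abs_of_nonpos hy]; congr 1; ring
  have := h'.union h
  rwa [Set.Iic_union_Ioi, integrableOn_univ] at this

lemma pow_exp_int (c : ℝ) (hc : 0 < c) (j : ℕ) : Integrable fun y : ℝ => (1 + |y|) ^ j * exp (-(c * |y|)) := by
  have h1 := (exp_abs_int (c / 2) (by linarith)).const_mul ((2 / c) ^ j * j.factorial * exp (c / 2))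
  refine h1.mono' (by fun_prop) (ae_of_all _ fun y => ?_)
  rw [norm_of_nonneg (by positivity)]
  have h2 := Real.pow_div_factorial_le_exp (c / 2 * (1 + |y|)) (by positivity) j
  rw [div_le_iff₀ (by positivity), mul_pow] at h2
  have e : exp (-(c * |y|)) = exp (-(c / 2 * |y|)) * exp (-(c / 2 * |y|)) := by rw [← exp_add]; congr 1; ring
  have e2 : exp (c / 2 * (1 + |y|)) = exp (c / 2) * exp (c / 2 * |y|) := by rw [← exp_add]; congr 1; ring
  have e3 : exp (c / 2 * |y|) * exp (-(c / 2 * |y|)) = 1 := by rw [← exp_add]; simp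
  have h3 : (1 + |y|) ^ j ≤ (2 / c) ^ j * (j.factorial * exp (c / 2) * exp (c / 2 * |y|)) := by
    calc (1 + |y|) ^ j = (2 / c) ^ j * ((c / 2) ^ j * (1 + |y|) ^ j) := by
          rw [← mul_assoc, ← mul_pow]; field_simp; simp
      _ ≤ _ := by
          apply mul_le_mul_of_nonneg_left _ (by positivity)
          rw [e2] at h2; linarith
  calc (1 + |y|) ^ j * exp (-(c * |y|)) ≤ (2 / c) ^ j * (j.factorial * exp (c / 2) * exp (c / 2 * |y|)) * exp (-(c * |y|)) :=
        mul_le_mul_of_nonneg_right h3 (exp_pos _).le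
    _ = (2 / c) ^ j * j.factorial * exp (c / 2) * exp (-(c / 2 * |y|)) * (exp (c / 2 * |y|) * exp (-(c / 2 * |y|))) := by
        rw [e]; ring
    _ = _ := by rw [e3, mul_one]

lemma pow_ww_int (j : ℕ) : Integrable fun y : ℝ => (1 + |y|) ^ j * ww y := by
  have h1 := (pow_exp_int (2 * π) (by positivity) j).const_mul 4
  refine h1.mono' (by have := ww_cont; fun_prop) (ae_of_all _ fun y => ?_)
  have := ww_pos y
  rw [norm_of_nonneg (by positivity)]
  have := ww_le y
  calc _ ≤ (1 + |y|) ^ j * (4 * exp (-(2 * π * |y|))) := by gcongr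
    _ = _ := by ring
end PartD1

section PartD2
open Real MeasureTheory Polynomial

noncomputable def II (σ : ℝ) (j : ℕ) (t : ℝ) : ℂ :=
  ∫ y : ℝ, ((σ : ℂ) + y * Complex.I) ^ j * Complex.exp (t * ((σ : ℂ) + y * Complex.I)) * ww y

lemma norm_line (σ y : ℝ) (hσ : |σ| ≤ 1) : ‖(σ : ℂ) + y * Complex.I‖ ≤ 1 + |y| := by
  refine (norm_add_le _ _).trans ?_
  simp only [norm_mul, Complex.norm_I, mul_one, Complex.norm_real, norm_eq_abs]; linarith

lemma norm_exp_line (σ y t : ℝ) : ‖Complex.exp (t * ((σ : ℂ) + y * Complex.I))‖ = exp (t * σ) := by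
  rw [Complex.norm_exp]; congr 1; simp

lemma II_meas (σ : ℝ) (j : ℕ) (t : ℝ) : AEStronglyMeasurable (fun y : ℝ =>
    ((σ : ℂ) + y * Complex.I) ^ j * Complex.exp (t * ((σ : ℂ) + y * Complex.I)) * ww y) volume := by
  apply Continuous.aestronglyMeasurable
  have := ww_cont
  fun_prop

lemma II_bound (σ : ℝ) (hσ : |σ| ≤ 1) (j : ℕ) (t y : ℝ) :
    ‖((σ : ℂ) + y * Complex.I) ^ j * Complex.exp (t * ((σ : ℂ) + y * Complex.I)) * ww y‖ ≤ exp |t| * ((1 + |y|) ^ j * ww y) := by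
  rw [norm_mul, norm_mul, norm_pow, norm_exp_line, Complex.norm_real, norm_of_nonneg (ww_pos y).le]
  have h1 := norm_line σ y hσ
  have h2 : t * σ ≤ |t| := by
    calc t * σ ≤ |t * σ| := le_abs_self _
      _ = |t| * |σ| := abs_mul _ _
      _ ≤ |t| * 1 := by gcongr
      _ = |t| := mul_one _
  have := ww_pos y
  calc _ ≤ (1 + |y|) ^ j * exp |t| * ww y := by gcongr
    _ = _ := by ring

lemma II_integrable (σ : ℝ) (hσ : |σ| ≤ 1) (j : ℕ) (t : ℝ) : Integrable (fun y : ℝ =>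
    ((σ : ℂ) + y * Complex.I) ^ j * Complex.exp (t * ((σ : ℂ) + y * Complex.I)) * ww y) :=
  ((pow_ww_int j).const_mul _).mono' (II_meas σ j t) (ae_of_all _ fun y => II_bound σ hσ j t y)

lemma II_deriv (σ : ℝ) (hσ : |σ| ≤ 1) (j : ℕ) (t : ℝ) : HasDerivAt (II σ j) (II σ (j + 1) t) t := by
  have := hasDerivAt_integral_of_dominated_loc_of_deriv_le (μ := volume) (𝕜 := ℝ) (x₀ := t) (s := Metric.ball t 1)
    (F := fun t y => ((σ : ℂ) + y * Complex.I) ^ j * Complex.exp (t * ((σ : ℂ) + y * Complex.I)) * ww y)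
    (F' := fun t y => ((σ : ℂ) + y * Complex.I) ^ (j + 1) * Complex.exp (t * ((σ : ℂ) + y * Complex.I)) * ww y)
    (bound := fun y => exp (|t| + 1) * ((1 + |y|) ^ (j + 1) * ww y))
    (Metric.ball_mem_nhds t one_pos) (Filter.Eventually.of_forall fun s => II_meas σ j s) (II_integrable σ hσ j t)
    (II_meas σ (j + 1) t) (ae_of_all _ fun y s hs => ?_) ((pow_ww_int _).const_mul _) (ae_of_all _ fun y s hs => ?_)
  · exact this.2
  · refine (II_bound σ hσ (j + 1) s y).trans ?_
    have h1 : |s| ≤ |t| + 1 := by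
      rw [Metric.mem_ball, dist_eq] at hs
      have := abs_sub_abs_le_abs_sub s t
      linarith
    have := ww_pos y
    gcongr
  · have h1 : HasDerivAt (fun s : ℝ => (s : ℂ) * ((σ : ℂ) + y * Complex.I)) ((σ : ℂ) + y * Complex.I) s := by
      simpa using (Complex.ofRealCLM.hasDerivAt (x := s)).mul_const ((σ : ℂ) + y * Complex.I)
    have h2 := ((h1.cexp).const_mul (((σ : ℂ) + y * Complex.I) ^ j)).mul_const (ww y : ℂ)
    refine h2.congr_deriv ?_
    ring

noncomputable def KK (j : ℕ) (t : ℝ) : ℂ := II (-(1 / 2)) j t - II (1 / 2) j t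

lemma KK_deriv (j : ℕ) (t : ℝ) : HasDerivAt (KK j) (KK (j + 1) t) t :=
  (II_deriv _ (by norm_num [abs_of_nonneg]) j t).sub (II_deriv _ (by norm_num [abs_of_nonneg]) j t)

lemma KK_zero (t : ℝ) (ht : t ≠ 0) : KK 0 t = -(2 / π) * t := by
  have h := ft (t / (2 * π)) (by have := pi_pos; positivity)
  have hp : (π : ℂ) ≠ 0 := by exact_mod_cast pi_pos.ne'
  have e : ∀ σ : ℝ, II σ 0 t = exp (t * σ) * ∫ y : ℝ, (ww y : ℂ) * Complex.exp (2 * π * ((t / (2 * π) : ℝ) : ℂ) * y * Complex.I) := by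
    intro σ
    unfold II
    rw [← integral_const_mul]
    congr 1; ext y
    have : (t : ℂ) * ((σ : ℂ) + y * Complex.I) = ((t * σ : ℝ) : ℂ) + 2 * π * ((t / (2 * π) : ℝ) : ℂ) * y * Complex.I := by
      push_cast; field_simp
    rw [this, Complex.exp_add]
    push_cast; ring
  unfold KK
  rw [e, e, h]
  have e2 : π * (t / (2 * π)) = t / 2 := by field_simp
  rw [e2]
  have h3 : (exp (t * -(1 / 2)) : ℂ) - exp (t * (1 / 2)) = -2 * Real.sinh (t / 2) := by
    rw [Real.sinh_eq]; push_cast; 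
    have a1 : (t : ℂ) * -(1 / 2) = -((t : ℂ) / 2) := by ring
    have a2 : (t : ℂ) * (1 / 2) = (t : ℂ) / 2 := by ring
    rw [a1, a2]; ring
  have h6 : Real.sinh (t / 2) ≠ 0 := by
    rw [Ne, Real.sinh_eq_zero]; simpa using ht
  have h7 : ((Real.sinh (t / 2) : ℝ) : ℂ) ≠ 0 := by exact_mod_cast h6
  rw [← sub_mul, h3]
  push_cast at *
  field_simp

lemma KK_one (t : ℝ) (ht : t < 0) : KK 1 t = -(2 / π) := by
  have h1 := KK_deriv 0 t
  have h2 : HasDerivAt (fun t : ℝ => -(2 / (π : ℂ)) * (t : ℂ)) (-(2 / π)) t := by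
    simpa using (Complex.ofRealCLM.hasDerivAt (x := t)).const_mul (-(2 / (π : ℂ)))
  have h3 : KK 0 =ᶠ[nhds t] (fun t : ℝ => -(2 / (π : ℂ)) * (t : ℂ)) := by
    filter_upwards [Iio_mem_nhds ht] with s hs
    exact KK_zero s (ne_of_lt hs)
  exact h1.unique (h2.congr_of_eventuallyEq h3)

lemma KK_ge (j : ℕ) (t : ℝ) (ht : t < 0) : KK (j + 2) t = 0 := by
  induction j generalizing t with
  | zero =>
    have h1 := KK_deriv 1 t
    have h3 : KK 1 =ᶠ[nhds t] (fun _ : ℝ => -(2 / (π : ℂ))) := by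
      filter_upwards [Iio_mem_nhds ht] with s hs
      exact KK_one s hs
    exact h1.unique ((hasDerivAt_const t _).congr_of_eventuallyEq h3)
  | succ j ih =>
    have h1 := KK_deriv (j + 2) t
    have h3 : KK (j + 2) =ᶠ[nhds t] (fun _ : ℝ => 0) := by
      filter_upwards [Iio_mem_nhds ht] with s hs
      exact ih s hs
    exact h1.unique ((hasDerivAt_const t _).congr_of_eventuallyEq h3)

noncomputable def JJ (σ : ℝ) (t : ℝ) (T : ℝ[X]) : ℂ :=
  ∫ y : ℝ, aeval ((σ : ℂ) + y * Complex.I) T * Complex.exp (t * ((σ : ℂ) + y * Complex.I)) * ww y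

lemma JJ_eq (σ : ℝ) (hσ : |σ| ≤ 1) (t : ℝ) (T : ℝ[X]) :
    JJ σ t T = ∑ j ∈ Finset.range (T.natDegree + 1), (T.coeff j : ℂ) * II σ j t := by
  unfold JJ II
  simp_rw [← integral_const_mul]
  rw [← integral_finset_sum _ (fun j _ => (II_integrable σ hσ j t).const_mul _)]
  congr 1; ext y
  rw [aeval_eq_sum_range, Finset.sum_mul, Finset.sum_mul]
  apply Finset.sum_congr rfl
  intro j _
  rw [Complex.real_smul]; ring

lemma JJ_shift (t : ℝ) (ht : t < 0) (T : ℝ[X]) :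
    JJ (-(1 / 2)) t T - JJ (1 / 2) t T = -(2 / π) * ((T.derivative.eval 0 + t * T.eval 0 : ℝ) : ℂ) := by
  rw [JJ_eq _ (by norm_num [abs_of_nonneg]), JJ_eq _ (by norm_num [abs_of_nonneg]), ← Finset.sum_sub_distrib]
  have e : ∀ j ∈ Finset.range (T.natDegree + 1), (T.coeff j : ℂ) * II (-(1 / 2)) j t - (T.coeff j : ℂ) * II (1 / 2) j t
      = (T.coeff j : ℂ) * KK j t := by intro j _; unfold KK; ring
  rw [Finset.sum_congr rfl e]
  have hsub : Finset.range (T.natDegree + 1) ⊆ Finset.range (T.natDegree + 2) := Finset.range_mono (by omega)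
  rw [Finset.sum_subset hsub (fun j _ hj => by
    rw [Finset.mem_range] at hj
    rw [coeff_eq_zero_of_natDegree_lt (by omega)]; simp)]
  rw [Finset.sum_range_succ', Finset.sum_range_succ', Finset.sum_eq_zero (fun j _ => by rw [KK_ge j t ht, mul_zero])]
  rw [KK_one t ht, KK_zero t ht.ne]
  have h1 : T.derivative.eval 0 = T.coeff 1 := by
    rw [← coeff_zero_eq_eval_zero, coeff_derivative]; simp
  rw [h1, ← coeff_zero_eq_eval_zero]
  push_cast
  ring

noncomputable def AA (t : ℝ) (S : ℝ[X]) (k : ℕ) : ℂ := exp (t * k) * JJ (-(1 / 2)) t (taylor (k : ℝ) S)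

lemma taylor_aeval (r : ℝ) (S : ℝ[X]) (z : ℂ) : aeval z (taylor r S) = aeval (z + r) S := by
  rw [taylor_apply, aeval_comp]; simp

lemma AA_shift (t : ℝ) (ht : t < 0) (S : ℝ[X]) (k : ℕ) : AA t S k - AA t S (k + 1) =
    -(2 / π) * (((S.derivative.eval (k : ℝ) + t * S.eval (k : ℝ)) * exp t ^ k : ℝ) : ℂ) := by
  have h := JJ_shift t ht (taylor (k : ℝ) S)
  have e1 : (taylor (k : ℝ) S).eval 0 = S.eval (k : ℝ) := by simp [taylor_eval]
  have e2 : (derivative (taylor (k : ℝ) S)).eval 0 = S.derivative.eval (k : ℝ) := by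
    rw [taylor_apply, derivative_comp]; simp
  have e3 : JJ (1 / 2) t (taylor (k : ℝ) S) = exp t * JJ (-(1 / 2)) t (taylor ((k + 1 : ℕ) : ℝ) S) := by
    unfold JJ
    rw [← integral_const_mul]
    congr 1; ext y
    rw [taylor_aeval, taylor_aeval]
    have a1 : (((1 / 2 : ℝ) : ℂ) + y * Complex.I) + ((k : ℝ) : ℂ) = ((-(1 / 2) : ℝ) : ℂ) + y * Complex.I + (((k + 1 : ℕ) : ℝ) : ℂ) := by
      push_cast; ring
    have a2 : (t : ℂ) * (((1 / 2 : ℝ) : ℂ) + y * Complex.I) = t + t * (((-(1 / 2) : ℝ) : ℂ) + y * Complex.I) := by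
      push_cast; ring
    rw [a1, a2, Complex.exp_add]; push_cast; ring
  rw [e1, e2, e3] at h
  unfold AA
  have e4 : exp (t * (k + 1 : ℕ)) = exp (t * k) * exp t := by rw [← exp_add]; push_cast; congr 1; ring
  have e5 : exp t ^ k = exp (t * k) := by rw [← exp_nat_mul]; congr 1; ring
  rw [e4, e5]
  push_cast at h ⊢
  linear_combination (Complex.exp (t * k)) * h

lemma AA_norm (t : ℝ) (S : ℝ[X]) (k : ℕ) : ‖AA t S k‖ ≤ exp (t * k) *
    ∫ y : ℝ, ‖aeval (((k - 1 / 2 : ℝ) : ℂ) + y * Complex.I) S‖ * exp (-t / 2) * ww y := by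
  unfold AA JJ
  rw [norm_mul, Complex.norm_real, norm_of_nonneg (exp_pos _).le]
  gcongr
  refine (norm_integral_le_integral_norm _).trans (le_of_eq ?_)
  congr 1; ext y
  rw [norm_mul, norm_mul, norm_exp_line, taylor_aeval, Complex.norm_real, norm_of_nonneg (ww_pos y).le]
  congr 3
  · congr 2; push_cast; ring
  · ring

lemma line_int (σ t : ℝ) (S : ℝ[X]) (k : ℕ) (hk : |σ| ≤ k + 1) :
    (∀ y : ℝ, ‖aeval ((σ : ℂ) + y * Complex.I) S‖ ≤ ∑ j ∈ Finset.range (S.natDegree + 1), |S.coeff j| * (k + 1) ^ j * (1 + |y|) ^ j) := by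
  intro y
  rw [aeval_eq_sum_range]
  refine (norm_sum_le _ _).trans (Finset.sum_le_sum fun j _ => ?_)
  rw [norm_smul, norm_pow, norm_eq_abs, mul_assoc, ← mul_pow]
  have : ‖(σ : ℂ) + y * Complex.I‖ ≤ (k + 1) * (1 + |y|) := by
    refine (norm_add_le _ _).trans ?_
    simp only [norm_mul, Complex.norm_I, mul_one, Complex.norm_real, norm_eq_abs]
    have : 0 ≤ (k : ℝ) * |y| := by positivity
    nlinarith
  gcongr

lemma AA_lim (t : ℝ) (ht : t < 0) (S : ℝ[X]) : Filter.Tendsto (AA t S) Filter.atTop (nhds 0) := by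
  set W : ℕ → ℝ := fun j => ∫ y : ℝ, (1 + |y|) ^ j * ww y with hW
  set Q : ℝ[X] := ∑ j ∈ Finset.range (S.natDegree + 1), C (exp (-t / 2) * |S.coeff j| * W j) * (X + 1) ^ j with hQ
  have hs := (summ_poly Q (exp t) (by
    rw [norm_of_nonneg (exp_pos _).le, exp_lt_one_iff]; exact ht)).tendsto_atTop_zero
  refine squeeze_zero_norm (fun k => ?_) hs
  refine (AA_norm t S k).trans ?_
  have hk : |(k : ℝ) - 1 / 2| ≤ k + 1 := by
    rw [abs_le]; constructor <;> linarith [(Nat.cast_nonneg k : (0 : ℝ) ≤ k)]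
  have hb := line_int (k - 1 / 2) t S k hk
  have e5 : exp t ^ k = exp (t * k) := by rw [← exp_nat_mul]; congr 1; ring
  rw [e5, mul_comm]
  gcongr
  have hI : ∀ j ∈ Finset.range (S.natDegree + 1), Integrable fun y : ℝ => (exp (-t / 2) * |S.coeff j| * (k + 1) ^ j) * ((1 + |y|) ^ j * ww y) :=
    fun j _ => (pow_ww_int j).const_mul _
  have hQe : Q.eval (k : ℝ) = ∫ y : ℝ, ∑ j ∈ Finset.range (S.natDegree + 1), (exp (-t / 2) * |S.coeff j| * (k + 1) ^ j) * ((1 + |y|) ^ j * ww y) := by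
    rw [integral_finset_sum _ hI, hQ, eval_finset_sum]
    apply Finset.sum_congr rfl
    intro j _
    rw [integral_const_mul]
    simp [hW]; ring
  rw [hQe]
  apply integral_mono_of_nonneg (ae_of_all _ fun y => by
    have := ww_pos y; simp only [Pi.zero_apply]; positivity) (integrable_finset_sum _ hI)
  refine ae_of_all _ fun y => ?_
  have := ww_pos y
  calc _ ≤ (∑ j ∈ Finset.range (S.natDegree + 1), |S.coeff j| * (k + 1) ^ j * (1 + |y|) ^ j) * exp (-t / 2) * ww y := by
        have := hb y; beta_reduce; gcongr
    _ = _ := by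
        rw [Finset.sum_mul, Finset.sum_mul]; apply Finset.sum_congr rfl; intro j _; ring

lemma Lam_bound (S : ℝ[X]) (m : ℕ) (h0 : ∀ k : ℕ, k < m → S.eval (k : ℝ) = 0)
    (h1 : ∀ k : ℕ, k < m → S.derivative.eval (k : ℝ) = 0) :
    |Lam (log xx) S| ≤ π / 2 * xx ^ m * 
      ∫ y : ℝ, ‖aeval (((m - 1 / 2 : ℝ) : ℂ) + y * Complex.I) S‖ * exp (-log xx / 2) * ww y := by
  have hx := xx_pos
  have ht : log xx < 0 := log_neg hx xx_lt_one
  have hsum := (Lam_summable (log xx) S).hasSum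
  have hl := hsum.tendsto_sum_nat
  have hA := AA_lim (log xx) ht S
  have e : ∀ M : ℕ, ((∑ k ∈ Finset.range (m + M), (S.derivative.eval (k : ℝ) + log xx * S.eval (k : ℝ)) * xx ^ k : ℝ) : ℂ)
      = -(π / 2) * (AA (log xx) S m - AA (log xx) S (m + M)) := by
    intro M
    have hp : (π : ℂ) ≠ 0 := by exact_mod_cast pi_pos.ne'
    induction M with
    | zero =>
      rw [add_zero, sub_self, mul_zero]
      rw [Finset.sum_eq_zero]; · simp
      intro k hk
      rw [Finset.mem_range] at hk
      rw [h0 k hk, h1 k hk]; simp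
    | succ M ih =>
      rw [← add_assoc, Finset.sum_range_succ, Complex.ofReal_add, ih]
      have := AA_shift (log xx) ht S (m + M)
      rw [exp_log hx] at this
      generalize (((S.derivative.eval ((m + M : ℕ) : ℝ) + log xx * S.eval ((m + M : ℕ) : ℝ)) * xx ^ (m + M) : ℝ) : ℂ) = Z at *
      have h2 : Z = -(π / 2) * (-(2 / π) * Z) := by field_simp
      rw [h2, ← this]; ring
  have l1 : Filter.Tendsto (fun M : ℕ => ((∑ k ∈ Finset.range (m + M), (S.derivative.eval (k : ℝ) + log xx * S.eval (k : ℝ)) * xx ^ k : ℝ) : ℂ)) Filter.atTop (nhds (Lam (log xx) S : ℝ)) := by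
    have := hl.comp (Filter.tendsto_add_atTop_nat m)
    have := (Complex.continuous_ofReal.tendsto _).comp this
    refine this.congr fun M => ?_
    simp only [Function.comp]; rw [add_comm]
  have l2 : Filter.Tendsto (fun M : ℕ => -((π : ℂ) / 2) * (AA (log xx) S m - AA (log xx) S (m + M))) Filter.atTop (nhds (-((π : ℂ) / 2) * (AA (log xx) S m - 0))) := by
    apply Filter.Tendsto.const_mul
    apply Filter.Tendsto.const_sub
    refine (hA.comp (Filter.tendsto_add_atTop_nat m)).congr fun M => ?_
    simp only [Function.comp]; rw [add_comm]
  have h3 := tendsto_nhds_unique l1 (l2.congr fun M => (e M).symm)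
  have h4 : |Lam (log xx) S| = π / 2 * ‖AA (log xx) S m‖ := by
    rw [← norm_eq_abs, ← Complex.norm_real, h3]
    simp [abs_of_pos pi_pos]
  rw [h4, mul_assoc]
  gcongr
  refine (AA_norm _ _ _).trans (le_of_eq ?_)
  congr 1
  rw [mul_comm, exp_nat_mul, exp_log hx]
end PartD2

section PartD3
open Real MeasureTheory Polynomial

noncomputable def GG (b Y : ℝ) : ℝ := 1 / 2 * b * log (b ^ 2 + Y ^ 2) - b + Y * arctan (b / Y)

lemma GG_db (b Y : ℝ) (hY : 0 < Y) : HasDerivAt (fun b => GG b Y) (1 / 2 * log (b ^ 2 + Y ^ 2)) b := by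
  unfold GG
  have hp : 0 < b ^ 2 + Y ^ 2 := by positivity
  have h1 : HasDerivAt (fun b : ℝ => log (b ^ 2 + Y ^ 2)) (2 * b / (b ^ 2 + Y ^ 2)) b := by
    have := (((hasDerivAt_pow 2 b).add_const (Y ^ 2)).log hp.ne')
    simpa using this
  have h2 : HasDerivAt (fun b : ℝ => arctan (b / Y)) (1 / (1 + (b / Y) ^ 2) * (1 / Y)) b :=
    ((hasDerivAt_id b).div_const Y).arctan
  have h3 : HasDerivAt (fun b : ℝ => 1 / 2 * b) (1 / 2) b := by simpa using (hasDerivAt_id b).const_mul (1 / 2 : ℝ)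
  refine (((h3.mul h1).sub (hasDerivAt_id b)).add (h2.const_mul Y)).congr_deriv ?_
  field_simp
  ring

lemma GG_dY (b Y : ℝ) (hY : 0 < Y) : HasDerivAt (fun Y => GG b Y) (arctan (b / Y)) Y := by
  unfold GG
  have hp : 0 < b ^ 2 + Y ^ 2 := by positivity
  have h1 : HasDerivAt (fun Y : ℝ => log (b ^ 2 + Y ^ 2)) (2 * Y / (b ^ 2 + Y ^ 2)) Y := by
    have := (((hasDerivAt_pow 2 Y).const_add (b ^ 2)).log hp.ne')
    simpa using this
  have h2 : HasDerivAt (fun Y : ℝ => arctan (b / Y)) (1 / (1 + (b / Y) ^ 2) * (b * (-(Y ^ 2)⁻¹))) Y := by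
    have := ((hasDerivAt_inv hY.ne').const_mul b).arctan
    simpa [div_eq_mul_inv] using this
  refine (((h1.const_mul (1 / 2 * b)).sub_const b).add ((hasDerivAt_id Y).mul h2)).congr_deriv ?_
  simp only [id]
  field_simp
  ring

lemma GG_step (b Y : ℝ) (hb : 0 ≤ b) (hY : 1 ≤ Y) : √(b ^ 2 + Y ^ 2) ≤ exp (GG (b + 1) Y - GG b Y) := by
  obtain ⟨c, hc, h⟩ := exists_hasDerivAt_eq_slope (fun b => GG b Y) (fun b => 1 / 2 * log (b ^ 2 + Y ^ 2)) (a := b) (b := b + 1) (by linarith)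
    (fun c _ => (GG_db c Y (by linarith)).continuousAt.continuousWithinAt) (fun c _ => GG_db c Y (by linarith))
  have : GG (b + 1) Y - GG b Y = 1 / 2 * log (c ^ 2 + Y ^ 2) := by rw [h]; ring
  rw [this]
  have hp : 0 < b ^ 2 + Y ^ 2 := by positivity
  have hp' : 0 < √(b ^ 2 + Y ^ 2) := sqrt_pos.2 hp
  rw [← log_le_iff_le_exp hp', log_sqrt hp.le]
  have : log (b ^ 2 + Y ^ 2) ≤ log (c ^ 2 + Y ^ 2) := by
    apply log_le_log hp; have := hc.1; nlinarith
  linarith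

lemma GG_tangent (b Y Y1 : ℝ) (hb : 0 ≤ b) (hY : 0 < Y) (hY1 : 0 < Y1) :
    GG b Y ≤ 1 / 2 * b * log (b ^ 2 + Y1 ^ 2) - b + Y * arctan (b / Y1) := by
  have e : 1 / 2 * b * log (b ^ 2 + Y1 ^ 2) - b + Y * arctan (b / Y1) = GG b Y1 + (Y - Y1) * arctan (b / Y1) := by
    unfold GG; ring
  rw [e]
  rcases lt_trichotomy Y Y1 with h | h | h
  · obtain ⟨c, hc, h2⟩ := exists_hasDerivAt_eq_slope (fun Y => GG b Y) (fun Y => arctan (b / Y)) h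
      (fun c hc => (GG_dY b c (by linarith [hc.1])).continuousAt.continuousWithinAt) (fun c hc => GG_dY b c (by linarith [hc.1]))
    have h3 : arctan (b / Y1) ≤ arctan (b / c) := by
      apply arctan_strictMono.monotone; have := hc.2; have : 0 < c := by linarith [hc.1]
      gcongr
    rw [eq_div_iff (by linarith)] at h2
    nlinarith
  · rw [h]; simp
  · obtain ⟨c, hc, h2⟩ := exists_hasDerivAt_eq_slope (fun Y => GG b Y) (fun Y => arctan (b / Y)) h
      (fun c hc => (GG_dY b c (by linarith [hc.1])).continuousAt.continuousWithinAt) (fun c hc => GG_dY b c (by linarith [hc.1]))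
    have h3 : arctan (b / c) ≤ arctan (b / Y1) := by
      apply arctan_strictMono.monotone; have := hc.1
      gcongr
    rw [eq_div_iff (by linarith)] at h2
    nlinarith

lemma prod_half (b : ℕ) (y : ℝ) : ∏ j ∈ Finset.range b, ‖((j + 1 / 2 : ℝ) : ℂ) + y * Complex.I‖ ≤
    exp (GG b (|y| + 1)) * √((b : ℝ) ^ 2 + (|y| + 1) ^ 2) := by
  induction b with
  | zero =>
    have := abs_nonneg y
    simp [GG, sqrt_sq (by positivity : 0 ≤ |y| + 1)]
  | succ b ih =>
    rw [Finset.prod_range_succ]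
    have h1 := GG_step b (|y| + 1) (by positivity) (by linarith [abs_nonneg y])
    have h2 : ‖((b + 1 / 2 : ℝ) : ℂ) + y * Complex.I‖ ≤ √(((b + 1 : ℕ) : ℝ) ^ 2 + (|y| + 1) ^ 2) := by
      rw [Complex.norm_add_mul_I]
      apply sqrt_le_sqrt
      have := abs_nonneg y
      push_cast
      nlinarith [sq_abs y, (Nat.cast_nonneg b : (0 : ℝ) ≤ b)]
    calc _ ≤ exp (GG b (|y| + 1)) * √((b : ℝ) ^ 2 + (|y| + 1) ^ 2) * √(((b + 1 : ℕ) : ℝ) ^ 2 + (|y| + 1) ^ 2) := by gcongr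
      _ ≤ exp (GG b (|y| + 1)) * exp (GG (b + 1) (|y| + 1) - GG b (|y| + 1)) * √(((b + 1 : ℕ) : ℝ) ^ 2 + (|y| + 1) ^ 2) := by gcongr
      _ = _ := by rw [← exp_add]; push_cast; congr 2; ring

lemma prod_half' (b : ℕ) (y Y1 : ℝ) (hY1 : 0 < Y1) : ∏ j ∈ Finset.range b, ‖((j + 1 / 2 : ℝ) : ℂ) + y * Complex.I‖ ≤
    exp (1 / 2 * b * log (b ^ 2 + Y1 ^ 2) - b + (|y| + 1) * arctan (b / Y1)) * (b + (|y| + 1)) := by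
  refine (prod_half b y).trans ?_
  have h1 := GG_tangent b (|y| + 1) Y1 (by positivity) (by positivity) hY1
  have h2 : √((b : ℝ) ^ 2 + (|y| + 1) ^ 2) ≤ b + (|y| + 1) := by
    rw [sqrt_le_left (by positivity)]
    have : 0 ≤ (b : ℝ) * (|y| + 1) := by positivity
    nlinarith
  gcongr

lemma cb_line (a m : ℕ) (hm : m ≤ a) (y : ℝ) : ‖aeval (((m - 1 / 2 : ℝ) : ℂ) + y * Complex.I) (cb a)‖ =
    (((2 * a).factorial : ℕ) : ℝ)⁻¹ * ((∏ j ∈ Finset.range (a + m), ‖((j + 1 / 2 : ℝ) : ℂ) + y * Complex.I‖) *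
      ∏ j ∈ Finset.range (a - m), ‖((j + 1 / 2 : ℝ) : ℂ) + y * Complex.I‖) := by
  unfold cb
  rw [map_mul, map_prod, norm_mul, norm_prod, aeval_C]
  have e0 : 2 * a = (a + m) + (a - m) := by omega
  congr 1
  · simp
  conv_lhs => rw [e0]
  rw [Finset.prod_range_add, ← Finset.prod_range_reflect]
  congr 1
  · apply Finset.prod_congr rfl
    intro j hj
    rw [Finset.mem_range] at hj
    congr 1
    have e1 : ((a + m - 1 - j : ℕ) : ℝ) = a + m - 1 - j := by
      rw [Nat.sub_sub, Nat.cast_sub (by omega)]; push_cast; ring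
    simp only [map_add, aeval_X, aeval_C, e1]
    simp; ring
  · apply Finset.prod_congr rfl
    intro j hj
    simp only [map_add, aeval_X, aeval_C]
    have e2 : (((m - 1 / 2 : ℝ) : ℂ) + y * Complex.I) + algebraMap ℝ ℂ ((a : ℝ) - ((a + m + j : ℕ) : ℝ)) = ((-(j + 1 / 2) : ℝ) : ℂ) + y * Complex.I := by
      simp; ring
    rw [e2, Complex.norm_add_mul_I, Complex.norm_add_mul_I, neg_sq]

lemma fact_lower (n : ℕ) (hn : 0 < n) : exp (n * log n - n) ≤ (n.factorial : ℝ) := by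
  have h := Real.pow_div_factorial_le_exp (n : ℝ) (by positivity) n
  rw [div_le_iff₀ (by positivity)] at h
  rw [exp_sub, div_le_iff₀ (exp_pos _), exp_nat_mul, exp_log (by positivity)]
  linarith

noncomputable def EE (w al : ℝ) : ℝ := 1 / 2 * (al + 3) * log ((al + 3) ^ 2 + w ^ 2) +
  1 / 2 * (al - 3) * log ((al - 3) ^ 2 + w ^ 2) - 2 * al * log (2 * al)

lemma cb_line_bound (al N : ℕ) (hal : 3 ≤ al) (hal2 : al ≤ 35) (hN : 0 < N) (w : ℝ) (hw : 0 < w) (y : ℝ) :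
    ‖aeval (((3 * N - 1 / 2 : ℝ) : ℂ) + y * Complex.I) (cb (al * N))‖ ≤
    exp (N * EE w al) * exp ((|y| + 1) * (arctan ((al + 3) / w) + arctan ((al - 3) / w))) * (39 * N * (|y| + 1)) ^ 2 := by
  have hN' : (1 : ℝ) ≤ N := by exact_mod_cast hN
  have hN0 : (0 : ℝ) < N := by linarith
  have h := cb_line (al * N) (3 * N) (Nat.mul_le_mul_right _ hal) y
  have e0 : (((3 * N : ℕ) - 1 / 2 : ℝ) : ℂ) = ((3 * N - 1 / 2 : ℝ) : ℂ) := by push_cast; ring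
  rw [e0] at h
  rw [h]
  have b1 : al * N + 3 * N = (al + 3) * N := by ring
  have b2 : al * N - 3 * N = (al - 3) * N := by rw [Nat.sub_mul]
  rw [b1, b2]
  have key : ∀ b : ℕ, b ≤ 38 → ∏ j ∈ Finset.range (b * N), ‖((j + 1 / 2 : ℝ) : ℂ) + y * Complex.I‖ ≤
      exp (N * (1 / 2 * b * log (b ^ 2 + w ^ 2)) + b * N * log N - b * N + (|y| + 1) * arctan (b / w)) * (39 * N * (|y| + 1)) := by
    intro b hb
    refine (prod_half' (b * N) y (w * N) (by positivity)).trans ?_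
    have c1 : log (((b * N : ℕ) : ℝ) ^ 2 + (w * N) ^ 2) = log (b ^ 2 + w ^ 2) + 2 * log N := by
      have : (((b * N : ℕ) : ℝ) ^ 2 + (w * N) ^ 2) = (b ^ 2 + w ^ 2) * (N : ℝ) ^ 2 := by push_cast; ring
      rw [this, log_mul (by positivity) (by positivity), log_pow]; push_cast; ring
    have c2 : ((b * N : ℕ) : ℝ) / (w * N) = b / w := by push_cast; field_simp
    rw [c1, c2]
    have c3 : ((b * N : ℕ) : ℝ) + (|y| + 1) ≤ 39 * N * (|y| + 1) := by
      have : (b : ℝ) ≤ 38 := by exact_mod_cast hb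
      have := abs_nonneg y
      push_cast
      have : (b : ℝ) * N ≤ 38 * N := by gcongr
      have : 0 ≤ (N : ℝ) * |y| := by positivity
      nlinarith
    apply mul_le_mul _ c3 (by positivity) (exp_pos _).le
    apply exp_le_exp.2
    push_cast
    apply le_of_eq; ring
  have k1 := key (al + 3) (by omega)
  have k2 := key (al - 3) (by omega)
  have hc : ((al - 3 : ℕ) : ℝ) = al - 3 := by rw [Nat.cast_sub hal]; norm_num
  rw [hc] at k2
  have hf := fact_lower (2 * (al * N)) (by positivity)
  have hal' : (0 : ℝ) < al := by exact_mod_cast (by omega : 0 < al)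
  have c4 : log ((2 * (al * N) : ℕ) : ℝ) = log (2 * al) + log N := by
    rw [← log_mul (by positivity) (by positivity)]; push_cast; congr 1; ring
  rw [c4] at hf
  have hf' : (((2 * (al * N)).factorial : ℕ) : ℝ)⁻¹ ≤ exp (-(((2 * (al * N) : ℕ) : ℝ) * (log (2 * al) + log N) - ((2 * (al * N) : ℕ) : ℝ))) := by
    rw [exp_neg]; exact inv_anti₀ (exp_pos _) hf
  refine (mul_le_mul hf' (mul_le_mul k1 k2 (Finset.prod_nonneg fun _ _ => norm_nonneg _) (by positivity)) (mul_nonneg (Finset.prod_nonneg fun _ _ => norm_nonneg _) (Finset.prod_nonneg fun _ _ => norm_nonneg _)) (exp_pos _).le).trans (le_of_eq ?_)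
  have : ∀ A B C D E Z : ℝ, A + B + C = D + E → exp A * (exp B * Z * (exp C * Z)) = exp D * exp E * Z ^ 2 := by
    intro A B C D E Z h
    rw [← exp_add, ← h, exp_add, exp_add]; ring
  apply this
  unfold EE
  push_cast
  ring

lemma F_bound (w : ℝ) (hw : 0 < w) (ε : ℝ) (hε : 0 < ε)
    (hsum : arctan (18 / w) + arctan (12 / w) + (arctan (28 / w) + arctan (22 / w)) + (arctan (38 / w) + arctan (32 / w)) ≤ 2 * π - ε) :
    ∃ C : ℝ, 0 < C ∧ ∀ N : ℕ, 0 < N → ∀ P ∈ ({1, (2 * X + 1) ^ 2, (2 * X + 1) ^ 4} : Set ℝ[X]),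
      (∀ k : ℕ, k < 3 * N → (RR N * P).eval (k : ℝ) = 0) → (∀ k : ℕ, k < 3 * N → (RR N * P).derivative.eval (k : ℝ) = 0) →
      |Lam (log xx) (RR N * P)| ≤ C * N ^ 10 * exp (N * (EE w 15 + EE w 25 + EE w 35 + 3 * log xx)) := by
  set W := ∫ y : ℝ, (1 + |y|) ^ 10 * exp (-(ε * |y|)) with hW
  have hWnn : 0 ≤ W := integral_nonneg fun y => by positivity
  set c0 : ℝ := 39 ^ 6 * 8 ^ 4 * exp (2 * π - ε) * exp (-log xx / 2) * 4 with hc0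
  have hc0p : 0 < c0 := by positivity
  refine ⟨π / 2 * c0 * (W + 1), by have := pi_pos; positivity, ?_⟩
  intro N hN P hP h0 h1
  have hN' : (1 : ℝ) ≤ N := by exact_mod_cast hN
  have hb := Lam_bound (RR N * P) (3 * N) h0 h1
  have hx := xx_pos
  set E := EE w 15 + EE w 25 + EE w 35 with hE
  have hPb : ∀ y : ℝ, ‖aeval (((3 * N - 1 / 2 : ℝ) : ℂ) + y * Complex.I) P‖ ≤ (8 * N * (|y| + 1)) ^ 4 := by
    intro y
    have a0 : (1 : ℝ) ≤ 8 * N * (|y| + 1) := by nlinarith [abs_nonneg y]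
    have a1 : ‖aeval (((3 * N - 1 / 2 : ℝ) : ℂ) + y * Complex.I) (2 * X + 1 : ℝ[X])‖ ≤ 8 * N * (|y| + 1) := by
      have : aeval (((3 * N - 1 / 2 : ℝ) : ℂ) + y * Complex.I) (2 * X + 1 : ℝ[X]) = ((6 * N : ℝ) : ℂ) + ((2 * y : ℝ) : ℂ) * Complex.I := by
        have h2 : aeval (((3 * N - 1 / 2 : ℝ) : ℂ) + y * Complex.I) (2 : ℝ[X]) = 2 := map_ofNat _ 2
        rw [map_add, map_mul, h2, aeval_X, map_one]
        push_cast; ring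
      rw [this]
      refine (norm_add_le _ _).trans ?_
      simp only [norm_mul, Complex.norm_I, mul_one, Complex.norm_real, norm_eq_abs]
      rw [abs_of_nonneg (by positivity), abs_of_nonneg (by norm_num : (0 : ℝ) ≤ 2)]
      simp
      nlinarith [abs_nonneg y]
    rcases hP with rfl | rfl | rfl
    · simpa using one_le_pow₀ a0
    · rw [map_pow, norm_pow]
      calc _ ≤ (8 * N * (|y| + 1)) ^ 2 := by gcongr
        _ ≤ _ := pow_le_pow_right₀ a0 (by norm_num)
    · rw [map_pow, norm_pow]; gcongr
  have e0 : ((((3 * N : ℕ) : ℝ) - 1 / 2 : ℝ) : ℂ) = ((3 * N - 1 / 2 : ℝ) : ℂ) := by push_cast; ring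
  rw [e0] at hb
  have hint : ∫ y : ℝ, ‖aeval (((3 * N - 1 / 2 : ℝ) : ℂ) + y * Complex.I) (RR N * P)‖ * exp (-log xx / 2) * ww y ≤
      ∫ y : ℝ, (c0 * N ^ 10 * exp (N * E)) * ((1 + |y|) ^ 10 * exp (-(ε * |y|))) := by
    apply integral_mono_of_nonneg (ae_of_all _ fun y => by
      have := ww_pos y; simp only [Pi.zero_apply]; positivity) ((pow_exp_int ε hε 10).const_mul _)
    refine ae_of_all _ fun y => ?_
    beta_reduce
    have k1 := cb_line_bound 15 N (by norm_num) (by norm_num) hN w hw y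
    have k2 := cb_line_bound 25 N (by norm_num) (by norm_num) hN w hw y
    have k3 := cb_line_bound 35 N (by norm_num) (by norm_num) hN w hw y
    have k4 := hPb y
    have k5 := ww_le y
    unfold RR
    rw [map_mul, map_mul, map_mul, norm_mul, norm_mul, norm_mul]
    generalize (((3 * N - 1 / 2 : ℝ) : ℂ) + y * Complex.I) = ζ at k1 k2 k3 k4 ⊢
    norm_num at k1 k2 k3
    have hwp := ww_pos y
    set Y := |y| + 1 with hY
    have hYp : 0 < Y := by positivity
    refine (mul_le_mul (mul_le_mul_of_nonneg_right (mul_le_mul (mul_le_mul (mul_le_mul k1 k2 (norm_nonneg _) (by positivity)) k3 (norm_nonneg _) (by positivity)) k4 (norm_nonneg _) (by positivity)) (exp_pos _).le) k5 hwp.le (by positivity)).trans ?_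
    have s2 : exp (Y * (arctan (18 / w) + arctan (12 / w))) * exp (Y * (arctan (28 / w) + arctan (22 / w))) * exp (Y * (arctan (38 / w) + arctan (32 / w))) * exp (-(2 * π * |y|))
        ≤ exp (2 * π - ε) * exp (-(ε * |y|)) := by
      rw [← exp_add, ← exp_add, ← exp_add, ← exp_add]
      apply exp_le_exp.2
      have := mul_le_mul_of_nonneg_left hsum hYp.le
      have : Y * (2 * π - ε) - 2 * π * |y| = 2 * π - ε - ε * |y| := by rw [hY]; ring
      linarith
    have s3 : exp (N * E) = exp (N * EE w 15) * exp (N * EE w 25) * exp (N * EE w 35) := by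
      rw [← exp_add, ← exp_add, hE]; congr 1; ring
    have s4 : (1 + |y|) = Y := by rw [hY]; ring
    rw [s3, s4]
    have pn : 0 ≤ exp (N * EE w 15) * exp (N * EE w 25) * exp (N * EE w 35) * (39 ^ 6 * 8 ^ 4 * N ^ 10 * Y ^ 10) * exp (-log xx / 2) * 4 := by positivity
    have := mul_le_mul_of_nonneg_left s2 pn
    refine le_trans (le_of_eq ?_) (this.trans (le_of_eq ?_))
    · ring
    · rw [hc0]; ring
  rw [integral_const_mul, ← hW] at hint
  have e6 : exp (N * (E + 3 * log xx)) = exp (N * E) * xx ^ (3 * N) := by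
    rw [mul_add, exp_add, ← exp_log (pow_pos hx (3 * N)), log_pow]; congr 2; push_cast; ring
  rw [e6]
  calc _ ≤ π / 2 * xx ^ (3 * N) * (c0 * N ^ 10 * exp (N * E) * W) := hb.trans (by gcongr)
    _ ≤ π / 2 * xx ^ (3 * N) * (c0 * N ^ 10 * exp (N * E) * (W + 1)) := by gcongr; linarith
    _ = _ := by ring
end PartD3

section PartE
open Real Polynomial

lemma cb_nat_le (a v : ℕ) (y : ℝ) (hy : 0 < y) (hy1 : y < 1) :
    (cb a).eval (v : ℝ) ≤ y ^ a / (1 - y) ^ (2 * a + 1) * (y⁻¹) ^ v := by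
  have h1 : 0 < 1 - y := by linarith
  rw [cb_eval_nat]
  by_cases hv : v < a
  · rw [Nat.choose_eq_zero_of_lt (by omega)]
    have : 0 < y⁻¹ := by positivity
    simp only [Nat.cast_zero]; positivity
  · obtain ⟨u, rfl⟩ : ∃ u, v = u + a := ⟨v - a, by omega⟩
    have hs := hasSum_choose_mul_geometric_of_norm_lt_one (𝕜 := ℝ) (2 * a) (r := y) (by rw [norm_of_nonneg hy.le]; exact hy1)
    have := le_hasSum hs u (fun i _ => by positivity)
    rw [show u + a + a = u + 2 * a by ring]
    have e : y ^ a / (1 - y) ^ (2 * a + 1) * y⁻¹ ^ (u + a) = (1 / (1 - y) ^ (2 * a + 1)) * (y ^ u)⁻¹ := by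
      rw [inv_pow, pow_add y u a]; field_simp
    rw [e, ← div_eq_mul_inv, le_div_iff₀ (by positivity)]
    exact this

lemma cb_nat_nonneg (a v : ℕ) : 0 ≤ (cb a).eval (v : ℝ) := by
  rw [cb_eval_nat]; positivity

lemma P_nat {P : ℝ[X]} (hP : P ∈ ({1, (2 * X + 1) ^ 2, (2 * X + 1) ^ 4} : Set ℝ[X])) (v : ℕ) :
    |P.eval (v : ℝ)| ≤ (2 * v + 1) ^ 4 := by
  have h : (1 : ℝ) ≤ 2 * v + 1 := by have : (0 : ℝ) ≤ v := by positivity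
                                     linarith
  rcases hP with rfl | rfl | rfl
  · simpa using one_le_pow₀ h
  · simp only [eval_pow, eval_add, eval_mul, eval_X, eval_one, eval_ofNat]
    rw [abs_of_nonneg (by positivity)]
    exact pow_le_pow_right₀ h (by norm_num)
  · simp only [eval_pow, eval_add, eval_mul, eval_X, eval_one, eval_ofNat]
    rw [abs_of_nonneg (by positivity)]

noncomputable def qq (al y : ℝ) : ℝ := al * log y - 2 * al * log (1 - y)

lemma Q_bound (y1 y2 y3 : ℝ) (h1 : 0 < y1) (h1' : y1 < 1) (h2 : 0 < y2) (h2' : y2 < 1) (h3 : 0 < y3) (h3' : y3 < 1)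
    (hx : xx < y1 * y2 * y3) : ∃ C : ℝ, 0 < C ∧ ∀ N : ℕ, ∀ P ∈ ({1, (2 * X + 1) ^ 2, (2 * X + 1) ^ 4} : Set ℝ[X]),
      |∑' v : ℕ, (RR N * P).eval (v : ℝ) * xx ^ v| ≤ C * exp (N * (qq 15 y1 + qq 25 y2 + qq 35 y3)) := by
  have hxp := xx_pos
  set r := xx * (y1⁻¹ * y2⁻¹ * y3⁻¹) with hr
  have hr1 : r < 1 := by
    have : r = xx / (y1 * y2 * y3) := by rw [hr]; field_simp
    rw [this, div_lt_one (by positivity)]; exact hx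
  have hr0 : 0 < r := by positivity
  have hs := summ_poly ((2 * X + 1) ^ 4) r (by rw [norm_of_nonneg hr0.le]; exact hr1)
  simp only [eval_pow, eval_add, eval_mul, eval_X, eval_one, eval_ofNat] at hs
  set W := ∑' v : ℕ, (2 * (v : ℝ) + 1) ^ 4 * r ^ v with hW
  have hW0 : 0 ≤ W := tsum_nonneg fun v => by positivity
  have g1 : 0 < 1 - y1 := by linarith
  have g2 : 0 < 1 - y2 := by linarith
  have g3 : 0 < 1 - y3 := by linarith
  refine ⟨(W + 1) / ((1 - y1) * (1 - y2) * (1 - y3)), by positivity, ?_⟩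
  intro N P hP
  set Z := (y1 ^ (15 * N) / (1 - y1) ^ (2 * (15 * N) + 1)) * (y2 ^ (25 * N) / (1 - y2) ^ (2 * (25 * N) + 1)) * (y3 ^ (35 * N) / (1 - y3) ^ (2 * (35 * N) + 1)) with hZ
  have hZ0 : 0 < Z := by positivity
  have hb : ∀ v : ℕ, ‖(RR N * P).eval (v : ℝ) * xx ^ v‖ ≤ Z * ((2 * (v : ℝ) + 1) ^ 4 * r ^ v) := by
    intro v
    unfold RR
    rw [norm_mul, eval_mul, norm_mul, eval_mul, eval_mul, norm_of_nonneg (pow_pos hxp v).le, norm_eq_abs (P.eval _)]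
    have n1 := cb_nat_nonneg (15 * N) v
    have n2 := cb_nat_nonneg (25 * N) v
    have n3 := cb_nat_nonneg (35 * N) v
    rw [norm_of_nonneg (by positivity)]
    have k1 := cb_nat_le (15 * N) v y1 h1 h1'
    have k2 := cb_nat_le (25 * N) v y2 h2 h2'
    have k3 := cb_nat_le (35 * N) v y3 h3 h3'
    have k4 := P_nat hP v
    have i1 : 0 < y1⁻¹ := by positivity
    have i2 : 0 < y2⁻¹ := by positivity
    have i3 : 0 < y3⁻¹ := by positivity
    refine (mul_le_mul_of_nonneg_right (mul_le_mul (mul_le_mul (mul_le_mul k1 k2 n2 (by positivity)) k3 n3 (by positivity)) k4 (abs_nonneg _) (by positivity)) (pow_pos hxp v).le).trans (le_of_eq ?_)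
    rw [hZ, hr, mul_pow, mul_pow, mul_pow]; ring
  have hs2 : Summable fun v : ℕ => ‖(RR N * P).eval (v : ℝ) * xx ^ v‖ :=
    Summable.of_nonneg_of_le (fun _ => norm_nonneg _) hb (hs.mul_left Z)
  have h5 := (norm_tsum_le_tsum_norm hs2).trans (hs2.tsum_le_tsum hb (hs.mul_left Z))
  rw [tsum_mul_left, ← hW] at h5
  rw [← norm_eq_abs]
  have e : ∀ (al : ℕ) (y : ℝ), 0 < y → y < 1 → y ^ (al * N) / (1 - y) ^ (2 * (al * N) + 1) = exp (N * qq al y) / (1 - y) := by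
    intro al y hy hy1
    have g : 0 < 1 - y := by linarith
    have : N * qq al y = ((al * N : ℕ) : ℝ) * log y - ((2 * (al * N) : ℕ) : ℝ) * log (1 - y) := by
      unfold qq; push_cast; ring
    rw [this, exp_sub, exp_nat_mul, exp_nat_mul, exp_log hy, exp_log g, pow_succ]
    field_simp
  have e1 := e 15 y1 h1 h1'
  have e2 := e 25 y2 h2 h2'
  have e3 := e 35 y3 h3 h3'
  push_cast at e1 e2 e3
  rw [e1, e2, e3] at hZ
  have e4 : exp (N * (qq 15 y1 + qq 25 y2 + qq 35 y3)) = exp (N * qq 15 y1) * exp (N * qq 25 y2) * exp (N * qq 35 y3) := by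
    rw [← exp_add, ← exp_add]; congr 1; ring
  refine h5.trans ?_
  rw [e4, hZ]
  calc _ ≤ exp (N * qq 15 y1) / (1 - y1) * (exp (N * qq 25 y2) / (1 - y2)) * (exp (N * qq 35 y3) / (1 - y3)) * (W + 1) := by
        gcongr; linarith
    _ = _ := by field_simp

-- wrapper
lemma P_int {P : ℝ[X]} (hP : P ∈ ({1, (2 * X + 1) ^ 2, (2 * X + 1) ^ 4} : Set ℝ[X])) :
    ∃ P0 : ℤ[X], P = P0.map (Int.castRingHom ℝ) ∧ ∀ z : ℝ, P.eval (-1 - z) = P.eval z := by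
  rcases hP with rfl | rfl | rfl
  · exact ⟨1, by simp, by simp⟩
  · exact ⟨(2 * X + 1) ^ 2, by simp, fun z => by simp; ring⟩
  · exact ⟨(2 * X + 1) ^ 4, by simp, fun z => by simp; ring⟩

lemma map_int (P0 : ℤ[X]) (k : ℕ) : (P0.map (Int.castRingHom ℝ)).eval (k : ℝ) = ((P0.eval (k : ℤ) : ℤ) : ℝ) := by
  have := eval_intCast_map (Int.castRingHom ℝ) P0 (k : ℤ)
  simpa using this

lemma cb_van (a k : ℕ) (h : k < a) : (cb a).eval (k : ℝ) = 0 := by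
  rw [cb_eval_nat, Nat.choose_eq_zero_of_lt (by omega)]; simp

lemma S_van (N : ℕ) (P : ℝ[X]) (k : ℕ) (h : k < 25 * N) : (RR N * P).eval (k : ℝ) = 0 ∧ (RR N * P).derivative.eval (k : ℝ) = 0 := by
  have h1 := cb_van (25 * N) k h
  have h2 := cb_van (35 * N) k (by omega)
  unfold RR
  simp [derivative_mul, h1, h2]

lemma S_form (N M : ℕ) (hN : 0 < N) (hM : 70 * M ^ 2 ≤ 25 * N) (P : ℝ[X])
    (hP : P ∈ ({1, (2 * X + 1) ^ 2, (2 * X + 1) ^ 4} : Set ℝ[X])) :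
    ∃ A B : ℤ, (DD N M / 3 ^ (25 * N) * ∑' v : ℕ, (RR N * P).eval (v : ℝ) * xx ^ v = A * ((√13 + 1) / 2)) ∧
      ∀ β, DD N M / 3 ^ (25 * N) * Lam β (RR N * P) = ((√13 + 1) / 2) / √13 * (√13 * β * A + 13 * B) := by
  obtain ⟨P0, hP0, hPs⟩ := P_int hP
  apply linear_form
  · intro z
    unfold RR
    rw [eval_mul, eval_mul, eval_mul, eval_mul, eval_mul, eval_mul, cb_symm, cb_symm, cb_symm, hPs]
  · intro k
    obtain ⟨z, hz⟩ := DD_RR N M k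
    refine ⟨z * P0.eval (k : ℤ), ?_⟩
    rw [eval_mul, ← mul_assoc, hz, hP0, map_int]; push_cast; ring
  · intro k
    obtain ⟨z, hz⟩ := DD_RR N M k
    obtain ⟨z', hz'⟩ := DD_RRd N M k hM hN
    refine ⟨z' * P0.eval (k : ℤ) + z * P0.derivative.eval (k : ℤ), ?_⟩
    rw [derivative_mul, eval_add, eval_mul, eval_mul, mul_add, ← mul_assoc, ← mul_assoc, hz, hz', hP0, derivative_map, map_int, map_int]
    push_cast; ring
  · exact fun k hk => (S_van N P k hk).1
  · exact fun k hk => (S_van N P k hk).2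

-- measure lemma
lemma measure_lemma (α q0 f0 C : ℝ) (hq : 0 < q0) (hf : 0 < f0) (hC : 1 ≤ C) (N0 : ℕ)
    (H : ∀ (p : ℤ) (q : ℕ), 0 < q → ∀ N : ℕ, N0 ≤ N → ∃ A B : ℤ, |(A : ℝ)| ≤ C * exp (q0 * N) ∧
      |α * A + B| ≤ C * exp (-(f0 * N)) ∧ p * A + q * B ≠ 0) (κ : ℝ) (hκ : 1 + q0 / f0 < κ) :
    {pq : ℤ × ℕ+ | |α - (pq.1 : ℝ) / (pq.2 : ℝ)| < (pq.2 : ℝ) ^ (-κ)}.Finite := by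
  -- lower bound
  obtain ⟨c, hc, hlow⟩ : ∃ c : ℝ, 0 < c ∧ ∀ (p : ℤ) (q : ℕ), 0 < q → c * (q : ℝ) ^ (-(1 + q0 / f0)) ≤ |α - p / q| := by
    set C' := C * exp (q0 * (N0 + 1)) * exp (q0 / f0 * log (2 * C)) with hC'
    have hC'p : 0 < C' := by positivity
    refine ⟨1 / (2 * C'), by positivity, ?_⟩
    intro p q hq1
    have hqr : (1 : ℝ) ≤ q := by exact_mod_cast hq1
    have hq0 : (0 : ℝ) < q := by linarith
    set N := N0 + ⌈log (2 * C * q) / f0⌉₊ with hN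
    have hlog : 0 ≤ log (2 * C * q) := log_nonneg (by nlinarith)
    have hN1 : log (2 * C * q) ≤ f0 * N := by
      have := Nat.le_ceil (log (2 * C * q) / f0)
      rw [div_le_iff₀ hf] at this
      have h2 : (0 : ℝ) ≤ N0 := by positivity
      rw [hN]; push_cast; nlinarith
    have hN2 : (N : ℝ) ≤ N0 + 1 + log (2 * C * q) / f0 := by
      have := Nat.ceil_lt_add_one (a := log (2 * C * q) / f0) (by positivity)
      rw [hN]; push_cast; linarith
    obtain ⟨A, B, hA, hB, hne⟩ := H p q hq1 N (by omega)
    have h1 : (1 : ℝ) ≤ |(p : ℝ) * A + q * B| := by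
      have := Int.one_le_abs hne
      exact_mod_cast this
    have h2 : (p : ℝ) * A + q * B = q * (α * A + B) - q * A * (α - p / q) := by
      field_simp; ring
    have h3 : |(p : ℝ) * A + q * B| ≤ q * |α * A + B| + q * |(A : ℝ)| * |α - p / q| := by
      rw [h2]
      refine (abs_sub _ _).trans (le_of_eq ?_)
      rw [abs_mul, abs_mul, abs_mul, abs_of_pos hq0]
    have h4 : C * exp (-(f0 * N)) ≤ 1 / (2 * q) := by
      have : exp (-(f0 * N)) ≤ exp (-log (2 * C * q)) := exp_le_exp.2 (by linarith)
      rw [exp_neg (log _), exp_log (by positivity)] at this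
      calc _ ≤ C * (2 * C * q)⁻¹ := by gcongr
        _ = _ := by field_simp
    have h5 : q * |α * A + B| ≤ 1 / 2 := by
      calc (q : ℝ) * |α * A + B| ≤ q * (1 / (2 * q)) := mul_le_mul_of_nonneg_left (hB.trans h4) hq0.le
        _ = 1 / 2 := by field_simp
    have h6 : C * exp (q0 * N) ≤ C' * (q : ℝ) ^ (q0 / f0) := by
      have : exp (q0 * N) ≤ exp (q0 * (N0 + 1) + q0 / f0 * log (2 * C) + log q * (q0 / f0)) := by
        apply exp_le_exp.2
        have e : log (2 * C * q) = log (2 * C) + log q := log_mul (by positivity) (by positivity)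
        rw [e] at hN2
        calc q0 * N ≤ q0 * (N0 + 1 + (log (2 * C) + log q) / f0) := by gcongr
          _ = _ := by field_simp; ring
      rw [exp_add, exp_add, ← rpow_def_of_pos hq0] at this
      calc _ ≤ C * (exp (q0 * (N0 + 1)) * exp (q0 / f0 * log (2 * C)) * (q : ℝ) ^ (q0 / f0)) := by gcongr
        _ = _ := by rw [hC']; ring
    have h7 : 1 / 2 ≤ q * (C' * (q : ℝ) ^ (q0 / f0)) * |α - p / q| := by
      have : q * |(A : ℝ)| * |α - p / q| ≤ q * (C' * (q : ℝ) ^ (q0 / f0)) * |α - p / q| := by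
        have := hA.trans h6
        gcongr
      linarith
    rw [rpow_neg hq0.le, rpow_add hq0, rpow_one]
    have hpw : 0 < (q : ℝ) ^ (q0 / f0) := by positivity
    rw [← div_eq_mul_inv, div_div, div_le_iff₀ (by positivity)]
    nlinarith
  set d := κ - (1 + q0 / f0) with hd
  have hdp : 0 < d := by linarith
  set Qb := ⌈(1 / c) ^ (1 / d)⌉₊ with hQb
  have hqb : ∀ pq : ℤ × ℕ+, |α - (pq.1 : ℝ) / (pq.2 : ℝ)| < (pq.2 : ℝ) ^ (-κ) → (pq.2 : ℕ) ≤ Qb ∧ |pq.1| ≤ ⌈(Qb : ℝ) * (|α| + 1)⌉₊ := by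
    rintro ⟨p, q⟩ h
    simp only at h ⊢
    have h1 := (hlow p q q.pos).trans_lt h
    have hqr : (1 : ℝ) ≤ (q : ℕ) := by exact_mod_cast q.pos
    have hq0 : (0 : ℝ) < (q : ℕ) := by linarith
    have h2 : ((q : ℕ) : ℝ) ^ d < 1 / c := by
      have e : ((q : ℕ) : ℝ) ^ (-(1 + q0 / f0)) = ((q : ℕ) : ℝ) ^ d * ((q : ℕ) : ℝ) ^ (-κ) := by
        rw [← rpow_add hq0]; congr 1; rw [hd]; ring
      rw [e] at h1
      have hk : 0 < ((q : ℕ) : ℝ) ^ (-κ) := by positivity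
      rw [lt_div_iff₀ hc]
      nlinarith
    have h3 : ((q : ℕ) : ℝ) ≤ (1 / c) ^ (1 / d) := by
      have := rpow_le_rpow (by positivity) h2.le (by positivity : 0 ≤ 1 / d)
      rwa [← rpow_mul hq0.le, mul_one_div_cancel hdp.ne', rpow_one] at this
    have h4 : (q : ℕ) ≤ Qb := by
      have := h3.trans (Nat.le_ceil _)
      exact_mod_cast this
    refine ⟨h4, ?_⟩
    have hk1 : 0 ≤ q0 / f0 := by positivity
    have h5 : ((q : ℕ) : ℝ) ^ (-κ) ≤ 1 := rpow_le_one_of_one_le_of_nonpos hqr (by linarith)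
    have h6 : |(p : ℝ) / (q : ℕ)| ≤ |α| + 1 := by
      have := abs_sub_abs_le_abs_sub ((p : ℝ) / (q : ℕ)) α
      rw [abs_sub_comm] at this
      have h7 := h.le.trans h5
      linarith
    rw [abs_div, abs_of_pos hq0, div_le_iff₀ hq0] at h6
    have h8 : |(p : ℝ)| ≤ (Qb : ℝ) * (|α| + 1) := by
      have : ((q : ℕ) : ℝ) ≤ Qb := by exact_mod_cast h4
      have h9 := abs_nonneg α
      nlinarith
    have := h8.trans (Nat.le_ceil _)
    exact_mod_cast this
  set R := ⌈(Qb : ℝ) * (|α| + 1)⌉₊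
  have hfin : ((Set.Icc (-(R : ℤ)) R) ×ˢ {q : ℕ+ | (q : ℕ) ≤ Qb}).Finite := by
    apply Set.Finite.prod (Set.finite_Icc _ _)
    exact Set.Finite.preimage (fun a _ b _ h => PNat.coe_injective h) (Set.finite_Iic Qb)
  refine hfin.subset fun pq h => ?_
  have := hqb pq h
  exact ⟨Set.mem_Icc.2 (abs_le.1 this.2), this.1⟩
end PartE

section PartF1
open Real

lemma log_tan (a b c : ℤ) (L : ℝ) (hL : 0 < L) :
    log L ≤ a * log 2 + b * log 3 + c * log 5 + (L / (2 ^ a * 3 ^ b * 5 ^ c) - 1) := by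
  have h0 : (0 : ℝ) < 2 ^ a * 3 ^ b * 5 ^ c := by positivity
  have h1 := log_le_sub_one_of_pos (div_pos hL h0)
  rw [log_div hL.ne' h0.ne', log_mul (by positivity) (by positivity), log_mul (by positivity) (by positivity),
    log_zpow, log_zpow, log_zpow] at h1
  linarith

lemma log7_bd : 1.94591 < log 7 ∧ log 7 < 1.945911 := by
  have h1 := log_le_sub_one_of_pos (x := 2401 / 2400) (by norm_num)
  have h2 := one_sub_inv_le_log_of_pos (x := 2401 / 2400) (by norm_num)
  have e : log (2401 / 2400) = 4 * log 7 - (5 * log 2 + log 3 + 2 * log 5) := by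
    rw [log_div (by norm_num) (by norm_num), show (2401 : ℝ) = 7 ^ 4 by norm_num,
      show (2400 : ℝ) = 2 ^ 5 * 3 * 5 ^ 2 by norm_num, log_mul (by norm_num) (by norm_num),
      log_mul (by norm_num) (by norm_num), log_pow, log_pow, log_pow]
    push_cast; ring
  have a1 := log_two_gt_d9
  have a2 := log_two_lt_d9
  have a3 := log_three_gt_d9
  have a4 := log_three_lt_d9
  have a5 := log_five_gt_d9
  have a6 := log_five_lt_d9
  norm_num at h1 h2 a1 a2 a3 a4 a5 a6 ⊢
  constructor <;> linarith

lemma xx_hi : xx < 0.5657416 := by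
  have h1 := s13_pos
  have h2 := s13_hi
  unfold xx
  rw [div_lt_iff₀ (by linarith)]
  norm_num at h2 ⊢
  linarith

noncomputable def yz (a : ℝ) : ℝ := (52.87592 - a) / (52.87592 + a)

lemma qq_yz (a : ℝ) (ha : 0 < a) (ha' : a ≤ 7) :
    qq (5 * a) (yz a) = 5 * a * (log (52.87592 ^ 2 - a ^ 2) - 2 * log (2 * a)) := by
  unfold qq yz
  have h1 : 0 < 52.87592 - a := by norm_num; linarith
  have h2 : 0 < 52.87592 + a := by positivity
  have e : 1 - (52.87592 - a) / (52.87592 + a) = 2 * a / (52.87592 + a) := by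
    field_simp; ring
  rw [e, log_div h1.ne' h2.ne', log_div (by positivity) h2.ne',
    show 52.87592 ^ 2 - a ^ 2 = (52.87592 - a) * (52.87592 + a) by ring, log_mul h1.ne' h2.ne']
  ring

lemma logs_small : log 6 = log 2 + log 3 ∧ log 10 = log 2 + log 5 ∧ log 14 = log 2 + log 7 ∧
    log 30 = log 2 + log 3 + log 5 ∧ log 50 = log 2 + 2 * log 5 ∧ log 70 = log 2 + log 5 + log 7 := by
  refine ⟨?_, ?_, ?_, ?_, ?_, ?_⟩
  · rw [← log_mul (by norm_num) (by norm_num)]; norm_num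
  · rw [← log_mul (by norm_num) (by norm_num)]; norm_num
  · rw [← log_mul (by norm_num) (by norm_num)]; norm_num
  · rw [← log_mul (by norm_num) (by norm_num), ← log_mul (by norm_num) (by norm_num)]; norm_num
  · rw [show (50 : ℝ) = 2 * 5 ^ 2 by norm_num, log_mul (by norm_num) (by norm_num), log_pow]; norm_num
  · rw [← log_mul (by norm_num) (by norm_num), ← log_mul (by norm_num) (by norm_num)]; norm_num

lemma Q_num : qq 15 (yz 3) + qq 25 (yz 5) + qq 35 (yz 7) ≤ 240.68443 := by
  rw [show (15 : ℝ) = 5 * 3 by norm_num, show (25 : ℝ) = 5 * 5 by norm_num, show (35 : ℝ) = 5 * 7 by norm_num,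
    qq_yz 3 (by norm_num) (by norm_num), qq_yz 5 (by norm_num) (by norm_num), qq_yz 7 (by norm_num) (by norm_num)]
  have l1 := log_tan 11 12 (-8) (52.87592 ^ 2 - 3 ^ 2) (by norm_num)
  have l2 := log_tan (-21) 19 1 (52.87592 ^ 2 - 5 ^ 2) (by norm_num)
  have l3 := log_tan (-8) 2 7 (52.87592 ^ 2 - 7 ^ 2) (by norm_num)
  obtain ⟨e1, e2, e3, -, -, -⟩ := logs_small
  obtain ⟨b1, b2⟩ := log7_bd
  have a1 := log_two_gt_d9
  have a2 := log_two_lt_d9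
  have a3 := log_three_gt_d9
  have a4 := log_three_lt_d9
  have a5 := log_five_gt_d9
  have a6 := log_five_lt_d9
  norm_num at l1 l2 l3 a1 a2 a3 a4 a5 a6 b1 b2 e1 e2 e3 ⊢
  rw [e1, e2, e3]
  linarith

lemma F_num : EE 13.036383 15 + EE 13.036383 25 + EE 13.036383 35 + 3 * log xx ≤ -85.35888 := by
  unfold EE
  have l1 := log_tan (-7) (-5) 10 ((15 - 3) ^ 2 + 13.036383 ^ 2) (by norm_num)
  have l2 := log_tan 6 (-4) 4 ((15 + 3) ^ 2 + 13.036383 ^ 2) (by norm_num)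
  have l3 := log_tan (-9) (-6) 12 ((25 - 3) ^ 2 + 13.036383 ^ 2) (by norm_num)
  have l4 := log_tan (-11) 0 9 ((25 + 3) ^ 2 + 13.036383 ^ 2) (by norm_num)
  have l5 := log_tan 10 6 (-4) ((35 - 3) ^ 2 + 13.036383 ^ 2) (by norm_num)
  have l6 := log_tan (-7) 17 (-4) ((35 + 3) ^ 2 + 13.036383 ^ 2) (by norm_num)
  have l7 := log_tan (-10) (-3) 6 0.5657416 (by norm_num)
  have l8 := log_le_log xx_pos xx_hi.le
  obtain ⟨-, -, -, e1, e2, e3⟩ := logs_small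
  obtain ⟨b1, b2⟩ := log7_bd
  have a1 := log_two_gt_d9
  have a2 := log_two_lt_d9
  have a3 := log_three_gt_d9
  have a4 := log_three_lt_d9
  have a5 := log_five_gt_d9
  have a6 := log_five_lt_d9
  norm_num at l1 l2 l3 l4 l5 l6 l7 l8 a1 a2 a3 a4 a5 a6 b1 b2 e1 e2 e3 ⊢
  rw [e1, e2, e3]
  linarith

lemma yz_num : xx < yz 3 * yz 5 * yz 7 := by
  have h1 := s13_pos
  have h2 := s13_sq
  have h3 : √13 < 3.60555128 := by
    rw [sqrt_lt' (by norm_num)]; norm_num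
  unfold xx yz
  rw [div_lt_iff₀ (by linarith)]
  norm_num at h3 ⊢
  linarith

lemma arctan_num : ∃ ε > 0, arctan (18/13.036383)+arctan (12/13.036383)+(arctan (28/13.036383)+arctan (22/13.036383))+(arctan (38/13.036383)+arctan (32/13.036383)) ≤ 2*π-ε := by
  have key : ∀ b : ℝ, 0 < b → arctan (b / 13.036383) = π / 2 - arctan (13.036383 / b) := by
    intro b hb
    rw [← arctan_inv_of_pos (by positivity), inv_div]
  rw [key 18 (by norm_num), key 12 (by norm_num), key 28 (by norm_num), key 22 (by norm_num), key 38 (by norm_num),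
    key 32 (by norm_num)]
  have h1 := arctan_add (x := 13.036383 / 12) (y := 13.036383 / 38) (by norm_num)
  have h2 := arctan_add (x := 13.036383 / 18) (y := 13.036383 / 28) (by norm_num)
  have h3 := arctan_add (x := 13.036383 / 22) (y := 13.036383 / 32) (by norm_num)
  have h4 := arctan_add_eq_add_pi (x := ((13.036383 / 12 + 13.036383 / 38) / (1 - 13.036383 / 12 * (13.036383 / 38))))
    (y := ((13.036383 / 18 + 13.036383 / 28) / (1 - 13.036383 / 18 * (13.036383 / 28)))) (by norm_num) (by norm_num)
  have h5 : -arctan (((13.036383 / 12 + 13.036383 / 38) / (1 - 13.036383 / 12 * (13.036383 / 38)) +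
    (13.036383 / 18 + 13.036383 / 28) / (1 - 13.036383 / 18 * (13.036383 / 28))) / (1 - (13.036383 / 12 + 13.036383 / 38) / (1 - 13.036383 / 12 * (13.036383 / 38)) *
    ((13.036383 / 18 + 13.036383 / 28) / (1 - 13.036383 / 18 * (13.036383 / 28))))) <
     arctan ((13.036383 / 22 + 13.036383 / 32) / (1 - 13.036383 / 22 * (13.036383 / 32))) := by
    rw [← arctan_neg]
    apply arctan_strictMono
    norm_num
  refine ⟨_, sub_pos.2 h5, ?_⟩
  linarith

end PartF1

section PartF2
open Real

noncomputable def SS (M : ℕ) : ℝ := ∑ i ∈ Finset.range M ×ˢ (Finset.univ : Finset (Fin 6)),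
      (840 / (168 * (i.1 : ℝ) + alf i.2) - 840 / (168 * (i.1 : ℝ) + bef i.2))

def tm1 (k a b : ℕ) : ℕ := 8400000000000 * (b - a) / ((168 * k + a) * (168 * k + b))
def tm (k : ℕ) : ℕ := tm1 k 14 36 + tm1 k 42 60 + tm1 k 63 72 + tm1 k 98 120 + tm1 k 126 144 + tm1 k 147 156
def sumr : ℕ → ℕ
  | 0 => 0
  | k + 1 => sumr k + tm k

noncomputable def gk (k : ℕ) : ℝ := ∑ t : Fin 6, (840 / (168 * (k : ℝ) + alf t) - 840 / (168 * (k : ℝ) + bef t))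

lemma SS_eq (M : ℕ) : SS M = ∑ k ∈ Finset.range M, gk k := by
  unfold SS gk; rw [Finset.sum_product]

lemma gk_eq (k : ℕ) : gk k = (840 / (168 * (k : ℝ) + 14) - 840 / (168 * (k : ℝ) + 36)) +
    (840 / (168 * (k : ℝ) + 42) - 840 / (168 * (k : ℝ) + 60)) +
    (840 / (168 * (k : ℝ) + 63) - 840 / (168 * (k : ℝ) + 72)) +
    (840 / (168 * (k : ℝ) + 98) - 840 / (168 * (k : ℝ) + 120)) +
    (840 / (168 * (k : ℝ) + 126) - 840 / (168 * (k : ℝ) + 144)) +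
    (840 / (168 * (k : ℝ) + 147) - 840 / (168 * (k : ℝ) + 156)) := by
  unfold gk
  rw [Fin.sum_univ_six]
  simp [alf, bef]

lemma tm1_le (k a b : ℕ) (ha : 0 < a) (hab : a ≤ b) :
    (tm1 k a b : ℝ) / 10 ^ 10 ≤ 840 / (168 * (k : ℝ) + a) - 840 / (168 * (k : ℝ) + b) := by
  have h1 : (tm1 k a b : ℝ) ≤ ((8400000000000 * (b - a) : ℕ) : ℝ) / (((168 * k + a) * (168 * k + b) : ℕ) : ℝ) := Nat.cast_div_le
  have ha' : (0 : ℝ) < a := by exact_mod_cast ha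
  have hb' : (0 : ℝ) < b := by exact_mod_cast ha.trans_le hab
  rw [div_le_iff₀ (by positivity)]
  refine h1.trans (le_of_eq ?_)
  push_cast [Nat.cast_sub hab]
  rw [div_sub_div _ _ (by positivity) (by positivity)]
  rw [div_mul_eq_mul_div]
  congr 1
  ring

lemma tm_le (k : ℕ) : (tm k : ℝ) / 10 ^ 10 ≤ gk k := by
  rw [gk_eq]
  have h1 := tm1_le k 14 36 (by norm_num) (by norm_num)
  have h2 := tm1_le k 42 60 (by norm_num) (by norm_num)
  have h3 := tm1_le k 63 72 (by norm_num) (by norm_num)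
  have h4 := tm1_le k 98 120 (by norm_num) (by norm_num)
  have h5 := tm1_le k 126 144 (by norm_num) (by norm_num)
  have h6 := tm1_le k 147 156 (by norm_num) (by norm_num)
  unfold tm
  push_cast at *
  simp only [add_div]
  linarith

lemma sumr_le (K : ℕ) : (sumr K : ℝ) / 10 ^ 10 ≤ ∑ k ∈ Finset.range K, gk k := by
  induction K with
  | zero => simp [sumr]
  | succ k ih =>
    rw [Finset.sum_range_succ]
    have := tm_le k
    simp only [sumr]
    push_cast
    rw [add_div]
    linarith

set_option maxRecDepth 20000 in
lemma sumr_num : 499451890000 ≤ sumr 500 := by decide +kernel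

lemma tl1 (k a b : ℝ) (hk : 0 ≤ k) (ha : 0 < a) (hab : a ≤ b) (hb : b ≤ 168) :
    (b - a) * (840 / 168 ^ 2) * (1 / (k + 1) - 1 / (k + 2)) ≤ 840 / (168 * k + a) - 840 / (168 * k + b) := by
  have hb' : 0 < b := by linarith
  rw [div_sub_div _ _ (by positivity) (by positivity), div_sub_div _ _ (by positivity) (by positivity)]
  have e : 840 * (168 * k + b) - (168 * k + a) * 840 = (b - a) * 840 := by ring
  rw [e]
  have e2 : (b - a) * (840 / 168 ^ 2) * ((1 * (k + 2) - (k + 1) * 1) / ((k + 1) * (k + 2))) = (b - a) * 840 / ((168 * k + 168) * (168 * k + 336)) := by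
    field_simp; ring
  rw [e2]
  have : 0 ≤ b - a := by linarith
  apply div_le_div_of_nonneg_left (by positivity) (by positivity)
  apply mul_le_mul <;> first | positivity | linarith

lemma gk_tail (k : ℕ) : 98 * (840 / 168 ^ 2) * (1 / ((k : ℝ) + 1) - 1 / ((k : ℝ) + 2)) ≤ gk k := by
  rw [gk_eq]
  have hk : (0 : ℝ) ≤ k := by positivity
  have h1 := tl1 k 14 36 hk (by norm_num) (by norm_num) (by norm_num)
  have h2 := tl1 k 42 60 hk (by norm_num) (by norm_num) (by norm_num)
  have h3 := tl1 k 63 72 hk (by norm_num) (by norm_num) (by norm_num)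
  have h4 := tl1 k 98 120 hk (by norm_num) (by norm_num) (by norm_num)
  have h5 := tl1 k 126 144 hk (by norm_num) (by norm_num) (by norm_num)
  have h6 := tl1 k 147 156 hk (by norm_num) (by norm_num) (by norm_num)
  linarith

lemma SS_tail (K j : ℕ) : SS K + 98 * (840 / 168 ^ 2) * (1 / ((K : ℝ) + 1) - 1 / ((K : ℝ) + j + 1)) ≤ SS (K + j) := by
  induction j with
  | zero => simp
  | succ j ih =>
    rw [SS_eq (K + (j + 1)), ← add_assoc, Finset.sum_range_succ, ← SS_eq]
    have := gk_tail (K + j)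
    push_cast at this ⊢
    rw [show (K : ℝ) + (j + 1) + 1 = K + j + 2 by ring]
    linarith

lemma SS_num : 49.951 ≤ SS 1000000 := by
  have h1 := SS_tail 500 999500
  have h2 := sumr_le 500
  have h3 : ((499451890000 : ℕ) : ℝ) ≤ (sumr 500 : ℝ) := by exact_mod_cast sumr_num
  rw [← SS_eq] at h2
  rw [show 500 + 999500 = 1000000 from rfl] at h1
  generalize SS 1000000 = s at *
  generalize SS 500 = t at *
  generalize (sumr 500 : ℝ) = u at *
  norm_num at h1 h2 h3 ⊢
  linarith

end PartF2

section PartF3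
open Real Filter Topology Polynomial

lemma DD_lim (M : ℕ) : Tendsto (fun N : ℕ => log (DD N M) / N) atTop (𝓝 (70 - SS M)) := by
  have hth : ∀ c : ℝ, 0 < c → Tendsto (fun N : ℕ => Chebyshev.theta (840 * N / c) / N) atTop (𝓝 (840 / c)) := by
    intro c hc
    have h1 : Tendsto (fun N : ℕ => 840 * (N : ℝ) / c) atTop atTop := by
      have := (tendsto_natCast_atTop_atTop (R := ℝ)).const_mul_atTop (show (0 : ℝ) < 840 / c by positivity)
      refine this.congr (fun N => by ring)
    have h2 := (pnt_theta.comp h1).const_mul (840 / c)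
    rw [mul_one] at h2
    refine h2.congr' ?_
    filter_upwards [eventually_gt_atTop 0] with N hN
    have : (0 : ℝ) < N := by exact_mod_cast hN
    simp only [Function.comp]
    field_simp
  have hps : Tendsto (fun N : ℕ => Chebyshev.psi (70 * N : ℕ) / N) atTop (𝓝 70) := by
    have h1 : Tendsto (fun N : ℕ => ((70 * N : ℕ) : ℝ)) atTop atTop := by
      have := (tendsto_natCast_atTop_atTop (R := ℝ)).const_mul_atTop (show (0 : ℝ) < 70 by positivity)
      refine this.congr (fun N => by push_cast; ring)
    have h2 := (pnt_psi.comp h1).const_mul 70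
    rw [mul_one] at h2
    refine h2.congr' ?_
    filter_upwards [eventually_gt_atTop 0] with N hN
    have : (0 : ℝ) < N := by exact_mod_cast hN
    simp only [Function.comp]
    push_cast
    field_simp
  have hs := hps.sub (tendsto_finsetSum (Finset.range M ×ˢ (Finset.univ : Finset (Fin 6)))
    (f := fun i (N : ℕ) => Chebyshev.theta (840 * N / (168 * i.1 + alf i.2)) / N - Chebyshev.theta (840 * N / (168 * i.1 + bef i.2)) / N)
    (fun i _ => (hth (168 * i.1 + alf i.2) (by
      have := alf_bef i.2
      have : 0 < alf i.2 := by omega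
      positivity)).sub (hth (168 * i.1 + bef i.2) (by
      have := alf_bef i.2
      have : 0 < bef i.2 := by omega
      positivity))))
  refine hs.congr (fun N => ?_)
  rw [log_DD, sub_div, Finset.sum_div]
  simp only [sub_div]

lemma D_num : ∃ N0 : ℕ, ∀ N ≥ N0, DD N 1000000 / 3 ^ (25 * N) ≤ exp (-(7.4163 * N)) := by
  have h1 := DD_lim 1000000
  have h2 : 70 - SS 1000000 < 25 * log 3 - 7.4163 := by
    have := SS_num
    have := log_three_gt_d9
    generalize SS 1000000 = s at *
    norm_num at *
    linarith
  have h3 := (h1.eventually_lt_const h2).and (eventually_gt_atTop 0)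
  obtain ⟨N0, h⟩ := eventually_atTop.1 h3
  refine ⟨N0, fun N hN => ?_⟩
  obtain ⟨h4, h5⟩ := h N hN
  have h6 : (0 : ℝ) < N := by exact_mod_cast h5
  have hD := DD_pos N 1000000
  rw [div_lt_iff₀ h6] at h4
  rw [← log_le_log_iff (by positivity) (exp_pos _), log_exp, log_div hD.ne' (by positivity), log_pow]
  push_cast
  linarith

theorem final_measure (κ : ℝ) (hκ : κ > 3.51434) :
      {pq : ℤ × ℕ+ |
        |Real.sqrt 13 * Real.log ((Real.sqrt 13 - 1) / (Real.sqrt 13 + 1)) -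
            (pq.1 : ℝ) / ((pq.2 : ℕ) : ℝ)| <
          ((pq.2 : ℕ) : ℝ) ^ (-κ)}.Finite := by
  obtain ⟨N1, hD⟩ := D_num
  obtain ⟨ε, hε, har⟩ := arctan_num
  obtain ⟨C1, hC1, hF⟩ := F_bound 13.036383 (by norm_num) ε hε har
  obtain ⟨C2, hC2, hQ⟩ := Q_bound (yz 3) (yz 5) (yz 7) (by unfold yz; norm_num) (by unfold yz; norm_num)
    (by unfold yz; norm_num) (by unfold yz; norm_num) (by unfold yz; norm_num) (by unfold yz; norm_num) yz_num
  have hs := s13_pos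
  have hs1 : 0 < (√13 + 1) / 2 := by positivity
  have hpw : ∀ N : ℕ, (N : ℝ) ^ 10 ≤ (10 ^ 5) ^ 10 * (Nat.factorial 10 : ℝ) * exp (N * 0.00001) := by
    intro N
    have := pow_div_factorial_le_exp (N * 0.00001 : ℝ) (by positivity) 10
    rw [div_le_iff₀ (by positivity), mul_pow] at this
    norm_num at this ⊢
    linarith
  set C0 : ℝ := 1 + C2 / ((√13 + 1) / 2) + √13 / ((√13 + 1) / 2) * C1 * ((10 ^ 5) ^ 10 * (Nat.factorial 10 : ℝ)) with hC0
  have hc1 : 0 ≤ C2 / ((√13 + 1) / 2) := by positivity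
  have hc2 : 0 ≤ √13 / ((√13 + 1) / 2) * C1 * ((10 ^ 5) ^ 10 * (Nat.factorial 10 : ℝ)) := by positivity
  refine measure_lemma (√13 * log ((√13 - 1) / (√13 + 1))) 233.26813 92.77517 C0 (by norm_num) (by norm_num)
    (by linarith) (N1 + 10 ^ 14) ?_ κ (lt_of_le_of_lt (by norm_num) hκ)
  intro p q hq N hN
  have hN0 : 0 < N := by omega
  have hq' : (0 : ℝ) < q := by exact_mod_cast hq
  obtain ⟨P, hP, hne⟩ := nonvanish N hN0 (p / (q * √13))
  obtain ⟨A, B, hA, hB⟩ := S_form N 1000000 hN0 (by omega) P hP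
  have hDN := hD N (by omega)
  have hDp : 0 < DD N 1000000 / 3 ^ (25 * N) := div_pos (DD_pos _ _) (by positivity)
  have hQN := hQ N P hP
  have hFN := hF N hN0 P hP (fun k hk => (S_van N P k (by omega)).1) (fun k hk => (S_van N P k (by omega)).2)
  have hBx := hB (log xx)
  have hBb := hB (p / (q * √13))
  generalize DD N 1000000 / 3 ^ (25 * N) = D at *
  refine ⟨A, 13 * B, ?_, ?_, ?_⟩
  · have e : (A : ℝ) = D * (∑' v : ℕ, (RR N * P).eval (v : ℝ) * xx ^ v) / ((√13 + 1) / 2) := by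
      rw [hA]; field_simp
    rw [e, abs_div, abs_mul, abs_of_pos hDp, abs_of_pos hs1]
    calc _ ≤ exp (-(7.4163 * N)) * (C2 * exp (N * (qq 15 (yz 3) + qq 25 (yz 5) + qq 35 (yz 7)))) / ((√13 + 1) / 2) := by gcongr
      _ ≤ exp (-(7.4163 * N)) * (C2 * exp (N * 240.68443)) / ((√13 + 1) / 2) := by
        have := Q_num
        gcongr
      _ = C2 / ((√13 + 1) / 2) * exp (233.26813 * N) := by
        rw [show (233.26813 : ℝ) * N = -(7.4163 * N) + N * 240.68443 by ring, exp_add]; ring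
      _ ≤ C0 * exp (233.26813 * N) := by
        gcongr; linarith
  · have e : √13 * log ((√13 - 1) / (√13 + 1)) * A + ((13 * B : ℤ) : ℝ) = √13 / ((√13 + 1) / 2) * (D * Lam (log xx) (RR N * P)) := by
      rw [hBx]; unfold xx; push_cast; field_simp
    rw [e, abs_mul, abs_mul, abs_of_pos hDp, abs_of_pos (by positivity)]
    calc _ ≤ √13 / ((√13 + 1) / 2) * (exp (-(7.4163 * N)) * (C1 * N ^ 10 * exp (N * (EE 13.036383 15 + EE 13.036383 25 + EE 13.036383 35 + 3 * log xx)))) := by gcongr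
      _ ≤ √13 / ((√13 + 1) / 2) * (exp (-(7.4163 * N)) * (C1 * ((10 ^ 5) ^ 10 * (Nat.factorial 10 : ℝ) * exp (N * 0.00001)) * exp (N * (-85.35888)))) := by
        have := F_num
        have := hpw N
        gcongr
      _ = √13 / ((√13 + 1) / 2) * C1 * ((10 ^ 5) ^ 10 * (Nat.factorial 10 : ℝ)) * exp (-(92.77517 * N)) := by
        rw [show -((92.77517 : ℝ) * N) = -(7.4163 * N) + N * 0.00001 + N * (-85.35888) by ring, exp_add, exp_add]; ring
      _ ≤ C0 * exp (-(92.77517 * N)) := by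
        gcongr; linarith
  · intro h0
    have h1 : (p : ℝ) * A + q * (13 * B) = 0 := by exact_mod_cast h0
    have h2 : √13 * (p / (q * √13)) * A + 13 * B = 0 := by
      have : √13 * (p / (q * √13)) * A + 13 * B = ((p : ℝ) * A + q * (13 * B)) / q := by field_simp
      rw [this, h1, zero_div]
    rw [h2, mul_zero] at hBb
    exact hne ((mul_eq_zero.1 hBb).resolve_left hDp.ne')

end PartF3

theorem irrationality_measure_alpha_2 :
    ∀ κ : ℝ, κ > 3.51434 →
      {pq : ℤ × ℕ+ |
        |Real.sqrt 13 * Real.log ((Real.sqrt 13 - 1) / (Real.sqrt 13 + 1)) -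
            (pq.1 : ℝ) / ((pq.2 : ℕ) : ℝ)| <
          ((pq.2 : ℕ) : ℝ) ^ (-κ)}.Finite := by
  exact fun κ hκ => final_measure κ hκ
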